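/- arXiv:2004.10893 — 8 statements merged into one kernel-verified Lean document; each statement's English description precedes it below -/
import Mathlib

section
/- Let G and H be finite simple graphs. Then G and H are isomorphic (there exists an adjacency-preserving bijection between their vertex sets) if and only if there exists a CP-isomorphism matrix for G to H, i.e., G ≅_CP H. -/
open Matrix BigOperators

/-- `rel(g,g') = rel(h,h')`: the pairs `(g,g')` and `(h,h')` have the same relationship
(equal, adjacent, or distinct non-adjacent). -/
def relEq {α β : Type*} (G : SimpleGraph α) (H : SimpleGraph β)
    (g g' : α) (h h' : β) : Prop :=
  (g = g' ↔ h = h') ∧ (G.Adj g g' ↔ H.Adj h h')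

/-- `M` satisfies the linear constraints of an isomorphism matrix for `G` to `H`. -/
def IsIsoMatrix {α β : Type*} [Fintype α] [Fintype β]
    (G : SimpleGraph α) (H : SimpleGraph β)
    (M : Matrix (α × β) (α × β) ℝ) : Prop :=
  (∀ g g' : α, ∑ h : β, ∑ h' : β, M (g, h) (g', h') = 1) ∧
  (∀ h h' : β, ∑ g : α, ∑ g' : α, M (g, h) (g', h') = 1) ∧
  (∀ g g' h h', ¬ relEq G H g g' h h' → M (g, h) (g', h') = 0)

/-- `M` is completely positive: `M = B * Bᵀ` for an entrywise nonnegative `B`. -/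
def IsCP {ι : Type*} [Fintype ι] (M : Matrix ι ι ℝ) : Prop :=
  ∃ (k : ℕ) (B : Matrix ι (Fin k) ℝ), (∀ i j, 0 ≤ B i j) ∧ M = B * Bᵀ

/-- Families of vectors with all pairwise inner products `1` are constant. -/
lemma eq_of_gram_one {γ : Type*} {k : ℕ} (v : γ → Fin k → ℝ)
    (hv : ∀ a b, ∑ i, v a i * v b i = 1) (a b : γ) (i : Fin k) : v a i = v b i := by
  have h : ∑ i, (v a i - v b i) ^ 2 = 0 := by
    have : ∑ i, (v a i - v b i) ^ 2 = ∑ i, v a i * v a i - ∑ i, v a i * v b i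
        - ∑ i, v b i * v a i + ∑ i, v b i * v b i := by
      rw [← Finset.sum_sub_distrib, ← Finset.sum_sub_distrib, ← Finset.sum_add_distrib]
      exact Finset.sum_congr rfl fun i _ => by ring
    rw [this]; simp only [hv]; norm_num
  have := (Finset.sum_eq_zero_iff_of_nonneg (fun i _ => sq_nonneg _)).1 h i (Finset.mem_univ i)
  exact sub_eq_zero.1 (pow_eq_zero_iff (two_ne_zero) |>.1 this)

lemma gram_sum {γ : Type*} [Fintype γ] {k : ℕ} (x y : γ → Fin k → ℝ) :
    ∑ i, (∑ c, x c i) * (∑ d, y d i) = ∑ c, ∑ d, ∑ i, x c i * y d i := by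
  simp only [Finset.sum_mul_sum]
  rw [Finset.sum_comm]
  exact Finset.sum_congr rfl fun c _ => Finset.sum_comm

/-- Two graphs are isomorphic iff there exists a `CP`-isomorphism matrix for `G` to `H`. -/
theorem iso_iff_cp_isoMatrix {α β : Type*} [Fintype α] [Fintype β]
    (G : SimpleGraph α) (H : SimpleGraph β) :
    Nonempty (G ≃g H) ↔ ∃ M, IsIsoMatrix G H M ∧ IsCP M := by
  classical
  constructor
  · rintro ⟨φ⟩
    let B : Matrix (α × β) (Fin 1) ℝ := fun p _ => if φ p.1 = p.2 then 1 else 0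
    have hM : ∀ g h g' h', (B * Bᵀ) (g, h) (g', h') =
        (if φ g = h then 1 else 0) * (if φ g' = h' then 1 else 0) := by
      intro g h g' h'
      rw [Matrix.mul_apply]
      simp only [B, Finset.univ_unique, Finset.sum_singleton]
      rfl
    refine ⟨B * Bᵀ, ⟨?_, ?_, ?_⟩, 1, B, ?_, rfl⟩
    · intro g g'
      simp only [hM, ← Finset.sum_mul_sum]
      simp
    · intro h h'
      have key : ∀ h, ∑ g, (if φ g = h then (1 : ℝ) else 0) = 1 := by
        intro h
        rw [Finset.sum_eq_single (φ.symm h)]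
        · simp
        · intro b _ hb
          rw [if_neg]
          rintro rfl
          simp at hb
        · simp
      simp only [hM, ← Finset.sum_mul_sum, key]
      simp
    · intro g g' h h' hr
      rw [hM]
      by_cases h1 : φ g = h
      · by_cases h2 : φ g' = h'
        · subst h1 h2
          exact absurd ⟨φ.injective.eq_iff.symm, φ.map_adj_iff.symm⟩ hr
        · simp [h2]
      · simp [h1]
    · intro p j
      simp only [B]
      split_ifs <;> norm_num
  · rintro ⟨M, ⟨h1, h2, h3⟩, k, B, hB, rfl⟩
    simp only [Matrix.mul_apply, Matrix.transpose_apply] at h1 h2 h3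
    rcases isEmpty_or_nonempty α with hα | ⟨⟨g0⟩⟩
    · have : IsEmpty β := ⟨fun h => by simpa using h2 h h⟩
      exact ⟨⟨Equiv.equivOfIsEmpty α β, fun {a} => hα.elim a⟩⟩
    have hv : ∀ a b : α, ∑ i, (∑ h, B (a, h) i) * (∑ h, B (b, h) i) = 1 := by
      intro a b
      rw [gram_sum (fun h i => B (a, h) i) (fun h i => B (b, h) i)]
      exact h1 a b
    have hw : ∀ a b : β, ∑ i, (∑ g, B (g, a) i) * (∑ g, B (g, b) i) = 1 := by
      intro a b
      rw [gram_sum (fun g i => B (g, a) i) (fun g i => B (g, b) i)]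
      exact h2 a b
    have ev := eq_of_gram_one (fun a i => ∑ h, B (a, h) i) hv
    have ew := eq_of_gram_one (fun a i => ∑ g, B (g, a) i) hw
    obtain ⟨i, hi⟩ : ∃ i, ∑ h, B (g0, h) i ≠ 0 := by
      by_contra! hc
      have := hv g0 g0
      simp [hc] at this
    have hf : ∀ g, ∃ h, B (g, h) i ≠ 0 := by
      intro g
      rw [ev g0 g i] at hi
      obtain ⟨h, -, hh⟩ := Finset.exists_ne_zero_of_sum_ne_zero hi
      exact ⟨h, hh⟩
    have hrel : ∀ g g' h h', B (g, h) i ≠ 0 → B (g', h') i ≠ 0 → relEq G H g g' h h' := by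
      intro g g' h h' a b
      by_contra hr
      have := (Finset.sum_eq_zero_iff_of_nonneg
        (fun j _ => mul_nonneg (hB _ j) (hB _ j))).1 (h3 g g' h h' hr) i (Finset.mem_univ i)
      exact mul_ne_zero a b this
    choose f hfB using hf
    have hsurj : Function.Surjective f := by
      intro h
      have hne : ∑ g, B (g, h) i ≠ 0 := by
        rw [ew h (f g0) i]
        intro h0
        exact hfB g0 ((Finset.sum_eq_zero_iff_of_nonneg (fun g _ => hB _ i)).1 h0 g0
          (Finset.mem_univ g0))
      obtain ⟨g, -, hg⟩ := Finset.exists_ne_zero_of_sum_ne_zero hne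
      exact ⟨g, (hrel g g (f g) h (hfB g) hg).1.1 rfl⟩
    have hinj : Function.Injective f := fun a b hab =>
      (hrel a b _ _ (hfB a) (hfB b)).1.2 hab
    exact ⟨⟨Equiv.ofBijective f ⟨hinj, hsurj⟩, fun {a b} =>
      (hrel a b _ _ (hfB a) (hfB b)).2.symm⟩⟩
end

section
/- Let G and H be finite simple graphs. Then G and H are quantum isomorphic, i.e., there exist d ≥ 1 and orthogonal projections P_{gh} ∈ ℂ^{d×d} for g ∈ V_G, h ∈ V_H with Σ_{h∈V_H} P_{gh} = I for all g ∈ V_G, Σ_{g∈V_G} P_{gh} = I for all h ∈ V_H, and P_{gh} P_{g'h'} = 0 whenever rel(g,g') ≠ rel(h,h'), if and only if there exists a CS+-isomorphism matrix for G to H, i.e., G ≅_{CS+} H. -/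
open Matrix BigOperators
open scoped ComplexOrder

/-- `M` is completely positive semidefinite: it is the Gram matrix of Hermitian
positive semidefinite complex matrices with respect to the trace inner product. -/
def IsCSPlus {ι : Type*} [Fintype ι] (M : Matrix ι ι ℝ) : Prop :=
  ∃ d : ℕ, 0 < d ∧ ∃ ρ : ι → Matrix (Fin d) (Fin d) ℂ,
    (∀ i, (ρ i).PosSemidef) ∧ ∀ i j, (M i j : ℂ) = (ρ i * ρ j).trace

/-- `G` and `H` are quantum isomorphic: there is a perfect quantum strategy given by
orthogonal projections summing to the identity along rows and columns, with orthogonality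
whenever relationships disagree. -/
def QuantumIso {α β : Type*} [Fintype α] [Fintype β]
    (G : SimpleGraph α) (H : SimpleGraph β) : Prop :=
  ∃ d : ℕ, 0 < d ∧ ∃ P : α → β → Matrix (Fin d) (Fin d) ℂ,
    (∀ g h, (P g h).IsHermitian ∧ P g h * P g h = P g h) ∧
    (∀ g, ∑ h, P g h = 1) ∧
    (∀ h, ∑ g, P g h = 1) ∧
    (∀ g g' h h', ¬ relEq G H g g' h h' → P g h * P g' h' = 0)

/-- Reduced spectral decomposition of a Hermitian matrix. -/
lemma reduced_spectral {d : ℕ} {A : Matrix (Fin d) (Fin d) ℂ} (hA : A.IsHermitian) :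
    ∃ (r : ℕ) (V : Matrix (Fin d) (Fin r) ℂ) (lam : Fin r → ℂ),
      (∀ i, lam i ≠ 0) ∧ Vᴴ * V = 1 ∧ A = V * diagonal lam * Vᴴ := by
  classical
  let U : Matrix (Fin d) (Fin d) ℂ := hA.eigenvectorUnitary
  have hU : Uᴴ * U = 1 := Unitary.coe_star_mul_self hA.eigenvectorUnitary
  let ev : Fin d → ℂ := fun i => (hA.eigenvalues i : ℂ)
  have hspec : A = U * diagonal ev * Uᴴ := by
    have h := hA.spectral_theorem
    rw [Unitary.conjStarAlgAut_apply] at h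
    exact h
  let e := (Fintype.equivFin {i // ev i ≠ 0}).symm
  refine ⟨_, U.submatrix id (fun i => (e i).1), fun i => ev (e i).1, fun i => (e i).2, ?_, ?_⟩
  · ext i j
    have h := congrFun (congrFun hU (e i).1) (e j).1
    simp only [mul_apply, conjTranspose_apply, submatrix_apply, id, one_apply] at h ⊢
    rw [h]
    simp [← Subtype.ext_iff]
  · conv_lhs => rw [hspec]
    ext i j
    rw [mul_apply, mul_apply]
    simp only [mul_diagonal, conjTranspose_apply, submatrix_apply, id]
    rw [Equiv.sum_comp e (fun k : {i // ev i ≠ 0} => U i k.1 * ev k.1 * star (U j k.1))]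
    have hz : ∀ k : Fin d, k ∈ Finset.univ.filter (fun k => ev k ≠ 0) ↔ ev k ≠ 0 := by simp
    rw [← Finset.sum_subtype _ hz (fun k => U i k * ev k * star (U j k))]
    symm
    apply Finset.sum_subset (Finset.subset_univ _)
    intro k _ hk
    have : ev k = 0 := by simpa using hk
    simp [this]

/-- Range projection `Q`, pseudo-inverse `X`, and an isometry `V` onto the range. -/
lemma exists_proj {d : ℕ} {A : Matrix (Fin d) (Fin d) ℂ} (hA : A.IsHermitian) :
    ∃ (Q X : Matrix (Fin d) (Fin d) ℂ), Q.IsHermitian ∧ Q * Q = Q ∧ A * X = Q ∧ X * A = Q ∧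
      Q * A = A ∧ A * Q = A ∧ X * Q = X ∧
      ∃ (r : ℕ) (V : Matrix (Fin d) (Fin r) ℂ), Vᴴ * V = 1 ∧ V * Vᴴ = Q := by
  obtain ⟨r, V, lam, hl, hV, rfl⟩ := reduced_spectral hA
  have hV' : ∀ {m : ℕ} (Y : Matrix (Fin r) (Fin m) ℂ), Vᴴ * (V * Y) = Y := by
    intro m Y
    rw [← Matrix.mul_assoc, hV, Matrix.one_mul]
  have h1 : diagonal lam * diagonal (fun i => (lam i)⁻¹) = 1 := by
    rw [diagonal_mul_diagonal, ← diagonal_one]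
    congr 1
    ext i
    exact mul_inv_cancel₀ (hl i)
  have h2 : diagonal (fun i => (lam i)⁻¹) * diagonal lam = 1 := by
    rw [diagonal_mul_diagonal, ← diagonal_one]
    congr 1
    ext i
    exact inv_mul_cancel₀ (hl i)
  have h1' : ∀ {m : ℕ} (Y : Matrix (Fin r) (Fin m) ℂ),
      diagonal lam * (diagonal (fun i => (lam i)⁻¹) * Y) = Y := by
    intro m Y
    rw [← Matrix.mul_assoc, h1, Matrix.one_mul]
  have h2' : ∀ {m : ℕ} (Y : Matrix (Fin r) (Fin m) ℂ),
      diagonal (fun i => (lam i)⁻¹) * (diagonal lam * Y) = Y := by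
    intro m Y
    rw [← Matrix.mul_assoc, h2, Matrix.one_mul]
  refine ⟨V * Vᴴ, V * diagonal (fun i => (lam i)⁻¹) * Vᴴ, isHermitian_mul_conjTranspose_self V,
    ?_, ?_, ?_, ?_, ?_, ?_, r, V, hV, rfl⟩ <;>
  simp only [Matrix.mul_assoc, hV', h1', h2']

open scoped MatrixOrder Matrix.Norms.L2Operator in
lemma exists_gram {d : ℕ} {A : Matrix (Fin d) (Fin d) ℂ} (hA : A.PosSemidef) :
    ∃ B : Matrix (Fin d) (Fin d) ℂ, A = Bᴴ * B :=
  CStarAlgebra.nonneg_iff_eq_star_mul_self.mp hA.nonneg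

lemma mul_eq_zero_of_trace {d : ℕ} {A B : Matrix (Fin d) (Fin d) ℂ} (hA : A.PosSemidef)
    (hB : B.PosSemidef) (h : (A * B).trace = 0) : A * B = 0 := by
  obtain ⟨C, rfl⟩ := exists_gram hA
  obtain ⟨D, rfl⟩ := exists_gram hB
  have h' : ((C * Dᴴ)ᴴ * (C * Dᴴ)).trace = 0 := by
    rw [← h, conjTranspose_mul, conjTranspose_conjTranspose, Matrix.mul_assoc,
      Matrix.trace_mul_comm D]
    simp only [Matrix.mul_assoc]
  rw [trace_conjTranspose_mul_self_eq_zero_iff] at h'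
  calc Cᴴ * C * (Dᴴ * D) = Cᴴ * (C * Dᴴ) * D := by simp only [Matrix.mul_assoc]
    _ = 0 := by rw [h']; simp

lemma eq_of_traces {d : ℕ} {A B : Matrix (Fin d) (Fin d) ℂ} (hA : A.IsHermitian)
    (hB : B.IsHermitian) (h1 : (A * A).trace = 1) (h2 : (A * B).trace = 1)
    (h3 : (B * B).trace = 1) : A = B := by
  have h : ((A - B)ᴴ * (A - B)).trace = 0 := by
    rw [(hA.sub hB).eq]
    simp only [sub_mul, mul_sub, trace_sub]
    rw [trace_mul_comm B A, h1, h2, h3]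
    simp
  rw [trace_conjTranspose_mul_self_eq_zero_iff] at h
  exact sub_eq_zero.mp h

lemma sum_proj {d : ℕ} {ι : Type*} [Fintype ι] (ρ Q X : ι → Matrix (Fin d) (Fin d) ℂ)
    (S QS XS : Matrix (Fin d) (Fin d) ℂ)
    (hX : ∀ i, X i * ρ i = Q i) (hQ : ∀ i, Q i * ρ i = ρ i) 
    (ho : ∀ i j, i ≠ j → ρ i * ρ j = 0) (hS : ∑ i, ρ i = S)
    (hSX : S * XS = QS) (hSQ : S * QS = S) : ∑ i, Q i = QS := by
  classical
  have a1 : ∀ i, ρ i * S = ρ i * ρ i := by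
    intro i
    rw [← hS, Finset.mul_sum]
    exact Finset.sum_eq_single i (fun j _ hj => ho i j hj.symm) (by simp)
  have a2 : ∀ i, Q i * S = ρ i := by
    intro i
    rw [← hX, Matrix.mul_assoc, a1, ← Matrix.mul_assoc, hX, hQ]
  have a3 : (∑ i, Q i) * QS = QS := by
    rw [← hSX, ← Matrix.mul_assoc, Finset.sum_mul, Finset.sum_congr rfl (fun i _ => a2 i), hS]
  have a5 : ∀ i, Q i = X i * X i * (ρ i * S) := by
    intro i
    rw [a1, Matrix.mul_assoc, ← Matrix.mul_assoc (X i) (ρ i), hX, hQ, hX]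
  have a4 : ∀ i, Q i * QS = Q i := by
    intro i
    rw [a5 i]
    simp only [Matrix.mul_assoc, hSQ]
  rw [← a3, Finset.sum_mul]
  exact Finset.sum_congr rfl (fun i _ => (a4 i).symm)

lemma forward_dir {α β : Type*} [Fintype α] [Fintype β]
    (G : SimpleGraph α) (H : SimpleGraph β) (hq : QuantumIso G H) :
    ∃ M, IsIsoMatrix G H M ∧ IsCSPlus M := by
  obtain ⟨d, hd, P, hP, hr, hc, ho⟩ := hq
  have hd0 : (d : ℝ) ≠ 0 := by positivity
  have hdC : (d : ℂ) ≠ 0 := by exact_mod_cast hd0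
  have hreal : ∀ i j : α × β, ((((P i.1 i.2 * P j.1 j.2).trace).re : ℝ) : ℂ) =
      (P i.1 i.2 * P j.1 j.2).trace := by
    intro i j
    rw [← Complex.conj_eq_iff_re]
    change star _ = _
    rw [← trace_conjTranspose, conjTranspose_mul, (hP _ _).1.eq, (hP _ _).1.eq, trace_mul_comm]
  refine ⟨fun i j => (P i.1 i.2 * P j.1 j.2).trace.re / d, ⟨?_, ?_, ?_⟩, d, hd,
    fun i => ((Real.sqrt d)⁻¹ : ℝ) • P i.1 i.2, ?_, ?_⟩
  · intro g g'
    simp only [← Finset.sum_div, ← Complex.re_sum, ← trace_sum, ← Finset.mul_sum,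
      ← Finset.sum_mul, hr]
    simp [hd0]
  · intro h h'
    simp only [← Finset.sum_div, ← Complex.re_sum, ← trace_sum, ← Finset.mul_sum,
      ← Finset.sum_mul, hc]
    simp [hd0]
  · intro g g' h h' hn
    simp [ho g g' h h' hn]
  · intro i
    have : (P i.1 i.2).PosSemidef := by
      have h := posSemidef_conjTranspose_mul_self (P i.1 i.2)
      rwa [(hP _ _).1.eq, (hP _ _).2] at h
    exact this.smul (by positivity)
  · intro i j
    rw [smul_mul_smul_comm, trace_smul, ← mul_inv, Real.mul_self_sqrt (by positivity)]
    push_cast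
    rw [hreal, Complex.real_smul]
    push_cast
    rw [div_eq_inv_mul]

lemma backward_dir {α β : Type*} [Fintype α] [Fintype β]
    (G : SimpleGraph α) (H : SimpleGraph β) (M : Matrix (α × β) (α × β) ℝ)
    (hM : IsIsoMatrix G H M) (hcs : IsCSPlus M) : QuantumIso G H := by
  classical
  obtain ⟨h1, h2, h3⟩ := hM
  obtain ⟨d, hd, ρ, hρ, hMρ⟩ := hcs
  rcases isEmpty_or_nonempty α with hα | ⟨⟨g0⟩⟩
  · have hβ : IsEmpty β := ⟨fun h => by simpa using h2 h h⟩
    exact ⟨1, one_pos, fun _ _ => 1, fun g => hα.elim g, fun g => hα.elim g,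
      fun h => hβ.elim h, fun g => hα.elim g⟩
  rcases isEmpty_or_nonempty β with hβ | ⟨⟨h0⟩⟩
  · simpa using h1 g0 g0
  have hS1 : ∀ g g', ((∑ h, ρ (g, h)) * (∑ h, ρ (g', h))).trace = 1 := by
    intro g g'
    simp only [Finset.sum_mul, Finset.mul_sum, trace_sum, ← hMρ]
    rw [Finset.sum_comm]
    exact_mod_cast h1 g g'
  have hT1 : ∀ h h', ((∑ g, ρ (g, h)) * (∑ g, ρ (g, h'))).trace = 1 := by
    intro h h'
    simp only [Finset.sum_mul, Finset.mul_sum, trace_sum, ← hMρ]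
    rw [Finset.sum_comm]
    exact_mod_cast h2 h h'
  have hSh : ∀ g, (∑ h, ρ (g, h)).IsHermitian := fun g =>
    (posSemidef_sum _ (fun h _ => hρ (g, h))).isHermitian
  have hTh : ∀ h, (∑ g, ρ (g, h)).IsHermitian := fun h =>
    (posSemidef_sum _ (fun g _ => hρ (g, h))).isHermitian
  obtain ⟨S, hSdef⟩ : ∃ S, S = ∑ h, ρ (g0, h) := ⟨_, rfl⟩
  have hS : ∀ g, ∑ h, ρ (g, h) = S := fun g => by
    rw [hSdef]
    exact eq_of_traces (hSh _) (hSh _) (hS1 _ _) (hS1 _ _) (hS1 _ _)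
  obtain ⟨T, hTdef⟩ : ∃ T, T = ∑ g, ρ (g, h0) := ⟨_, rfl⟩
  have hT : ∀ h, ∑ g, ρ (g, h) = T := fun h => by
    rw [hTdef]
    exact eq_of_traces (hTh _) (hTh _) (hT1 _ _) (hT1 _ _) (hT1 _ _)
  have hSS : (S * S).trace = 1 := by simpa only [hS] using hS1 g0 g0
  have hTT : (T * T).trace = 1 := by simpa only [hT] using hT1 h0 h0
  have hST : (Fintype.card α : ℂ) • S = (Fintype.card β : ℂ) • T := by
    have h := Finset.sum_comm (s := Finset.univ) (t := Finset.univ) (f := fun g h => ρ (g, h))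
    simp only [hS, hT, Finset.sum_const, Finset.card_univ] at h
    rw [Nat.cast_smul_eq_nsmul, Nat.cast_smul_eq_nsmul]
    exact h
  have hcard : Fintype.card α = Fintype.card β := by
    have h : (((Fintype.card α : ℂ) • S) * ((Fintype.card α : ℂ) • S)).trace =
      (((Fintype.card β : ℂ) • T) * ((Fintype.card β : ℂ) • T)).trace := by rw [hST]
    rw [smul_mul_smul_comm, smul_mul_smul_comm, trace_smul, trace_smul, hSS, hTT] at h
    simp only [smul_eq_mul, mul_one] at h
    exact Nat.mul_self_inj.mp (by exact_mod_cast h)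
  have hTS : T = S := by
    rw [← hcard] at hST
    have hne : (Fintype.card α : ℂ) ≠ 0 := by
      have : 0 < Fintype.card α := Fintype.card_pos_iff.mpr ⟨g0⟩
      exact_mod_cast this.ne'
    exact (smul_right_injective _ hne hST).symm
  have hz : ∀ g g' h h', ¬ relEq G H g g' h h' → ρ (g, h) * ρ (g', h') = 0 := by
    intro g g' h h' hn
    apply mul_eq_zero_of_trace (hρ _) (hρ _)
    rw [← hMρ, h3 g g' h h' hn, Complex.ofReal_zero]
  choose Q X hQh hQQ hAX hXA hQA hAQ hXQ _ using fun i => exists_proj (hρ i).isHermitian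
  have hSherm : S.IsHermitian := hSdef ▸ hSh g0
  obtain ⟨QS, XS, -, -, hSX, -, hQS, hSQ, -, r, V, hV, hVV⟩ := exists_proj hSherm
  have hrow : ∀ g, ∑ h, Q (g, h) = QS := fun g =>
    sum_proj (fun h => ρ (g, h)) (fun h => Q (g, h)) (fun h => X (g, h)) S QS XS
      (fun _ => hXA _) (fun _ => hQA _) 
      (fun h h' hne => hz g g h h' (fun hr => hne (hr.1.mp rfl))) (hS g) hSX hSQ
  have hcol : ∀ h, ∑ g, Q (g, h) = QS := fun h =>
    sum_proj (fun g => ρ (g, h)) (fun g => Q (g, h)) (fun g => X (g, h)) S QS XS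
      (fun _ => hXA _) (fun _ => hQA _) 
      (fun g g' hne => hz g g' h h (fun hr => hne (hr.1.mpr rfl))) ((hT h).trans hTS) hSX hSQ
  have hQQ0 : ∀ i j, ρ i * ρ j = 0 → Q i * Q j = 0 := by
    intro i j hij
    rw [← hXA i, ← hAX j, Matrix.mul_assoc, ← Matrix.mul_assoc (ρ i), hij]
    simp
  have hQQS : ∀ i, Q i * QS = Q i := by
    rintro ⟨g, h⟩
    rw [← hrow g, Finset.mul_sum,
      Finset.sum_eq_single h (fun h' _ hne => hQQ0 _ _
        (hz g g h h' (fun hr => hne (hr.1.mp rfl).symm))) (by simp), hQQ]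
  have hmul : ∀ i j, (Vᴴ * Q i * V) * (Vᴴ * Q j * V) = Vᴴ * (Q i * Q j) * V := by
    intro i j
    calc (Vᴴ * Q i * V) * (Vᴴ * Q j * V) = Vᴴ * (Q i * (V * Vᴴ)) * Q j * V := by
          simp only [Matrix.mul_assoc]
      _ = _ := by rw [hVV, hQQS]; simp only [Matrix.mul_assoc]
  have hVQ : Vᴴ * QS * V = 1 := by
    rw [← hVV, ← Matrix.mul_assoc, hV, Matrix.one_mul, hV]
  refine ⟨r, ?_, fun g h => Vᴴ * Q (g, h) * V, ?_, ?_, ?_, ?_⟩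
  · rcases Nat.eq_zero_or_pos r with rfl | hr
    · exfalso
      have : QS = 0 := by
        rw [← hVV]
        ext i j
        simp [mul_apply]
      rw [← hQS, this] at hSS
      simp at hSS
    · exact hr
  · intro g h
    refine ⟨isHermitian_conjTranspose_mul_mul V (hQh _), ?_⟩
    rw [hmul, hQQ]
  · intro g
    simp only [← Matrix.sum_mul, ← Matrix.mul_sum, hrow, hVQ]
  · intro h
    simp only [← Matrix.sum_mul, ← Matrix.mul_sum, hcol, hVQ]
  · intro g g' h h' hn
    rw [hmul, hQQ0 _ _ (hz g g' h h' hn)]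
    simp

/-- `G` and `H` are quantum isomorphic iff there exists a `CS+`-isomorphism matrix. -/
theorem quantumIso_iff_csp_isoMatrix {α β : Type*} [Fintype α] [Fintype β]
    (G : SimpleGraph α) (H : SimpleGraph β) :
    QuantumIso G H ↔ ∃ M, IsIsoMatrix G H M ∧ IsCSPlus M :=
  ⟨forward_dir G H, fun ⟨M, hM, hcs⟩ => backward_dir G H M hM hcs⟩
end

section
/- Two finite simple graphs G and H are partially equivalent (there exists a partial equivalence φ from the partially coherent algebra of G to the partially coherent algebra of H) if and only if G ≅_{S+} H, i.e., there exists an S+-isomorphism matrix for G to H. -/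
open Matrix BigOperators

/-- The all-ones matrix. -/
def allOnes (V : Type*) : Matrix V V ℂ := Matrix.of fun _ _ => 1

/-- A subspace `S` of `ℂ^{V×V}` is a partially coherent algebra (with respect to
`{I, A}`) if it contains `I`, `A` and `J`, is closed under matrix multiplication and
conjugate transposition, and is closed under Schur product with `I` and with `A`. -/
def IsPartiallyCoherent {V : Type*} [Fintype V] [DecidableEq V]
    (A : Matrix V V ℂ) (S : Submodule ℂ (Matrix V V ℂ)) : Prop :=
  (1 : Matrix V V ℂ) ∈ S ∧ A ∈ S ∧ allOnes V ∈ S ∧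
  (∀ X ∈ S, ∀ Y ∈ S, X * Y ∈ S) ∧
  (∀ X ∈ S, Xᴴ ∈ S) ∧
  (∀ X ∈ S, Matrix.hadamard (1 : Matrix V V ℂ) X ∈ S) ∧
  (∀ X ∈ S, Matrix.hadamard A X ∈ S)

/-- The partially coherent algebra of a graph: the smallest partially coherent
algebra containing the adjacency matrix. -/
noncomputable def pcAlgebra {V : Type*} [Fintype V] [DecidableEq V] (A : Matrix V V ℂ) :
    Submodule ℂ (Matrix V V ℂ) :=
  sInf {S | IsPartiallyCoherent A S}

/-- `G` and `H` are partially equivalent: there is a linear bijection between their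
partially coherent algebras respecting conjugate transposition, multiplication,
`I ↦ I`, `A_G ↦ A_H`, `J ↦ J`, and Schur products with `I` and `A_G`. -/
def PartiallyEquivalent {α β : Type*} [Fintype α] [Fintype β] [DecidableEq α] [DecidableEq β]
    (G : SimpleGraph α) (H : SimpleGraph β)
    [DecidableRel G.Adj] [DecidableRel H.Adj] : Prop :=
  ∃ Φ : Matrix α α ℂ →ₗ[ℂ] Matrix β β ℂ,
    Set.BijOn Φ (pcAlgebra (G.adjMatrix ℂ) : Set (Matrix α α ℂ))
      (pcAlgebra (H.adjMatrix ℂ) : Set (Matrix β β ℂ)) ∧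
    (∀ M ∈ pcAlgebra (G.adjMatrix ℂ), Φ Mᴴ = (Φ M)ᴴ) ∧
    (∀ M ∈ pcAlgebra (G.adjMatrix ℂ), ∀ N ∈ pcAlgebra (G.adjMatrix ℂ),
      Φ (M * N) = Φ M * Φ N) ∧
    Φ 1 = 1 ∧ Φ (G.adjMatrix ℂ) = H.adjMatrix ℂ ∧ Φ (allOnes α) = allOnes β ∧
    (∀ N ∈ pcAlgebra (G.adjMatrix ℂ),
      Φ (Matrix.hadamard 1 N) = Matrix.hadamard 1 (Φ N)) ∧
    (∀ N ∈ pcAlgebra (G.adjMatrix ℂ),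
      Φ (Matrix.hadamard (G.adjMatrix ℂ) N) = Matrix.hadamard (H.adjMatrix ℂ) (Φ N))

section partA
variable {α β : Type*} [Fintype α] [Fintype β] [DecidableEq α] [DecidableEq β]

/-- The linear map whose Choi matrix is `M`. -/
noncomputable def psi (M : Matrix (α × β) (α × β) ℝ) : Matrix α α ℂ →ₗ[ℂ] Matrix β β ℂ where
  toFun X := Matrix.of fun h h' => ∑ g, ∑ g', (M (g, h) (g', h') : ℂ) * X g g'
  map_add' X Y := by
    ext h h'
    simp [mul_add, Finset.sum_add_distrib]
  map_smul' c X := by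
    ext h h'
    simp [Finset.mul_sum, mul_left_comm]

lemma psi_apply (M : Matrix (α × β) (α × β) ℝ) (X : Matrix α α ℂ) (h h' : β) :
    psi M X h h' = ∑ g, ∑ g', (M (g, h) (g', h') : ℂ) * X g g' := rfl

lemma iso_swap {G : SimpleGraph α} {H : SimpleGraph β} {M : Matrix (α × β) (α × β) ℝ}
    (hM : IsIsoMatrix G H M) : IsIsoMatrix H G (M.submatrix Prod.swap Prod.swap) := by
  refine ⟨hM.2.1, hM.1, fun h h' g g' hr => hM.2.2 g g' h h' fun hr' => hr ⟨hr'.1.symm, hr'.2.symm⟩⟩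

lemma psi_J {G : SimpleGraph α} {H : SimpleGraph β} {M : Matrix (α × β) (α × β) ℝ}
    (hM : IsIsoMatrix G H M) : psi M (allOnes α) = allOnes β := by
  ext h h'
  have := hM.2.1 h h'
  simp only [psi_apply, allOnes, Matrix.of_apply, mul_one]
  exact_mod_cast this

lemma psi_hone {G : SimpleGraph α} {H : SimpleGraph β} {M : Matrix (α × β) (α × β) ℝ}
    (hM : IsIsoMatrix G H M) (X : Matrix α α ℂ) :
    psi M (Matrix.hadamard 1 X) = Matrix.hadamard 1 (psi M X) := by
  ext h h'
  simp only [psi_apply, Matrix.hadamard_apply, Finset.mul_sum]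
  refine Finset.sum_congr rfl fun g _ => Finset.sum_congr rfl fun g' _ => ?_
  by_cases hr : relEq G H g g' h h'
  · have := hr.1
    by_cases h1 : g = g'
    · simp [Matrix.one_apply, h1, this.1 h1]
    · have h2 : ¬ h = h' := fun e => h1 (this.2 e)
      simp [Matrix.one_apply, h1, h2]
  · simp [hM.2.2 _ _ _ _ hr]

lemma psi_hA {G : SimpleGraph α} {H : SimpleGraph β} [DecidableRel G.Adj] [DecidableRel H.Adj]
    {M : Matrix (α × β) (α × β) ℝ}
    (hM : IsIsoMatrix G H M) (X : Matrix α α ℂ) :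
    psi M (Matrix.hadamard (G.adjMatrix ℂ) X) = Matrix.hadamard (H.adjMatrix ℂ) (psi M X) := by
  ext h h'
  simp only [psi_apply, Matrix.hadamard_apply, Finset.mul_sum]
  refine Finset.sum_congr rfl fun g _ => Finset.sum_congr rfl fun g' _ => ?_
  by_cases hr : relEq G H g g' h h'
  · have := hr.2
    by_cases h1 : G.Adj g g'
    · simp [h1, this.1 h1]
    · have h2 : ¬ H.Adj h h' := fun e => h1 (this.2 e)
      simp [h1, h2]
  · simp [hM.2.2 _ _ _ _ hr]

lemma had_J (X : Matrix α α ℂ) : Matrix.hadamard X (allOnes α) = X := by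
  ext; simp [allOnes]

lemma psi_one {G : SimpleGraph α} {H : SimpleGraph β} {M : Matrix (α × β) (α × β) ℝ}
    (hM : IsIsoMatrix G H M) : psi M 1 = 1 := by
  have := psi_hone hM (allOnes α)
  rwa [had_J, psi_J hM, had_J] at this

lemma psi_A {G : SimpleGraph α} {H : SimpleGraph β} [DecidableRel G.Adj] [DecidableRel H.Adj]
    {M : Matrix (α × β) (α × β) ℝ}
    (hM : IsIsoMatrix G H M) : psi M (G.adjMatrix ℂ) = H.adjMatrix ℂ := by
  have := psi_hA hM (allOnes α)
  rwa [had_J, psi_J hM, had_J] at this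

lemma psi_conj {M : Matrix (α × β) (α × β) ℝ} (hM : M.PosSemidef) (X : Matrix α α ℂ) :
    psi M Xᴴ = (psi M X)ᴴ := by
  ext h h'
  simp only [psi_apply, Matrix.conjTranspose_apply, star_sum, star_mul']
  rw [Finset.sum_comm]
  refine Finset.sum_congr rfl fun g _ => Finset.sum_congr rfl fun g' _ => ?_
  have := hM.1.apply (g, h') (g', h)
  simp at this
  simp [this]

lemma psi_adj (M : Matrix (α × β) (α × β) ℝ) (X : Matrix α α ℂ) (Z : Matrix β β ℂ) :
    ((psi M X)ᴴ * Z).trace = (Xᴴ * psi (M.submatrix Prod.swap Prod.swap) Z).trace := by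
  simp only [Matrix.trace, Matrix.diag, Matrix.mul_apply, Matrix.conjTranspose_apply, psi_apply,
    star_sum, star_mul', Finset.sum_mul, Finset.mul_sum, Matrix.submatrix_apply, Prod.swap]
  have e1 : ∀ f : β → β → α → α → ℂ, ∑ x, ∑ y, ∑ a, ∑ b, f x y a b
      = ∑ p : (β × β) × (α × α), f p.1.1 p.1.2 p.2.1 p.2.2 := by
    intro f; simp [Fintype.sum_prod_type]
  have e2 : ∀ f : α → α → β → β → ℂ, ∑ x, ∑ y, ∑ a, ∑ b, f x y a b
      = ∑ p : (α × α) × (β × β), f p.1.1 p.1.2 p.2.1 p.2.2 := by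
    intro f; simp [Fintype.sum_prod_type]
  rw [e1, e2]
  refine Fintype.sum_equiv ((Equiv.prodComm _ _).trans
    ((Equiv.prodComm _ _).prodCongr (Equiv.prodComm _ _))) _ _ fun p => ?_
  simp
  ring

lemma psi_trace {G : SimpleGraph α} {H : SimpleGraph β} {M : Matrix (α × β) (α × β) ℝ}
    (hM : IsIsoMatrix G H M) (hp : M.PosSemidef) (X : Matrix α α ℂ) :
    (psi M X).trace = X.trace := by
  have := psi_adj M Xᴴ 1
  rw [psi_one (iso_swap hM), ← psi_conj hp] at this
  simpa using this

open scoped Kronecker MatrixOrder ComplexOrder in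
lemma psi_mul {G : SimpleGraph α} {H : SimpleGraph β} {M : Matrix (α × β) (α × β) ℝ}
    (hM : IsIsoMatrix G H M) (hp : M.PosSemidef) (X Y : Matrix α α ℂ)
    (hY : psi (M.submatrix Prod.swap Prod.swap) (psi M Y) = Y) :
    psi M (X * Y) = psi M X * psi M Y := by
  classical
  obtain ⟨B, hB⟩ := CStarAlgebra.nonneg_iff_eq_star_mul_self.mp hp.nonneg
  rw [Matrix.star_eq_conjTranspose] at hB
  set V : Matrix ((α × β) × α) β ℂ := Matrix.of fun p h => (B p.1 (p.2, h) : ℂ) with hV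
  have key : ∀ X : Matrix α α ℂ, psi M X = Vᴴ * ((1 : Matrix (α × β) (α × β) ℂ) ⊗ₖ X) * V := by
    intro X
    ext h h'
    have hL : ∀ g g', (M (g, h) (g', h') : ℂ) = ∑ k, (B k (g, h) : ℂ) * (B k (g', h') : ℂ) := by
      intro g g'
      rw [hB]
      simp [Matrix.mul_apply]
    have hR : ∀ k g', (Vᴴ * ((1 : Matrix (α × β) (α × β) ℂ) ⊗ₖ X)) h (k, g')
        = ∑ g, (B k (g, h) : ℂ) * X g g' := by
      intro k g'
      rw [Matrix.mul_apply, Fintype.sum_prod_type, Finset.sum_eq_single k]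
      · simp [hV]
      · intro l _ hl
        simp [hl]
      · simp
    have hV' : ∀ k g', V (k, g') h' = (B k (g', h') : ℂ) := fun k g' => rfl
    rw [Matrix.mul_apply, Fintype.sum_prod_type, psi_apply]
    simp only [hL, hR, hV', Finset.sum_mul]
    conv_lhs => rw [Finset.sum_comm]
    conv_rhs => rw [Finset.sum_comm]
    refine Finset.sum_congr rfl fun g _ => ?_
    rw [Finset.sum_comm]
    refine Finset.sum_congr rfl fun g' _ => Finset.sum_congr rfl fun k _ => ?_
    ring
  have hVV : Vᴴ * V = 1 := by
    have := key 1
    rw [psi_one hM] at this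
    simpa using this.symm
  set D := ((1 : Matrix (α × β) (α × β) ℂ) ⊗ₖ Y) * V - V * psi M Y with hD
  have hk : ∀ X Y : Matrix α α ℂ, (1 : Matrix (α × β) (α × β) ℂ) ⊗ₖ (X * Y)
      = ((1 : Matrix (α × β) (α × β) ℂ) ⊗ₖ X) * ((1 : Matrix (α × β) (α × β) ℂ) ⊗ₖ Y) := by
    intro X Y
    rw [← Matrix.mul_kronecker_mul, one_mul]
  have hDD : Dᴴ * D = psi M (Yᴴ * Y) - (psi M Y)ᴴ * psi M Y := by
    have h1 : Vᴴ * (((1 : Matrix (α × β) (α × β) ℂ) ⊗ₖ Y) * V) = psi M Y := by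
      rw [key, Matrix.mul_assoc]
    have h2 : Vᴴ * (((1 : Matrix (α × β) (α × β) ℂ) ⊗ₖ Yᴴ) * V) = (psi M Y)ᴴ := by
      rw [← psi_conj hp, key, Matrix.mul_assoc]
    have h3 : Vᴴ * (((1 : Matrix (α × β) (α × β) ℂ) ⊗ₖ Yᴴ) *
        (((1 : Matrix (α × β) (α × β) ℂ) ⊗ₖ Y) * V)) = psi M (Yᴴ * Y) := by
      rw [key, hk]; simp only [Matrix.mul_assoc]
    have h4 : ∀ Z : Matrix β β ℂ, Vᴴ * (((1 : Matrix (α × β) (α × β) ℂ) ⊗ₖ Yᴴ) * (V * Z)) = (psi M Y)ᴴ * Z := by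
      intro Z; rw [← h2]; simp only [Matrix.mul_assoc]
    have h5 : ∀ Z : Matrix β β ℂ, Vᴴ * (V * Z) = Z := by
      intro Z; rw [← Matrix.mul_assoc, hVV, one_mul]
    rw [hD, Matrix.conjTranspose_sub, Matrix.conjTranspose_mul, Matrix.conjTranspose_mul,
      Matrix.conjTranspose_kronecker, Matrix.conjTranspose_one, Matrix.sub_mul, Matrix.mul_sub,
      Matrix.mul_sub]
    simp only [Matrix.mul_assoc, h1, h3, h4, h5]
    abel
  have hD0 : D = 0 := by
    rw [← Matrix.trace_conjTranspose_mul_self_eq_zero_iff, hDD, Matrix.trace_sub, psi_trace hM hp,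
      psi_adj, hY, sub_self]
  have h6 : ((1 : Matrix (α × β) (α × β) ℂ) ⊗ₖ Y) * V = V * psi M Y := sub_eq_zero.1 hD0
  rw [key, hk, key X, Matrix.mul_assoc, Matrix.mul_assoc, h6]
  simp only [Matrix.mul_assoc]

lemma pc_isPC {A : Matrix α α ℂ} : IsPartiallyCoherent A (pcAlgebra A) := by
  simp only [IsPartiallyCoherent, pcAlgebra, Submodule.mem_sInf, Set.mem_setOf_eq]
  refine ⟨fun S h => h.1, fun S h => h.2.1, fun S h => h.2.2.1,
    fun X hX Y hY S h => h.2.2.2.1 _ (hX S h) _ (hY S h),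
    fun X hX S h => h.2.2.2.2.1 _ (hX S h),
    fun X hX S h => h.2.2.2.2.2.1 _ (hX S h), fun X hX S h => h.2.2.2.2.2.2 _ (hX S h)⟩

lemma psi_fix {G : SimpleGraph α} {H : SimpleGraph β} [DecidableRel G.Adj] [DecidableRel H.Adj]
    {M : Matrix (α × β) (α × β) ℝ}
    (hM : IsIsoMatrix G H M) (hp : M.PosSemidef) (X : Matrix α α ℂ)
    (hX : X ∈ pcAlgebra (G.adjMatrix ℂ)) :
    psi (M.submatrix Prod.swap Prod.swap) (psi M X) = X ∧ psi M X ∈ pcAlgebra (H.adjMatrix ℂ) := by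
  have hM' := iso_swap hM
  have hp' : (M.submatrix Prod.swap Prod.swap).PosSemidef := hp.submatrix Prod.swap
  obtain ⟨p1, p2, p3, p4, p5, p6, p7⟩ := pc_isPC (A := H.adjMatrix ℂ)
  let S : Submodule ℂ (Matrix α α ℂ) :=
    { carrier := {X | psi (M.submatrix Prod.swap Prod.swap) (psi M X) = X ∧ psi M X ∈ pcAlgebra (H.adjMatrix ℂ)}
      add_mem' := by
        rintro X Y ⟨h1, h2⟩ ⟨h3, h4⟩
        exact ⟨by rw [map_add, map_add, h1, h3], by rw [map_add]; exact add_mem h2 h4⟩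
      zero_mem' := ⟨by simp, by simp⟩
      smul_mem' := by
        rintro c X ⟨h1, h2⟩
        exact ⟨by rw [map_smul, map_smul, h1], by rw [map_smul]; exact Submodule.smul_mem _ _ h2⟩ }
  have hS : IsPartiallyCoherent (G.adjMatrix ℂ) S := by
    refine ⟨⟨?_, ?_⟩, ⟨?_, ?_⟩, ⟨?_, ?_⟩, ?_, ?_, ?_, ?_⟩
    · rw [psi_one hM, psi_one hM']
    · rwa [psi_one hM]
    · rw [psi_A hM, psi_A hM']
    · rwa [psi_A hM]
    · rw [psi_J hM, psi_J hM']
    · rwa [psi_J hM]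
    · rintro X ⟨h1, h2⟩ Y ⟨h3, h4⟩
      have := psi_mul hM hp X Y h3
      refine ⟨?_, ?_⟩
      · rw [this, psi_mul hM' hp', h1, h3]
        change psi M _ = _
        rw [h3]
      · rw [this]; exact p4 _ h2 _ h4
    · rintro X ⟨h1, h2⟩
      exact ⟨by rw [psi_conj hp, psi_conj hp', h1], by rw [psi_conj hp]; exact p5 _ h2⟩
    · rintro X ⟨h1, h2⟩
      exact ⟨by rw [psi_hone hM, psi_hone hM', h1], by rw [psi_hone hM]; exact p6 _ h2⟩
    · rintro X ⟨h1, h2⟩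
      exact ⟨by rw [psi_hA hM, psi_hA hM', h1], by rw [psi_hA hM]; exact p7 _ h2⟩
  exact (Submodule.mem_sInf.1 hX) S hS

lemma iso_imp_equiv {G : SimpleGraph α} {H : SimpleGraph β} [DecidableRel G.Adj] [DecidableRel H.Adj]
    {M : Matrix (α × β) (α × β) ℝ}
    (hM : IsIsoMatrix G H M) (hp : M.PosSemidef) : PartiallyEquivalent G H := by
  have hM' := iso_swap hM
  have hp' : (M.submatrix Prod.swap Prod.swap).PosSemidef := hp.submatrix Prod.swap
  refine ⟨psi M, ⟨fun X hX => (psi_fix hM hp X hX).2, fun X hX Y hY h => ?_, fun Z hZ => ?_⟩,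
    fun X _ => psi_conj hp X, fun X _ Y hY => psi_mul hM hp X Y (psi_fix hM hp Y hY).1,
    psi_one hM, psi_A hM, psi_J hM, fun X _ => psi_hone hM X, fun X _ => psi_hA hM X⟩
  · rw [← (psi_fix hM hp X hX).1, h, (psi_fix hM hp Y hY).1]
  · have := psi_fix hM' hp' Z hZ
    exact ⟨_, this.2, this.1⟩
end partA
section partB
open scoped Kronecker ComplexOrder
variable {α β : Type*} [Fintype α] [Fintype β] [DecidableEq α] [DecidableEq β]

lemma exists_frame (W : Submodule ℂ (Matrix α α ℂ)) :
    ∃ (n : ℕ) (X : Fin n → Matrix α α ℂ), (∀ i, X i ∈ W) ∧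
      ∀ Y ∈ W, Y = ∑ i, ((X i)ᴴ * Y).trace • X i := by
  let e : Matrix α α ℂ ≃ₗ[ℂ] EuclideanSpace ℂ (α × α) :=
    ((Matrix.ofLinearEquiv ℂ).symm.trans (LinearEquiv.curry ℂ ℂ α α).symm).trans
      (WithLp.linearEquiv 2 ℂ (α × α → ℂ)).symm
  have he : ∀ X p, e X p = X p.1 p.2 := fun X p => rfl
  let W' := W.map (e : Matrix α α ℂ →ₗ[ℂ] EuclideanSpace ℂ (α × α))
  let b := stdOrthonormalBasis ℂ W'
  refine ⟨_, fun i => e.symm (b i), fun i => ?_, fun Y hY => ?_⟩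
  · obtain ⟨x, hx, hxe⟩ := (b i).2
    change e.symm (b i).1 ∈ W
    rw [← hxe]
    simpa using hx
  · have h1 := b.sum_repr' (⟨e Y, Submodule.mem_map_of_mem hY⟩ : W')
    have h2 := congrArg (fun z : W' => e.symm (z : EuclideanSpace ℂ (α × α))) h1
    simp only [Submodule.coe_sum, Submodule.coe_smul, map_sum, map_smul, e.symm_apply_apply] at h2
    rw [← h2]
    refine Finset.sum_congr rfl fun i _ => ?_
    congr 1
    rw [h2]
    have h3 : ∀ g g', e.symm (b i) g g' = (b i : EuclideanSpace ℂ (α × α)) (g, g') :=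
      fun g g' => rfl
    simp only [Submodule.coe_inner, PiLp.inner_apply, Fintype.sum_prod_type, Matrix.trace, Matrix.diag,
      Matrix.mul_apply, Matrix.conjTranspose_apply, h3, he]
    rw [Finset.sum_comm]
    refine Finset.sum_congr rfl fun g _ => Finset.sum_congr rfl fun g' _ => ?_
    simp [mul_comm]

/-- `conj X ⊗ Y`. -/
noncomputable def tens : Matrix α α ℂ →ₗ⋆[ℂ] Matrix β β ℂ →ₗ[ℂ] Matrix (α × β) (α × β) ℂ :=
  LinearMap.mk₂'ₛₗ (starRingEnd ℂ) (RingHom.id ℂ)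
    (fun X Y => Matrix.of fun p q => star (X p.1 q.1) * Y p.2 q.2)
    (fun X X' Y => by ext; simp [add_mul])
    (fun c X Y => by ext; simp [mul_assoc])
    (fun X Y Y' => by ext; simp [mul_add])
    (fun c X Y => by ext; simp [mul_left_comm])

lemma tens_apply (X : Matrix α α ℂ) (Y : Matrix β β ℂ) (p q : α × β) :
    tens X Y p q = star (X p.1 q.1) * Y p.2 q.2 := rfl

lemma tens_mul (X X' : Matrix α α ℂ) (Y Y' : Matrix β β ℂ) :
    tens X Y * tens X' Y' = tens (X * X') (Y * Y') := by
  ext p q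
  simp only [Matrix.mul_apply, tens_apply, star_sum, star_mul', Fintype.sum_prod_type,
    Finset.sum_mul_sum]
  refine Finset.sum_congr rfl fun g _ => Finset.sum_congr rfl fun g' _ => ?_
  ring

lemma tens_conj (X : Matrix α α ℂ) (Y : Matrix β β ℂ) : (tens X Y)ᴴ = tens Xᴴ Yᴴ := by
  ext p q
  simp [tens_apply]

lemma tens_one : tens (1 : Matrix α α ℂ) (1 : Matrix β β ℂ) = 1 := by
  ext ⟨a, b⟩ ⟨c, d⟩
  by_cases h1 : a = c <;> by_cases h2 : b = d <;> simp [tens_apply, Matrix.one_apply, h1, h2]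

lemma tens_trace (X : Matrix α α ℂ) (Y : Matrix β β ℂ) :
    (tens X Y).trace = star X.trace * Y.trace := by
  simp [Matrix.trace, tens_apply, Fintype.sum_prod_type, Finset.sum_mul_sum]

lemma psd_of_alg {n : Type*} [Fintype n] [DecidableEq n] (C : Matrix n n ℂ) (hC : C.IsHermitian)
    (D : Submodule ℂ (Matrix n n ℂ)) (h1 : 1 ∈ D) (hCD : C ∈ D)
    (hm : ∀ X ∈ D, ∀ Y ∈ D, X * Y ∈ D)
    (hpos : ∀ S ∈ D, 0 ≤ (C * (Sᴴ * S)).trace) : C.PosSemidef := by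
  have hpoly : ∀ q : Polynomial ℂ, Polynomial.aeval C q ∈ D := by
    intro q
    have hpow : ∀ k : ℕ, C ^ k ∈ D := by
      intro k
      induction k with
      | zero => simpa using h1
      | succ k ih => rw [pow_succ]; exact hm _ ih _ hCD
    rw [Polynomial.aeval_eq_sum_range]
    exact Submodule.sum_mem _ fun i _ => Submodule.smul_mem _ _ (hpow i)
  rw [hC.posSemidef_iff_eigenvalues_nonneg]
  set ev := hC.eigenvalues with hev
  let r : ℂ → ℂ := fun z => if z.re < 0 then 1 else 0
  let s : Finset ℂ := Finset.univ.image fun i => (ev i : ℂ)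
  let q : Polynomial ℂ := Lagrange.interpolate s id r
  have hq : ∀ i, q.eval (ev i : ℂ) = if ev i < 0 then 1 else 0 := by
    intro i
    have := Lagrange.eval_interpolate_at_node (s := s) (v := id) r (Set.injOn_id _)
      (i := (ev i : ℂ)) (Finset.mem_image_of_mem _ (Finset.mem_univ i))
    simp only [id, r, Complex.ofReal_re] at this
    exact this
  let f := Unitary.conjStarAlgAut ℂ (Matrix n n ℂ) hC.eigenvectorUnitary
  have hCf : C = f (Matrix.diagonal fun i => (ev i : ℂ)) := hC.spectral_theorem
  have hdiag : ∀ v : n → ℂ, Polynomial.aeval (Matrix.diagonal v) q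
      = Matrix.diagonal fun i => q.eval (v i) := by
    intro v
    have := Polynomial.aeval_algHom_apply (Matrix.diagonalAlgHom (α := ℂ) (n := n) ℂ) v q
    simp only [Matrix.diagonalAlgHom_apply] at this
    rw [this]
    congr 1
    ext i
    have := Polynomial.aeval_algHom_apply (Pi.evalAlgHom ℂ (fun _ : n => ℂ) i) v q
    simpa [Polynomial.aeval_def, Polynomial.eval₂_eq_eval_map] using this.symm
  have hS : Polynomial.aeval C q = f (Matrix.diagonal fun i => if ev i < 0 then (1 : ℂ) else 0) := by
    have := Polynomial.aeval_algHom_apply (f : Matrix n n ℂ →ₐ[ℂ] Matrix n n ℂ)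
      (Matrix.diagonal fun i => (ev i : ℂ)) q
    rw [hdiag] at this
    simp only [hq] at this
    rw [hCf]
    exact this
  have hft : ∀ X, (f X).trace = X.trace := by
    intro X
    simp only [f, Unitary.conjStarAlgAut_apply]
    rw [Matrix.trace_mul_cycle]
    simp
  have h2 := hpos _ (hpoly q)
  rw [hS, ← Matrix.star_eq_conjTranspose, ← map_star, ← map_mul] at h2
  nth_rewrite 1 [hCf] at h2
  rw [← map_mul, hft, Matrix.star_eq_conjTranspose, Matrix.diagonal_conjTranspose,
    Matrix.diagonal_mul_diagonal, Matrix.diagonal_mul_diagonal, Matrix.trace_diagonal] at h2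
  have h3 : (∑ i, (ev i : ℂ) * (star (fun i => if ev i < 0 then (1 : ℂ) else 0) i *
      (if ev i < 0 then (1 : ℂ) else 0))) = ((∑ i, min (ev i) 0 : ℝ) : ℂ) := by
    push_cast
    refine Finset.sum_congr rfl fun i _ => ?_
    by_cases h : ev i < 0
    · simp [h, h.le]
    · simp [h, not_lt.1 h]
  rw [h3] at h2
  have h4 : 0 ≤ ∑ i, min (ev i) 0 := by exact_mod_cast h2
  intro i
  have h5 := (Finset.sum_eq_zero_iff_of_nonpos (s := Finset.univ) (f := fun i => min (ev i) 0)
    (fun i _ => min_le_right _ _)).1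
      (le_antisymm (Finset.sum_nonpos fun i _ => min_le_right _ _) h4) i (Finset.mem_univ i)
  simpa using h5

/-- The properties of a partial equivalence that are used for positivity. -/
structure GoodMap (W : Submodule ℂ (Matrix α α ℂ)) (Φ : Matrix α α ℂ →ₗ[ℂ] Matrix β β ℂ) : Prop where
  one_mem : 1 ∈ W
  mul_mem : ∀ X ∈ W, ∀ Y ∈ W, X * Y ∈ W
  conj_mem : ∀ X ∈ W, Xᴴ ∈ W
  map_one : Φ 1 = 1
  map_mul : ∀ X ∈ W, ∀ Y ∈ W, Φ (X * Y) = Φ X * Φ Y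
  map_conj : ∀ X ∈ W, Φ Xᴴ = (Φ X)ᴴ
  map_trace : ∀ X ∈ W, (Φ X).trace = X.trace

variable {W : Submodule ℂ (Matrix α α ℂ)} {Φ : Matrix α α ℂ →ₗ[ℂ] Matrix β β ℂ} {n : ℕ}
  {X : Fin n → Matrix α α ℂ}

lemma frame_swap (hX : ∀ i, X i ∈ W) (hf : ∀ Y ∈ W, Y = ∑ i, ((X i)ᴴ * Y).trace • X i)
    (L : Matrix α α ℂ → Matrix α α ℂ) (hL : ∀ Y ∈ W, L Y ∈ W)
    (hadj : ∀ Y Z, ((L Y)ᴴ * Z).trace = (Yᴴ * L Z).trace) :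
    ∑ i, tens (L (X i)) (Φ (X i)) = ∑ i, tens (X i) (Φ (L (X i))) := by
  have e1 : ∀ i, tens (L (X i)) (Φ (X i))
      = ∑ j, ((X i)ᴴ * L (X j)).trace • tens (X j) (Φ (X i)) := by
    intro i
    conv_lhs => rw [hf _ (hL _ (hX i))]
    simp only [map_sum, LinearMap.sum_apply, LinearMap.map_smulₛₗ, LinearMap.smul_apply]
    refine Finset.sum_congr rfl fun j _ => ?_
    congr 1
    rw [← hadj, starRingEnd_apply, ← Matrix.trace_conjTranspose]
    simp
  have e2 : ∀ j, tens (X j) (Φ (L (X j)))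
      = ∑ i, ((X i)ᴴ * L (X j)).trace • tens (X j) (Φ (X i)) := by
    intro j
    conv_lhs => rw [hf _ (hL _ (hX j))]
    simp only [map_sum, map_smul]
  simp only [e1, e2]
  rw [Finset.sum_comm]

lemma frame_herm (hg : GoodMap W Φ) (hX : ∀ i, X i ∈ W)
    (hf : ∀ Y ∈ W, Y = ∑ i, ((X i)ᴴ * Y).trace • X i) :
    (∑ i, tens (X i) (Φ (X i))).IsHermitian := by
  have e1 : ∀ i, tens (X i)ᴴ (Φ (X i)ᴴ)
      = ∑ j, ((X i) * (X j)).trace • tens (X j) (Φ (X i)ᴴ) := by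
    intro i
    conv_lhs => rw [hf _ (hg.conj_mem _ (hX i))]
    rw [map_sum, LinearMap.sum_apply]
    rw [← hf _ (hg.conj_mem _ (hX i))]
    simp only [LinearMap.map_smulₛₗ, LinearMap.smul_apply]
    refine Finset.sum_congr rfl fun j _ => ?_
    congr 1
    rw [starRingEnd_apply, ← Matrix.trace_conjTranspose]
    simp
  have e2 : ∀ j, tens (X j) (Φ (X j))
      = ∑ i, ((X i) * (X j)).trace • tens (X j) (Φ (X i)ᴴ) := by
    intro j
    have h1 := congrArg Matrix.conjTranspose (hf _ (hg.conj_mem _ (hX j)))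
    rw [Matrix.conjTranspose_conjTranspose, Matrix.conjTranspose_sum] at h1
    refine (congrArg (fun Z => tens (X j) (Φ Z)) h1).trans ?_
    simp only [map_sum, Matrix.conjTranspose_smul, map_smul]
    refine Finset.sum_congr rfl fun i _ => ?_
    congr 1
    rw [← Matrix.trace_conjTranspose]
    rw [Matrix.conjTranspose_mul, Matrix.conjTranspose_conjTranspose, Matrix.conjTranspose_conjTranspose,
      Matrix.trace_mul_comm]
  unfold Matrix.IsHermitian
  rw [Matrix.conjTranspose_sum]
  simp only [tens_conj]
  calc _ = ∑ i, tens (X i)ᴴ (Φ (X i)ᴴ) :=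
        Finset.sum_congr rfl fun i _ => by rw [hg.map_conj _ (hX i)]
    _ = _ := by
      simp only [e1, e2]
      rw [Finset.sum_comm]

lemma frame_trace (hg : GoodMap W Φ) (hX : ∀ i, X i ∈ W)
    (hf : ∀ Y ∈ W, Y = ∑ i, ((X i)ᴴ * Y).trace • X i) (P Q : Matrix α α ℂ) (hP : P ∈ W)
    (hQ : Q ∈ W) :
    ((∑ i, tens (X i) (Φ (X i))) * tens P (Φ Q)).trace = (Pᴴ * Q).trace := by
  have h1 := hf _ (hg.conj_mem _ hP)
  conv_rhs => rw [h1]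
  simp only [Finset.sum_mul, Matrix.trace_sum, tens_mul, tens_trace]
  refine Finset.sum_congr rfl fun i _ => ?_
  rw [← hg.map_mul _ (hX i) _ hQ, hg.map_trace _ (hg.mul_mem _ (hX i) _ hQ), Matrix.smul_mul,
    Matrix.trace_smul, smul_eq_mul, ← Matrix.trace_conjTranspose, Matrix.conjTranspose_mul,
    Matrix.trace_mul_comm]

lemma frame_psd (hg : GoodMap W Φ) (hX : ∀ i, X i ∈ W)
    (hf : ∀ Y ∈ W, Y = ∑ i, ((X i)ᴴ * Y).trace • X i) :
    (∑ i, tens (X i) (Φ (X i))).PosSemidef := by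
  let T : Set (Matrix (α × β) (α × β) ℂ) := {S | ∃ P ∈ W, ∃ Q ∈ W, S = tens P (Φ Q)}
  let D := Submodule.span ℂ T
  have hTD : ∀ P ∈ W, ∀ Q ∈ W, tens P (Φ Q) ∈ D := fun P hP Q hQ =>
    Submodule.subset_span ⟨P, hP, Q, hQ, rfl⟩
  refine psd_of_alg _ (frame_herm hg hX hf) D ?_ ?_ ?_ ?_
  · have := hTD 1 hg.one_mem 1 hg.one_mem
    rwa [hg.map_one, tens_one] at this
  · exact Submodule.sum_mem _ fun i _ => hTD _ (hX i) _ (hX i)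
  · intro S hS S' hS'
    have h := Submodule.mul_mem_mul hS hS'
    rw [Submodule.span_mul_span] at h
    refine Submodule.span_mono ?_ h
    rintro _ ⟨_, ⟨P, hP, Q, hQ, rfl⟩, _, ⟨P', hP', Q', hQ', rfl⟩, rfl⟩
    refine ⟨_, hg.mul_mem _ hP _ hP', _, hg.mul_mem _ hQ _ hQ', ?_⟩
    rw [hg.map_mul _ hQ _ hQ', ← tens_mul]
  · intro S hS
    have hQf : ∃ Q : Fin n → Matrix α α ℂ, (∀ i, Q i ∈ W) ∧ S = ∑ i, tens (X i) (Φ (Q i)) := by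
      refine Submodule.span_induction ?_ ?_ ?_ ?_ hS
      · rintro _ ⟨P, hP, Q, hQ, rfl⟩
        refine ⟨fun i => star ((X i)ᴴ * P).trace • Q, fun i => Submodule.smul_mem _ _ hQ, ?_⟩
        conv_lhs => rw [hf _ hP]
        simp only [map_sum, LinearMap.sum_apply, LinearMap.map_smulₛₗ, LinearMap.smul_apply,
          map_smul, starRingEnd_apply]
      · exact ⟨0, fun i => W.zero_mem, by simp⟩
      · rintro S S' _ _ ⟨Q, hQ, rfl⟩ ⟨Q', hQ', rfl⟩
        exact ⟨Q + Q', fun i => W.add_mem (hQ i) (hQ' i), by simp [Finset.sum_add_distrib]⟩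
      · rintro c S _ ⟨Q, hQ, rfl⟩
        exact ⟨c • Q, fun i => W.smul_mem _ (hQ i), by simp [Finset.smul_sum]⟩
    obtain ⟨Q, hQ, rfl⟩ := hQf
    have key := frame_trace hg hX hf
    generalize (∑ i, tens (X i) (Φ (X i))) = C at key ⊢
    have hR := (Matrix.posSemidef_self_mul_conjTranspose (∑ i, Q i * (X i)ᴴ)).trace_nonneg
    have e1 : (C * ((∑ i, tens (X i) (Φ (Q i)))ᴴ * ∑ i, tens (X i) (Φ (Q i)))).trace
        = ∑ k, ∑ l, (C * ((tens (X k) (Φ (Q k)))ᴴ * tens (X l) (Φ (Q l)))).trace := by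
      rw [Matrix.conjTranspose_sum, Finset.sum_mul_sum, Finset.mul_sum, Matrix.trace_sum]
      simp only [Finset.mul_sum, Matrix.trace_sum]
    have e2 : ((∑ i, Q i * (X i)ᴴ) * (∑ i, Q i * (X i)ᴴ)ᴴ).trace
        = ∑ l, ∑ k, ((Q l * (X l)ᴴ) * (Q k * (X k)ᴴ)ᴴ).trace := by
      rw [Matrix.conjTranspose_sum, Finset.sum_mul_sum, Matrix.trace_sum]
      simp only [Matrix.trace_sum]
    rw [e1, Finset.sum_comm]
    rw [e2] at hR
    refine hR.trans_eq ?_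
    symm
    refine Finset.sum_congr rfl fun l _ => Finset.sum_congr rfl fun k _ => ?_
    rw [tens_conj, tens_mul, ← hg.map_conj _ (hQ k),
      ← hg.map_mul _ (hg.conj_mem _ (hQ k)) _ (hQ l),
      key _ _ (hg.mul_mem _ (hg.conj_mem _ (hX k)) _ (hX l))
        (hg.mul_mem _ (hg.conj_mem _ (hQ k)) _ (hQ l))]
    rw [Matrix.conjTranspose_mul, Matrix.conjTranspose_mul, Matrix.conjTranspose_conjTranspose,
      ← Matrix.mul_assoc, Matrix.trace_mul_comm]
    simp only [Matrix.mul_assoc]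
end partB
section partC
open scoped ComplexOrder
variable {α β : Type*} [Fintype α] [Fintype β] [DecidableEq α] [DecidableEq β]

lemma J_mul_mul_J (X : Matrix α α ℂ) :
    allOnes α * X * allOnes α = (∑ g, ∑ g', X g g') • allOnes α := by
  ext i j
  simp only [allOnes, Matrix.mul_apply, Matrix.of_apply, Matrix.smul_apply, one_mul, mul_one,
    smul_eq_mul]
  rw [Finset.sum_comm]

lemma trace_eq_sum_had (X : Matrix α α ℂ) :
    X.trace = ∑ g, ∑ g', (Matrix.hadamard 1 X) g g' := by
  simp [Matrix.trace, Matrix.one_apply]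

lemma conj_J_trace (X : Matrix α α ℂ) : (Xᴴ * allOnes α).trace = star (∑ g, ∑ g', X g g') := by
  simp only [Matrix.trace, Matrix.diag, Matrix.mul_apply, allOnes, Matrix.of_apply, mul_one,
    Matrix.conjTranspose_apply, star_sum]
  rw [Finset.sum_comm]

lemma had_adj (A : Matrix α α ℂ) (hA : ∀ g g', star (A g g') = A g g') (Y Z : Matrix α α ℂ) :
    ((Matrix.hadamard A Y)ᴴ * Z).trace = (Yᴴ * Matrix.hadamard A Z).trace := by
  simp only [Matrix.trace, Matrix.diag, Matrix.mul_apply, Matrix.conjTranspose_apply,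
    Matrix.hadamard_apply, star_mul', hA]
  refine Finset.sum_congr rfl fun g _ => Finset.sum_congr rfl fun g' _ => ?_
  ring

lemma equiv_imp_iso {G : SimpleGraph α} {H : SimpleGraph β} [DecidableRel G.Adj]
    [DecidableRel H.Adj] (h : PartiallyEquivalent G H) :
    ∃ M, IsIsoMatrix G H M ∧ M.PosSemidef := by
  obtain ⟨Φ, hbij, hconj, hmul, hone, hA, hJ, hh1, hhA⟩ := h
  obtain ⟨p1, p2, p3, p4, p5, p6, p7⟩ := pc_isPC (A := G.adjMatrix ℂ)
  set W := pcAlgebra (G.adjMatrix ℂ) with hW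
  have hsum : ∀ X ∈ W, ∑ h, ∑ h', Φ X h h' = ∑ g, ∑ g', X g g' := by
    intro X hX
    rcases isEmpty_or_nonempty β with hβ | ⟨⟨b⟩⟩
    · have h01 : (1 : Matrix α α ℂ) = 0 :=
        hbij.injOn p1 W.zero_mem (Subsingleton.elim _ _)
      have hα : IsEmpty α := ⟨fun a => by
        have := congrFun (congrFun h01 a) a
        simp at this⟩
      simp
    · have h1 := congrArg Φ (J_mul_mul_J X)
      rw [hmul _ (p4 _ p3 _ hX) _ p3, hmul _ p3 _ hX, map_smul, hJ, J_mul_mul_J] at h1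
      have h2 := congrFun (congrFun h1 b) b
      simpa [allOnes] using h2
  have hg : GoodMap W Φ := by
    refine ⟨p1, p4, p5, hone, hmul, hconj, fun X hX => ?_⟩
    rw [trace_eq_sum_had, trace_eq_sum_had, ← hh1 _ hX, hsum _ (p6 _ hX)]
  obtain ⟨n, X, hX, hf⟩ := exists_frame W
  have hpsd := frame_psd hg hX hf
  have hC : ∀ p q, (∑ i, tens (X i) (Φ (X i))) p q
      = ∑ i, star (X i p.1 q.1) * Φ (X i) p.2 q.2 := by
    intro p q
    simp [Matrix.sum_apply, tens_apply]
  have hs1 := frame_swap (Φ := Φ) hX hf (Matrix.hadamard 1) p6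
    (had_adj 1 fun g g' => by simp only [Matrix.one_apply]; split_ifs <;> simp)
  have hs2 := frame_swap (Φ := Φ) hX hf (Matrix.hadamard (G.adjMatrix ℂ)) p7
    (had_adj _ fun g g' => by simp only [SimpleGraph.adjMatrix_apply]; split_ifs <;> simp)
  have hJf : ∑ i, star (∑ g, ∑ g', X i g g') • X i = allOnes α := by
    have := hf _ p3
    simp only [conj_J_trace] at this
    exact this.symm
  set C := ∑ i, tens (X i) (Φ (X i)) with hCdef
  have c1 : ∀ g g', ∑ h, ∑ h', C (g, h) (g', h') = 1 := by
    intro g g'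
    have e1 : ∑ h, ∑ h', C (g, h) (g', h') = ∑ i, star (X i g g') * ∑ h, ∑ h', Φ (X i) h h' := by
      simp only [hC, Finset.mul_sum]
      rw [Finset.sum_congr rfl fun h _ => Finset.sum_comm]
      rw [Finset.sum_comm]
    rw [e1]
    have e2 := congrArg star (congrFun (congrFun hJf g) g')
    simp only [Matrix.sum_apply, Matrix.smul_apply, smul_eq_mul, star_sum, star_mul', star_star,
      allOnes, Matrix.of_apply, star_one] at e2
    rw [← e2]
    refine Finset.sum_congr rfl fun i _ => ?_
    rw [hsum _ (hX i), mul_comm]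
  have c2 : ∀ h h', ∑ g, ∑ g', C (g, h) (g', h') = 1 := by
    intro h h'
    have e1 : ∑ g, ∑ g', C (g, h) (g', h') = ∑ i, star (∑ g, ∑ g', X i g g') * Φ (X i) h h' := by
      simp only [hC, star_sum, Finset.sum_mul]
      rw [Finset.sum_congr rfl fun h _ => Finset.sum_comm]
      rw [Finset.sum_comm]
    rw [e1]
    have e2 := congrFun (congrFun (congrArg Φ hJf) h) h'
    rw [hJ] at e2
    simpa [Matrix.sum_apply, allOnes] using e2
  have c3 : ∀ g g' h h', (1 : Matrix α α ℂ) g g' * C (g, h) (g', h')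
      = (1 : Matrix β β ℂ) h h' * C (g, h) (g', h') := by
    intro g g' h h'
    have e := congrFun (congrFun hs1 (g, h)) (g', h')
    simp only [Matrix.sum_apply, tens_apply, hh1 _ (hX _), Matrix.hadamard_apply] at e
    simp only [hC, Finset.mul_sum]
    convert e using 2 with i _ i _
    · by_cases hgg : g = g' <;> simp [Matrix.one_apply, hgg]
    · ring
  have c4 : ∀ g g' h h', (G.adjMatrix ℂ) g g' * C (g, h) (g', h')
      = (H.adjMatrix ℂ) h h' * C (g, h) (g', h') := by
    intro g g' h h'
    have e := congrFun (congrFun hs2 (g, h)) (g', h')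
    simp only [Matrix.sum_apply, tens_apply, hhA _ (hX _), Matrix.hadamard_apply] at e
    simp only [hC, Finset.mul_sum]
    convert e using 2 with i _ i _
    · by_cases hgg : G.Adj g g' <;> simp [hgg]
    · ring
  refine ⟨C.map Complex.re, ⟨fun g g' => ?_, fun h h' => ?_, fun g g' h h' hr => ?_⟩, ?_⟩
  · have := congrArg Complex.re (c1 g g')
    simpa using this
  · have := congrArg Complex.re (c2 h h')
    simpa using this
  · have : C (g, h) (g', h') = 0 := by
      by_contra h0
      refine hr ⟨?_, ?_⟩
      · have := mul_right_cancel₀ h0 (c3 g g' h h')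
        by_cases h1 : g = g' <;> by_cases h2 : h = h' <;> simp [Matrix.one_apply, h1, h2] at this ⊢
      · have := mul_right_cancel₀ h0 (c4 g g' h h')
        by_cases h1 : G.Adj g g' <;> by_cases h2 : H.Adj h h' <;> simp [h1, h2] at this ⊢
    simp [this]
  · refine Matrix.PosSemidef.of_dotProduct_mulVec_nonneg ?_ fun x => ?_
    · ext p q
      have := congrArg Complex.re (hpsd.1.apply p q)
      simpa using this
    · have := (Complex.le_def.1 (hpsd.dotProduct_mulVec_nonneg fun p => (x p : ℂ))).1
      simpa [dotProduct, Matrix.mulVec] using this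
end partC

/-- Two graphs are partially equivalent iff they are `S+`-isomorphic. -/
theorem partiallyEquivalent_iff_sPlus_iso {α β : Type*}
    [Fintype α] [Fintype β] [DecidableEq α] [DecidableEq β]
    (G : SimpleGraph α) (H : SimpleGraph β)
    [DecidableRel G.Adj] [DecidableRel H.Adj] :
    PartiallyEquivalent G H ↔ ∃ M, IsIsoMatrix G H M ∧ M.PosSemidef := by
  exact ⟨equiv_imp_iso, fun ⟨_, hM, hp⟩ => iso_imp_equiv hM hp⟩
end

section
/- Two finite simple graphs G and H are equivalent (there exists an isomorphism of their coherent algebras mapping A_G to A_H) if and only if G ≅_{DNN} H, i.e., there exists a DNN-isomorphism matrix for G to H. -/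
open Matrix BigOperators

/-- A subspace `S` of `ℂ^{V×V}` is a coherent algebra containing `A` if it contains
`I`, `A` and `J`, and is closed under matrix multiplication, conjugate transposition,
and Schur (entrywise) product. -/
def IsCoherentWith {V : Type*} [Fintype V] [DecidableEq V]
    (A : Matrix V V ℂ) (S : Submodule ℂ (Matrix V V ℂ)) : Prop :=
  (1 : Matrix V V ℂ) ∈ S ∧ A ∈ S ∧ allOnes V ∈ S ∧
  (∀ X ∈ S, ∀ Y ∈ S, X * Y ∈ S) ∧
  (∀ X ∈ S, Xᴴ ∈ S) ∧
  (∀ X ∈ S, ∀ Y ∈ S, Matrix.hadamard X Y ∈ S)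

/-- The coherent algebra of a graph: the smallest coherent algebra containing the
adjacency matrix. -/
noncomputable def cohAlgebra {V : Type*} [Fintype V] [DecidableEq V] (A : Matrix V V ℂ) :
    Submodule ℂ (Matrix V V ℂ) :=
  sInf {S | IsCoherentWith A S}

/-- `G` and `H` are equivalent: there is an isomorphism of their coherent algebras
(respecting conjugate transposition, matrix multiplication and Schur product)
mapping `A_G` to `A_H`. -/
def GraphEquivalent {α β : Type*} [Fintype α] [Fintype β] [DecidableEq α] [DecidableEq β]
    (G : SimpleGraph α) (H : SimpleGraph β)
    [DecidableRel G.Adj] [DecidableRel H.Adj] : Prop :=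
  ∃ Φ : Matrix α α ℂ →ₗ[ℂ] Matrix β β ℂ,
    Set.BijOn Φ (cohAlgebra (G.adjMatrix ℂ) : Set (Matrix α α ℂ))
      (cohAlgebra (H.adjMatrix ℂ) : Set (Matrix β β ℂ)) ∧
    (∀ M ∈ cohAlgebra (G.adjMatrix ℂ), Φ Mᴴ = (Φ M)ᴴ) ∧
    (∀ M ∈ cohAlgebra (G.adjMatrix ℂ), ∀ N ∈ cohAlgebra (G.adjMatrix ℂ),
      Φ (M * N) = Φ M * Φ N) ∧
    (∀ M ∈ cohAlgebra (G.adjMatrix ℂ), ∀ N ∈ cohAlgebra (G.adjMatrix ℂ),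
      Φ (Matrix.hadamard M N) = Matrix.hadamard (Φ M) (Φ N)) ∧
    Φ (G.adjMatrix ℂ) = H.adjMatrix ℂ

section Aux

open Kronecker

variable {α β : Type*} [Fintype α] [Fintype β] [DecidableEq α] [DecidableEq β]

/-- The linear map with Choi matrix `M`. -/
noncomputable def choiMap (M : Matrix (α × β) (α × β) ℝ) :
    Matrix α α ℂ →ₗ[ℂ] Matrix β β ℂ where
  toFun X := Matrix.of fun h h' => ∑ g, ∑ g', (M (g, h) (g', h') : ℂ) * X g g'
  map_add' X Y := by
    ext h h'
    simp [mul_add, Finset.sum_add_distrib]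
  map_smul' c X := by
    ext h h'
    simp only [Matrix.of_apply, Matrix.smul_apply, smul_eq_mul, RingHom.id_apply, Finset.mul_sum]
    refine Finset.sum_congr rfl fun g _ => Finset.sum_congr rfl fun g' _ => by ring

theorem choiMap_apply (M : Matrix (α × β) (α × β) ℝ) (X : Matrix α α ℂ) (h h' : β) :
    choiMap M X h h' = ∑ g, ∑ g', (M (g, h) (g', h') : ℂ) * X g g' := rfl

/-- Interchange the two tensor factors. -/
def swapM (M : Matrix (α × β) (α × β) ℝ) : Matrix (β × α) (β × α) ℝ :=
  M.submatrix Prod.swap Prod.swap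

theorem pairing (M : Matrix (α × β) (α × β) ℝ) (P : Matrix α α ℂ) (Q : Matrix β β ℂ) :
    ∑ h, ∑ h', Q h h' * choiMap M P h h' = ∑ g, ∑ g', P g g' * choiMap (swapM M) Q g g' := by
  simp only [choiMap_apply, swapM, Matrix.submatrix_apply, Prod.swap, Finset.mul_sum]
  simp only [← Fintype.sum_prod_type' (f := fun (_ : β) (_ : β) => _),
    ← Fintype.sum_prod_type' (f := fun (_ : α) (_ : α) => _)]
  rw [Finset.sum_comm]
  refine Finset.sum_congr rfl fun g _ => Finset.sum_congr rfl fun g' _ => by ring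

/-- Basic data. -/
structure Good (M : Matrix (α × β) (α × β) ℝ) : Prop where
  psd : M.PosSemidef
  nonneg : ∀ p q, 0 ≤ M p q
  row : ∀ g g' : α, ∑ h : β, ∑ h' : β, M (g, h) (g', h') = 1
  col : ∀ h h' : β, ∑ g : α, ∑ g' : α, M (g, h) (g', h') = 1
  diag : ∀ g g' h h', ¬ (g = g' ↔ h = h') → M (g, h) (g', h') = 0

theorem Good.swap {M : Matrix (α × β) (α × β) ℝ} (hM : Good M) : Good (swapM M) where
  psd := hM.psd.submatrix _
  nonneg _ _ := hM.nonneg _ _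
  row := hM.col
  col := hM.row
  diag _ _ _ _ hn := hM.diag _ _ _ _ (fun h => hn h.symm)

theorem Good.symm {M : Matrix (α × β) (α × β) ℝ} (hM : Good M) (p q) : M p q = M q p := by
  simpa using hM.psd.isHermitian.apply q p

theorem Good.map_eq {M : Matrix (α × β) (α × β) ℝ} (hM : Good M) {X : Matrix α α ℂ}
    {Y : Matrix β β ℂ} (h : ∀ g g' h h', M (g, h) (g', h') ≠ 0 → X g g' = Y h h') :
    choiMap M X = Y := by
  ext r r'
  rw [choiMap_apply]
  have : ∀ g g', (M (g, r) (g', r') : ℂ) * X g g' = (M (g, r) (g', r') : ℂ) * Y r r' := by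
    intro g g'
    by_cases h0 : M (g, r) (g', r') = 0
    · simp [h0]
    · rw [h _ _ _ _ h0]
  simp only [this, ← Finset.sum_mul]
  have := congrArg (fun x : ℝ => (x : ℂ)) (hM.col r r')
  push_cast at this
  rw [this, one_mul]

/-- The pair `(X, Y)` is matched by `M`. -/
def Matched (M : Matrix (α × β) (α × β) ℝ) (X : Matrix α α ℂ) (Y : Matrix β β ℂ) : Prop :=
  choiMap M X = Y ∧ choiMap (swapM M) Y = X

theorem Matched.swap {M : Matrix (α × β) (α × β) ℝ} {X : Matrix α α ℂ} {Y : Matrix β β ℂ}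
    (h : Matched M X Y) : Matched (swapM M) Y X := ⟨h.2, h.1⟩

theorem Good.matched {M : Matrix (α × β) (α × β) ℝ} (hM : Good M) {X : Matrix α α ℂ}
    {Y : Matrix β β ℂ} (h : ∀ g g' h h', M (g, h) (g', h') ≠ 0 → X g g' = Y h h') :
    Matched M X Y :=
  ⟨hM.map_eq h, hM.swap.map_eq fun g g' r r' h0 => (h r r' g g' h0).symm⟩

theorem Good.matched_one {M : Matrix (α × β) (α × β) ℝ} (hM : Good M) :
    Matched M (1 : Matrix α α ℂ) 1 := by
  refine hM.matched fun g g' h h' h0 => ?_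
  have : g = g' ↔ h = h' := by
    by_contra hc
    exact h0 (hM.diag _ _ _ _ hc)
  simp [Matrix.one_apply, this]

theorem Good.matched_ones {M : Matrix (α × β) (α × β) ℝ} (hM : Good M) :
    Matched M (allOnes α) (allOnes β) :=
  hM.matched fun _ _ _ _ _ => rfl

theorem Good.map_transpose {M : Matrix (α × β) (α × β) ℝ} (hM : Good M) (X : Matrix α α ℂ) :
    choiMap M Xᵀ = (choiMap M X)ᵀ := by
  ext h h'
  rw [Matrix.transpose_apply, choiMap_apply, choiMap_apply, Finset.sum_comm]
  simp [hM.symm (_, h')]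

theorem Good.map_conjTranspose {M : Matrix (α × β) (α × β) ℝ} (hM : Good M) (X : Matrix α α ℂ) :
    choiMap M Xᴴ = (choiMap M X)ᴴ := by
  ext h h'
  rw [Matrix.conjTranspose_apply, choiMap_apply, choiMap_apply, Finset.sum_comm]
  simp [hM.symm (_, h')]

theorem Matched.conjTranspose {M : Matrix (α × β) (α × β) ℝ} (hM : Good M) {X : Matrix α α ℂ}
    {Y : Matrix β β ℂ} (h : Matched M X Y) : Matched M Xᴴ Yᴴ :=
  ⟨by rw [hM.map_conjTranspose, h.1], by rw [hM.swap.map_conjTranspose, h.2]⟩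

/-- Matched pairs agree on the support of `M`. -/
theorem Matched.agree {M : Matrix (α × β) (α × β) ℝ} (hM : Good M) {X : Matrix α α ℂ}
    {Y : Matrix β β ℂ} (hXY : Matched M X Y) (g g' h h') (h0 : M (g, h) (g', h') ≠ 0) :
    X g g' = Y h h' := by
  have key : ∑ g, ∑ g', ∑ h, ∑ h',
      (M (g, h) (g', h') : ℂ) * ((X g g' - Y h h') * star (X g g' - Y h h')) = 0 := by
    have e1 : ∑ g, ∑ g', ∑ h, ∑ h', (M (g, h) (g', h') : ℂ) * (X g g' * star (X g g'))
        = ∑ g, ∑ g', X g g' * star (X g g') := by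
      refine Finset.sum_congr rfl fun g _ => Finset.sum_congr rfl fun g' _ => ?_
      simp only [← Finset.sum_mul]
      have := congrArg (fun x : ℝ => (x : ℂ)) (hM.row g g')
      push_cast at this
      rw [this, one_mul]
    have e2 : ∑ g, ∑ g', ∑ h, ∑ h', (M (g, h) (g', h') : ℂ) * (Y h h' * star (X g g'))
        = ∑ g, ∑ g', X g g' * star (X g g') := by
      refine Finset.sum_congr rfl fun g _ => Finset.sum_congr rfl fun g' _ => ?_
      simp only [← mul_assoc, ← Finset.sum_mul]
      congr 1
      exact congrFun (congrFun hXY.2 g) g'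
    have comm : ∀ f : α → α → β → β → ℂ, ∑ g, ∑ g', ∑ h, ∑ h', f g g' h h' =
        ∑ h, ∑ h', ∑ g, ∑ g', f g g' h h' := by
      intro f
      simp only [← Fintype.sum_prod_type' (f := fun (_ : β) (_ : β) => _),
        ← Fintype.sum_prod_type' (f := fun (_ : α) (_ : α) => _)]
      rw [Finset.sum_comm]
    have e3 : ∑ g, ∑ g', ∑ h, ∑ h', (M (g, h) (g', h') : ℂ) * (X g g' * star (Y h h'))
        = ∑ h, ∑ h', Y h h' * star (Y h h') := by
      rw [comm]
      refine Finset.sum_congr rfl fun g _ => Finset.sum_congr rfl fun g' _ => ?_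
      simp only [← mul_assoc, ← Finset.sum_mul]
      congr 1
      exact congrFun (congrFun hXY.1 g) g'
    have e4 : ∑ g, ∑ g', ∑ h, ∑ h', (M (g, h) (g', h') : ℂ) * (Y h h' * star (Y h h'))
        = ∑ h, ∑ h', Y h h' * star (Y h h') := by
      rw [comm]
      refine Finset.sum_congr rfl fun g _ => Finset.sum_congr rfl fun g' _ => ?_
      simp only [← Finset.sum_mul]
      have := congrArg (fun x : ℝ => (x : ℂ)) (hM.col g g')
      push_cast at this
      rw [this, one_mul]
    have : ∀ g g' h h', (M (g, h) (g', h') : ℂ) * ((X g g' - Y h h') * star (X g g' - Y h h'))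
      = (M (g, h) (g', h') : ℂ) * (X g g' * star (X g g'))
        - (M (g, h) (g', h') : ℂ) * (Y h h' * star (X g g'))
        - (M (g, h) (g', h') : ℂ) * (X g g' * star (Y h h'))
        + (M (g, h) (g', h') : ℂ) * (Y h h' * star (Y h h')) := by
      intro g g' h h'
      rw [star_sub]
      ring
    simp only [this, Finset.sum_add_distrib, Finset.sum_sub_distrib, e1, e2, e3, e4]
    ring
  have key' : ∑ g, ∑ g', ∑ h, ∑ h',
      M (g, h) (g', h') * Complex.normSq (X g g' - Y h h') = 0 := by
    have h2 : ∀ z : ℂ, z * star z = (Complex.normSq z : ℂ) := fun z => Complex.mul_conj z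
    simp only [h2] at key
    exact_mod_cast key
  have nn : ∀ g g' h h', 0 ≤ M (g, h) (g', h') * Complex.normSq (X g g' - Y h h') :=
    fun g g' h h' => mul_nonneg (hM.nonneg _ _) (Complex.normSq_nonneg _)
  have a1 := (Finset.sum_eq_zero_iff_of_nonneg (fun g _ => Finset.sum_nonneg fun g' _ =>
    Finset.sum_nonneg fun h _ => Finset.sum_nonneg fun h' _ => nn g g' h h')).1 key' g
    (Finset.mem_univ _)
  have a2 := (Finset.sum_eq_zero_iff_of_nonneg (fun g' _ =>
    Finset.sum_nonneg fun h _ => Finset.sum_nonneg fun h' _ => nn g g' h h')).1 a1 g'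
    (Finset.mem_univ _)
  have a3 := (Finset.sum_eq_zero_iff_of_nonneg (fun h _ => Finset.sum_nonneg fun h' _ =>
    nn g g' h h')).1 a2 h (Finset.mem_univ _)
  have a4 := (Finset.sum_eq_zero_iff_of_nonneg (fun h' _ =>
    nn g g' h h')).1 a3 h' (Finset.mem_univ _)
  rcases mul_eq_zero.1 a4 with h | h
  · exact absurd h h0
  · exact sub_eq_zero.1 (Complex.normSq_eq_zero.1 h)

theorem Matched.hadamard {M : Matrix (α × β) (α × β) ℝ} (hM : Good M) {X X' : Matrix α α ℂ}
    {Y Y' : Matrix β β ℂ} (h : Matched M X Y) (h' : Matched M X' Y') :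
    Matched M (Matrix.hadamard X X') (Matrix.hadamard Y Y') := by
  refine hM.matched fun a b c d h0 => ?_
  simp [Matrix.hadamard_apply, h.agree hM a b c d h0, h'.agree hM a b c d h0]

theorem Good.trace_mul_kron {M : Matrix (α × β) (α × β) ℝ} (hM : Good M) (P : Matrix α α ℂ)
    (Q : Matrix β β ℂ) :
    Matrix.trace (M.map (fun x : ℝ => (x : ℂ)) * (P ⊗ₖ Q)) = ∑ h, ∑ h', Q h h' * choiMap M P h h' := by
  simp only [Matrix.trace, Matrix.diag, Matrix.mul_apply, Fintype.sum_prod_type, choiMap_apply,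
    Finset.mul_sum, Matrix.map_apply, Matrix.kroneckerMap_apply]
  have : ∀ f : α → β → α → β → ℂ, ∑ g, ∑ h, ∑ g', ∑ h', f g h g' h' =
      ∑ h', ∑ h, ∑ g', ∑ g, f g h g' h' := by
    intro f
    calc _ = ∑ g, ∑ g', ∑ h, ∑ h', f g h g' h' :=
          Finset.sum_congr rfl fun g _ => Finset.sum_comm
      _ = ∑ g', ∑ g, ∑ h', ∑ h, f g h g' h' := by
          rw [Finset.sum_comm]
          exact Finset.sum_congr rfl fun g _ => Finset.sum_congr rfl fun g _ => Finset.sum_comm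
      _ = _ := by
          simp only [← Fintype.sum_prod_type' (f := fun (_ : β) (_ : β) => _),
            ← Fintype.sum_prod_type' (f := fun (_ : α) (_ : α) => _)]
          rw [Finset.sum_comm]
  rw [this]
  refine Finset.sum_congr rfl fun a _ => Finset.sum_congr rfl fun b _ => Finset.sum_congr rfl
    fun c _ => Finset.sum_congr rfl fun d _ => ?_
  rw [hM.symm]
  ring

open scoped MatrixOrder ComplexOrder in
theorem Good.exists_factor {M : Matrix (α × β) (α × β) ℝ} (hM : Good M) :
    ∃ B : Matrix (α × β) (α × β) ℂ, M.map (fun x : ℝ => (x : ℂ)) = Bᴴ * B := by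
  classical
  obtain ⟨B, hB⟩ := CStarAlgebra.nonneg_iff_eq_star_mul_self.1 hM.psd.nonneg
  refine ⟨B.map (fun x : ℝ => (x : ℂ)), ?_⟩
  ext p q
  simp [hB, Matrix.mul_apply, Matrix.star_apply]

theorem Matched.intertwine {M : Matrix (α × β) (α × β) ℝ} (hM : Good M) {X : Matrix α α ℂ}
    {Y : Matrix β β ℂ} (hXY : Matched M X Y) :
    (Xᵀ ⊗ₖ (1 : Matrix β β ℂ)) * M.map (fun x : ℝ => (x : ℂ)) =
      ((1 : Matrix α α ℂ) ⊗ₖ Y) * M.map (fun x : ℝ => (x : ℂ)) := by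
  obtain ⟨B, hB⟩ := hM.exists_factor
  set D : Matrix (α × β) (α × β) ℂ := Xᵀ ⊗ₖ (1 : Matrix β β ℂ) - (1 : Matrix α α ℂ) ⊗ₖ Y with hD
  have hDD : Dᴴ * D = (Xᵀᴴ * Xᵀ) ⊗ₖ (1 : Matrix β β ℂ) - Xᵀᴴ ⊗ₖ Y - Xᵀ ⊗ₖ Yᴴ
      + (1 : Matrix α α ℂ) ⊗ₖ (Yᴴ * Y) := by
    rw [hD, Matrix.conjTranspose_sub, Matrix.conjTranspose_kronecker,
      Matrix.conjTranspose_kronecker, sub_mul, mul_sub, mul_sub]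
    simp only [← Matrix.mul_kronecker_mul, Matrix.conjTranspose_one, Matrix.one_mul,
      Matrix.mul_one]
    abel
  have one := hM.matched_one
  have t1 : Matrix.trace (M.map (fun x : ℝ => (x : ℂ)) * (Dᴴ * D)) = 0 := by
    rw [hDD, mul_add, mul_sub, mul_sub, Matrix.trace_add, Matrix.trace_sub, Matrix.trace_sub]
    simp only [hM.trace_mul_kron]
    rw [pairing M (Xᵀᴴ * Xᵀ), pairing M Xᵀᴴ Y, one.1, one.2, hXY.2, hM.map_transpose, hXY.1]
    have e1 : ∑ g, ∑ g', (Xᵀᴴ * Xᵀ) g g' * (1 : Matrix α α ℂ) g g'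
        = ∑ g, ∑ g', Xᵀᴴ g g' * X g g' := by
      simp [Matrix.one_apply, Matrix.mul_apply]
    have e2 : ∑ g, ∑ g', (Yᴴ * Y) g g' * (1 : Matrix β β ℂ) g g'
        = ∑ g, ∑ g', Yᴴ g g' * Yᵀ g g' := by
      simp [Matrix.one_apply, Matrix.mul_apply]
    rw [e1, e2]
    ring
  have t2 : Matrix.trace ((D * Bᴴ)ᴴ * (D * Bᴴ)) = 0 := by
    rw [Matrix.conjTranspose_mul, Matrix.conjTranspose_conjTranspose, ← t1, hB,
      Matrix.mul_assoc, ← Matrix.mul_assoc Dᴴ,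
      ← Matrix.mul_assoc B, Matrix.trace_mul_comm (B * (Dᴴ * D)), Matrix.mul_assoc]
  have t3 : D * Bᴴ = 0 := by
    open scoped ComplexOrder in exact Matrix.trace_conjTranspose_mul_self_eq_zero_iff.1 t2
  have t4 : D * M.map (fun x : ℝ => (x : ℂ)) = 0 := by
    rw [hB, ← Matrix.mul_assoc, t3, Matrix.zero_mul]
  rw [hD, sub_mul] at t4
  exact sub_eq_zero.1 t4

theorem Matched.map_mul {M : Matrix (α × β) (α × β) ℝ} (hM : Good M) {X : Matrix α α ℂ}
    {Y : Matrix β β ℂ} (hXY : Matched M X Y) (W : Matrix α α ℂ) :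
    choiMap M (X * W) = Y * choiMap M W := by
  have key : ∀ a h g' h', ∑ g, X g a * (M (g, h) (g', h') : ℂ)
      = ∑ b, Y h b * (M (a, b) (g', h') : ℂ) := by
    intro a h g' h'
    have := congrFun (congrFun (hXY.intertwine hM) (a, h)) (g', h')
    simpa [Matrix.mul_apply, Fintype.sum_prod_type, Matrix.one_apply] using this
  ext h h'
  simp only [Matrix.mul_apply, choiMap_apply, Finset.mul_sum]
  calc _ = ∑ g', ∑ a, W a g' * ∑ g, X g a * (M (g, h) (g', h') : ℂ) := by
        rw [Finset.sum_comm]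
        refine Finset.sum_congr rfl fun g' _ => ?_
        rw [Finset.sum_comm]
        refine Finset.sum_congr rfl fun a _ => ?_
        rw [Finset.mul_sum]
        exact Finset.sum_congr rfl fun g _ => by ring
    _ = ∑ g', ∑ a, ∑ b, Y h b * ((M (a, b) (g', h') : ℂ) * W a g') := by
        simp only [key, Finset.mul_sum]
        exact Finset.sum_congr rfl fun g' _ => Finset.sum_congr rfl fun a _ =>
          Finset.sum_congr rfl fun b _ => by ring
    _ = ∑ a, ∑ b, ∑ g', Y h b * ((M (a, b) (g', h') : ℂ) * W a g') := by
        rw [Finset.sum_comm]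
        exact Finset.sum_congr rfl fun a _ => Finset.sum_comm
    _ = _ := Finset.sum_comm

theorem Matched.mul {M : Matrix (α × β) (α × β) ℝ} (hM : Good M) {X X' : Matrix α α ℂ}
    {Y Y' : Matrix β β ℂ} (h : Matched M X Y) (h' : Matched M X' Y') :
    Matched M (X * X') (Y * Y') :=
  ⟨by rw [h.map_mul hM, h'.1], by rw [h.swap.map_mul hM.swap, h'.2]⟩

theorem cohAlgebra_coherent (A : Matrix α α ℂ) : IsCoherentWith A (cohAlgebra A) := by
  unfold cohAlgebra
  refine ⟨?_, ?_, ?_, ?_, ?_, ?_⟩ <;> simp only [Submodule.mem_sInf]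
  · exact fun S hS => hS.1
  · exact fun S hS => hS.2.1
  · exact fun S hS => hS.2.2.1
  · exact fun X hX Y hY S hS => hS.2.2.2.1 X (hX S hS) Y (hY S hS)
  · exact fun X hX S hS => hS.2.2.2.2.1 X (hX S hS)
  · exact fun X hX Y hY S hS => hS.2.2.2.2.2 X (hX S hS) Y (hY S hS)

theorem Good.coh {M : Matrix (α × β) (α × β) ℝ} (hM : Good M) {A : Matrix α α ℂ}
    {A' : Matrix β β ℂ} (hA : Matched M A A') {X : Matrix α α ℂ} (hX : X ∈ cohAlgebra A) :
    Matched M X (choiMap M X) ∧ choiMap M X ∈ cohAlgebra A' := by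
  have hc := cohAlgebra_coherent A'
  let S : Submodule ℂ (Matrix α α ℂ) :=
    { carrier := {X | Matched M X (choiMap M X) ∧ choiMap M X ∈ cohAlgebra A'}
      add_mem' := by
        rintro X Y ⟨hX, hX'⟩ ⟨hY, hY'⟩
        refine ⟨⟨rfl, ?_⟩, ?_⟩
        · rw [map_add, map_add, hX.2, hY.2]
        · rw [map_add]; exact add_mem hX' hY'
      zero_mem' := by
        refine ⟨⟨rfl, ?_⟩, ?_⟩
        · rw [map_zero, map_zero]
        · rw [map_zero]; exact zero_mem _
      smul_mem' := by
        rintro c X ⟨hX, hX'⟩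
        refine ⟨⟨rfl, ?_⟩, ?_⟩
        · rw [map_smul, map_smul, hX.2]
        · rw [map_smul]; exact Submodule.smul_mem _ _ hX' }
  have mk : ∀ {X Y}, Matched M X Y → Y ∈ cohAlgebra A' → X ∈ S := by
    rintro X Y h hY
    have := h.1
    subst this
    exact ⟨h, hY⟩
  have hS : IsCoherentWith A S := by
    refine ⟨mk hM.matched_one hc.1, mk hA hc.2.1, mk hM.matched_ones hc.2.2.1, ?_, ?_, ?_⟩
    · exact fun X hX Y hY => mk (hX.1.mul hM hY.1) (hc.2.2.2.1 _ hX.2 _ hY.2)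
    · exact fun X hX => mk (hX.1.conjTranspose hM) (hc.2.2.2.2.1 _ hX.2)
    · exact fun X hX Y hY => mk (hX.1.hadamard hM hY.1) (hc.2.2.2.2.2 _ hX.2 _ hY.2)
  exact (Submodule.mem_sInf.1 hX) S hS

theorem dnn_to_equiv (G : SimpleGraph α) (H : SimpleGraph β)
    [DecidableRel G.Adj] [DecidableRel H.Adj] (M : Matrix (α × β) (α × β) ℝ)
    (h1 : IsIsoMatrix G H M) (h2 : M.PosSemidef) (h3 : ∀ p q, 0 ≤ M p q) :
    GraphEquivalent G H := by
  have hM : Good M := ⟨h2, h3, h1.1, h1.2.1, fun g g' h h' hn =>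
    h1.2.2 g g' h h' fun hr => hn hr.1⟩
  have hA : Matched M (G.adjMatrix ℂ) (H.adjMatrix ℂ) := by
    refine hM.matched fun g g' h h' h0 => ?_
    have : relEq G H g g' h h' := by
      by_contra hc
      exact h0 (h1.2.2 _ _ _ _ hc)
    simp [SimpleGraph.adjMatrix_apply, this.2]
  refine ⟨choiMap M, ⟨?_, ?_, ?_⟩, ?_, ?_, ?_, hA.1⟩
  · exact fun X hX => (hM.coh hA hX).2
  · intro X hX Y hY hXY
    rw [← (hM.coh hA hX).1.2, ← (hM.coh hA hY).1.2, hXY]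
  · intro Y hY
    have := hM.swap.coh hA.swap hY
    exact ⟨_, this.2, this.1.2⟩
  · exact fun X _ => hM.map_conjTranspose X
  · exact fun X hX Y hY => ((hM.coh hA hX).1.mul hM (hM.coh hA hY).1).1
  · exact fun X hX Y hY => ((hM.coh hA hX).1.hadamard hM (hM.coh hA hY).1).1

end Aux

section Aux2

open Kronecker

variable {α β : Type*} [Fintype α] [Fintype β] [DecidableEq α] [DecidableEq β]

/-- A reproducing frame for a coherent algebra: `E g k` is the orthogonal projection of the
matrix unit at `(g, k)`. -/
structure Frame (S : Submodule ℂ (Matrix α α ℂ)) (E : α → α → Matrix α α ℂ) : Prop where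
  mem : ∀ g k, E g k ∈ S
  repro : ∀ g k, ∀ W ∈ S, ∑ a, ∑ b, E g k a b * W a b = W g k
  symm : ∀ g k a b, E g k a b = E a b g k
  tr : ∀ g k, (E g k)ᵀ = E k g
  conjTr : ∀ g k, (E g k)ᴴ = E k g
  had : ∀ g k, ∀ W ∈ S, Matrix.hadamard W (E g k) = W g k • E g k
  idem : ∀ g k, ∃ c : ℝ, 0 ≤ c ∧ Matrix.hadamard (E g k) (E g k) = (c : ℂ) • E g k

theorem exists_ind {A : Matrix α α ℂ} {S : Submodule ℂ (Matrix α α ℂ)} (hS : IsCoherentWith A S)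
    (p : α × α) : ∃ N ∈ S, ∀ q : α × α,
      ((∀ X ∈ S, X q.1 q.2 = X p.1 p.2) → N q.1 q.2 = 1) ∧
      ((¬ ∀ X ∈ S, X q.1 q.2 = X p.1 p.2) → N q.1 q.2 = 0) := by
  have step : ∀ s : Finset (α × α), ∃ N ∈ S, N p.1 p.2 = 1 ∧ ∀ q ∈ s,
      (¬ ∀ X ∈ S, X q.1 q.2 = X p.1 p.2) → N q.1 q.2 = 0 := by
    intro s
    induction s using Finset.induction_on with
    | empty => exact ⟨allOnes α, hS.2.2.1, rfl, by simp⟩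
    | insert q s _ ih =>
      obtain ⟨N, hN, hNp, hNs⟩ := ih
      by_cases hq : ∀ X ∈ S, X q.1 q.2 = X p.1 p.2
      · refine ⟨N, hN, hNp, fun r hr hr' => ?_⟩
        rcases Finset.mem_insert.1 hr with rfl | hr
        · exact absurd hq hr'
        · exact hNs r hr hr'
      · push Not at hq
        obtain ⟨X, hX, hne⟩ := hq
        have hne' : X p.1 p.2 - X q.1 q.2 ≠ 0 := sub_ne_zero.2 hne.symm
        refine ⟨Matrix.hadamard N ((X p.1 p.2 - X q.1 q.2)⁻¹ • (X - X q.1 q.2 • allOnes α)),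
          hS.2.2.2.2.2 _ hN _ (S.smul_mem _ (S.sub_mem hX (S.smul_mem _ hS.2.2.1))), ?_, ?_⟩
        · simp [Matrix.hadamard_apply, hNp, allOnes, hne']
        · intro r hr hr'
          rcases Finset.mem_insert.1 hr with rfl | hr
          · simp [Matrix.hadamard_apply, allOnes]
          · simp [Matrix.hadamard_apply, hNs r hr hr']
  obtain ⟨N, hN, hNp, h⟩ := step Finset.univ
  exact ⟨N, hN, fun q => ⟨fun hq => (hq N hN).trans hNp, h q (Finset.mem_univ _)⟩⟩

open Classical in
/-- The class of a pair. -/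
noncomputable def cls (S : Submodule ℂ (Matrix α α ℂ)) (p : α × α) : Finset (α × α) :=
  Finset.univ.filter fun q => ∀ X ∈ S, X q.1 q.2 = X p.1 p.2

theorem mem_cls {S : Submodule ℂ (Matrix α α ℂ)} {p q : α × α} :
    q ∈ cls S p ↔ ∀ X ∈ S, X q.1 q.2 = X p.1 p.2 := by
  simp [cls]

theorem cls_eq {S : Submodule ℂ (Matrix α α ℂ)} {p q : α × α} (h : q ∈ cls S p) :
    cls S q = cls S p := by
  ext r
  rw [mem_cls] at h
  rw [mem_cls, mem_cls]
  exact ⟨fun hr X hX => (hr X hX).trans (h X hX), fun hr X hX => (hr X hX).trans (h X hX).symm⟩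

theorem mem_cls_comm {S : Submodule ℂ (Matrix α α ℂ)} {p q : α × α} :
    q ∈ cls S p ↔ p ∈ cls S q := by
  rw [mem_cls, mem_cls]
  exact ⟨fun h X hX => (h X hX).symm, fun h X hX => (h X hX).symm⟩

theorem mem_cls_swap {A : Matrix α α ℂ} {S : Submodule ℂ (Matrix α α ℂ)}
    (hS : IsCoherentWith A S) {p q : α × α} : q ∈ cls S p → q.swap ∈ cls S p.swap := by
  rw [mem_cls, mem_cls]
  intro h X hX
  have := h _ (hS.2.2.2.2.1 X hX)
  exact star_injective this

theorem cls_card_swap {A : Matrix α α ℂ} {S : Submodule ℂ (Matrix α α ℂ)}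
    (hS : IsCoherentWith A S) (p : α × α) : (cls S p.swap).card = (cls S p).card := by
  refine Finset.card_equiv (Equiv.prodComm α α) fun q => ⟨fun h => ?_, fun h => ?_⟩
  · simpa using mem_cls_swap hS h
  · simpa using mem_cls_swap hS h

theorem exists_frame_s3 {A : Matrix α α ℂ} {S : Submodule ℂ (Matrix α α ℂ)}
    (hS : IsCoherentWith A S) : ∃ E, Frame S E := by
  refine ⟨fun g k => Matrix.of fun a b =>
    if (a, b) ∈ cls S (g, k) then ((cls S (g, k)).card : ℂ)⁻¹ else 0, ?_⟩
  have hcard : ∀ p, ((cls S p).card : ℂ) ≠ 0 := by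
    intro p
    have : p ∈ cls S p := mem_cls.2 fun _ _ => rfl
    exact_mod_cast (Finset.card_pos.2 ⟨p, this⟩).ne'
  have htr : ∀ g k a b, (if (b, a) ∈ cls S (g, k) then ((cls S (g, k)).card : ℂ)⁻¹ else 0)
      = if (a, b) ∈ cls S (k, g) then ((cls S (k, g)).card : ℂ)⁻¹ else 0 := by
    intro g k a b
    have h1 : (b, a) ∈ cls S (g, k) ↔ (a, b) ∈ cls S (k, g) :=
      ⟨fun h => mem_cls_swap hS h, fun h => mem_cls_swap hS h⟩
    have h2 : (cls S (k, g)).card = (cls S (g, k)).card := cls_card_swap hS (g, k)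
    simp only [h1, h2]
  constructor
  · intro g k
    obtain ⟨N, hN, h⟩ := exists_ind hS (g, k)
    convert S.smul_mem ((cls S (g, k)).card : ℂ)⁻¹ hN using 1
    ext a b
    simp only [Matrix.of_apply, Matrix.smul_apply, smul_eq_mul]
    split_ifs with hab
    · rw [(h (a, b)).1 (mem_cls.1 hab), mul_one]
    · rw [(h (a, b)).2 (fun h' => hab (mem_cls.2 h')), mul_zero]
  · intro g k W hW
    have : ∀ a b, (if (a, b) ∈ cls S (g, k) then ((cls S (g, k)).card : ℂ)⁻¹ else 0) * W a b
        = if (a, b) ∈ cls S (g, k) then ((cls S (g, k)).card : ℂ)⁻¹ * W g k else 0 := by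
      intro a b
      split_ifs with hab
      · rw [mem_cls.1 hab W hW]
      · simp
    simp only [Matrix.of_apply, this]
    rw [← Fintype.sum_prod_type' (f := fun a b => if (a, b) ∈ cls S (g, k) then
      ((cls S (g, k)).card : ℂ)⁻¹ * W g k else 0)]
    simp only [Prod.mk.eta, Finset.sum_ite_mem, Finset.univ_inter, Finset.sum_const, nsmul_eq_mul]
    rw [← mul_assoc, mul_inv_cancel₀ (hcard _), one_mul]
  · intro g k a b
    simp only [Matrix.of_apply]
    by_cases h : (a, b) ∈ cls S (g, k)
    · rw [if_pos h, if_pos (mem_cls_comm.1 h), cls_eq h]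
    · rw [if_neg h, if_neg (fun h' => h (mem_cls_comm.1 h'))]
  · intro g k
    ext a b
    simpa only [Matrix.of_apply, Matrix.transpose_apply] using htr g k a b
  · intro g k
    ext a b
    simp only [Matrix.of_apply, Matrix.conjTranspose_apply]
    rw [← htr]
    split_ifs <;> simp
  · intro g k W hW
    ext a b
    simp only [Matrix.of_apply, Matrix.hadamard_apply, Matrix.smul_apply, smul_eq_mul]
    split_ifs with hab
    · rw [mem_cls.1 hab W hW]
    · simp
  · intro g k
    refine ⟨((cls S (g, k)).card : ℝ)⁻¹, by positivity, ?_⟩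
    ext a b
    simp only [Matrix.of_apply, Matrix.hadamard_apply, Matrix.smul_apply, smul_eq_mul]
    split_ifs <;> simp

theorem Frame.expand {S : Submodule ℂ (Matrix α α ℂ)} {E : α → α → Matrix α α ℂ}
    (hE : Frame S E) {X : Matrix α α ℂ} (hX : X ∈ S) : ∑ a, ∑ b, X a b • E a b = X := by
  ext g k
  rw [← hE.repro g k X hX]
  simp only [Matrix.sum_apply, Matrix.smul_apply, smul_eq_mul]
  exact Finset.sum_congr rfl fun a _ => Finset.sum_congr rfl fun b _ => by
    rw [hE.symm g k a b, mul_comm]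

theorem Frame.shift {A : Matrix α α ℂ} {S : Submodule ℂ (Matrix α α ℂ)} (hS : IsCoherentWith A S)
    {E : α → α → Matrix α α ℂ} (hE : Frame S E) {Z : Matrix α α ℂ} (hZ : Z ∈ S) (hZ' : Zᵀ ∈ S)
    (g k : α) : ∑ g', Z g' g • E g' k = Z * E g k := by
  ext a b
  have h1 : (∑ g', Z g' g • E g' k) a b = (Zᵀ * E a b) g k := by
    simp only [Matrix.sum_apply, Matrix.smul_apply, smul_eq_mul, Matrix.mul_apply,
      Matrix.transpose_apply]
    exact Finset.sum_congr rfl fun c _ => by rw [hE.symm]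
  have h2 := hE.repro g k _ (hS.2.2.2.1 _ hZ' _ (hE.mem a b))
  have h3 := hE.repro a b _ (hS.2.2.2.1 _ hZ _ (hE.mem g k))
  rw [h1, ← h2, ← h3]
  simp only [Matrix.mul_apply, Matrix.transpose_apply, Finset.mul_sum]
  calc _ = ∑ v, ∑ u, ∑ c, E g k u v * (Z c u * E a b c v) := Finset.sum_comm
    _ = ∑ v, ∑ c, ∑ u, E g k u v * (Z c u * E a b c v) :=
        Finset.sum_congr rfl fun v _ => Finset.sum_comm
    _ = ∑ c, ∑ v, ∑ u, E g k u v * (Z c u * E a b c v) := Finset.sum_comm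
    _ = _ := Finset.sum_congr rfl fun v _ => Finset.sum_congr rfl fun c _ =>
        Finset.sum_congr rfl fun u _ => by ring

theorem Frame.conv {A : Matrix α α ℂ} {S : Submodule ℂ (Matrix α α ℂ)} (hS : IsCoherentWith A S)
    {E : α → α → Matrix α α ℂ} (hE : Frame S E) (g k : α) :
    ∑ g', E g g' * E g' k = (∑ a, ∑ b, E a b * (E a b)ᴴ) * E g k := by
  have h1 : ∀ g', E g g' * E g' k = ∑ a, ∑ b, E a b * (E b a g' g • E g' k) := by
    intro g'
    conv_lhs => rw [← hE.expand (hE.mem g g')]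
    simp only [Finset.sum_mul]
    refine Finset.sum_congr rfl fun a _ => Finset.sum_congr rfl fun b _ => ?_
    rw [← hE.tr a b, Matrix.transpose_apply, hE.symm a b, Matrix.smul_mul, Matrix.mul_smul]
  simp only [h1, Finset.sum_mul]
  rw [Finset.sum_comm]
  refine Finset.sum_congr rfl fun a _ => ?_
  rw [Finset.sum_comm]
  refine Finset.sum_congr rfl fun b _ => ?_
  rw [← Finset.mul_sum, hE.shift hS (hE.mem b a) (by rw [hE.tr]; exact hE.mem _ _), hE.conjTr,
    Matrix.mul_assoc]

open scoped ComplexOrder in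
theorem psd_of_sq {n : Type*} [Fintype n] [DecidableEq n] {N K : Matrix n n ℂ}
    (hN : N.IsHermitian) (hK : K.PosSemidef) (h : N * N = K * N) : N.PosSemidef := by
  rw [hN.posSemidef_iff_eigenvalues_nonneg]
  intro i
  by_contra hneg
  simp only [Pi.zero_apply, not_le] at hneg
  have hv := hN.mulVec_eigenvectorBasis i
  set l := hN.eigenvalues i with hl
  set v : n → ℂ := ⇑(hN.eigenvectorBasis i) with hvdef
  have h1 : N *ᵥ (N *ᵥ v) = K *ᵥ (N *ᵥ v) := by
    rw [Matrix.mulVec_mulVec, Matrix.mulVec_mulVec, h]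
  rw [hv, Matrix.mulVec_smul, Matrix.mulVec_smul, hv] at h1
  have h2 : l • v = K *ᵥ v := smul_right_injective _ hneg.ne h1
  have h3 := hK.dotProduct_mulVec_nonneg v
  rw [← h2, ← hv] at h3
  have h4 := hN.eigenvalues_eq i
  have h5 : 0 ≤ l := by
    rw [hl, h4]
    exact (Complex.le_def.1 h3).1
  linarith

theorem equiv_to_dnn (G : SimpleGraph α) (H : SimpleGraph β)
    [DecidableRel G.Adj] [DecidableRel H.Adj] (hGH : GraphEquivalent G H) :
    ∃ M, IsIsoMatrix G H M ∧ M.PosSemidef ∧ ∀ p q, 0 ≤ M p q := by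
  obtain ⟨Φ, hbij, hstar, hmul, hhad, hadj⟩ := hGH
  have hS := cohAlgebra_coherent (G.adjMatrix ℂ)
  have hS' := cohAlgebra_coherent (H.adjMatrix ℂ)
  set S := cohAlgebra (G.adjMatrix ℂ)
  set S' := cohAlgebra (H.adjMatrix ℂ)
  obtain ⟨E, hE⟩ := exists_frame_s3 hS
  have hΦ1 : Φ 1 = 1 := by
    obtain ⟨X, hX, hX1⟩ := hbij.surjOn hS'.1
    have := hmul 1 hS.1 X hX
    rw [hX1, Matrix.mul_one, Matrix.one_mul, hX1] at this
    exact this.symm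
  have hΦJ : Φ (allOnes α) = allOnes β := by
    obtain ⟨X, hX, hX1⟩ := hbij.surjOn hS'.2.2.1
    have := hhad (allOnes α) hS.2.2.1 X hX
    have e : ∀ (V : Type _) (Y : Matrix V V ℂ), Matrix.hadamard (allOnes V) Y = Y := by
      intro V Y
      ext a b
      simp [allOnes]
    have e' : ∀ Y : Matrix β β ℂ, Matrix.hadamard Y (allOnes β) = Y := by
      intro Y
      ext a b
      simp [allOnes]
    rw [e, hX1, e'] at this
    exact this.symm
  have sandwich : ∀ {V : Type _} [Fintype V] (X : Matrix V V ℂ) (a b : V),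
      (allOnes V * X * allOnes V) a b = ∑ c, ∑ d, X c d := by
    intro V _ X a b
    simp only [Matrix.mul_apply, allOnes, Matrix.of_apply, one_mul, mul_one]
    exact Finset.sum_comm
  have sandwich' : ∀ {V : Type _} [Fintype V] (X : Matrix V V ℂ) (a b : V),
      (allOnes V * X * allOnes V) a b = ∑ c, ∑ d, X c d := by
    intro V _ X a b
    simp only [Matrix.mul_apply, allOnes, Matrix.of_apply, one_mul, mul_one]
    exact Finset.sum_comm
  have hsum : ∀ X ∈ S, α → ∑ h, ∑ h', (Φ X) h h' = ∑ g, ∑ g', X g g' := by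
    intro X hX g
    have hne : Nonempty β := by
      by_contra hb
      rw [not_nonempty_iff] at hb
      have h0 : Φ (allOnes α) = Φ 0 := by
        ext h
        exact (hb.false h).elim
      have := congrFun (congrFun (hbij.injOn hS.2.2.1 S.zero_mem h0) g) g
      simp [allOnes] at this
    obtain ⟨h⟩ := hne
    have e1 : allOnes α * X * allOnes α = (∑ g, ∑ g', X g g') • allOnes α := by
      ext a b
      rw [sandwich]
      simp [allOnes]
    have e2 := hmul _ (hS.2.2.2.1 _ hS.2.2.1 _ hX) _ hS.2.2.1
    rw [hmul _ hS.2.2.1 _ hX, e1, map_smul, hΦJ] at e2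
    have := congrFun (congrFun e2 h) h
    rw [sandwich'] at this
    rw [← this]
    simp [allOnes]
  -- entries of the Choi matrix
  have hent : ∀ g g' h h', ∃ x : ℝ, 0 ≤ x ∧ (Φ (E g g')) h h' = (x : ℂ) := by
    intro g g' h h'
    obtain ⟨c, hc, hcE⟩ := hE.idem g g'
    have := hhad _ (hE.mem g g') _ (hE.mem g g')
    rw [hcE, map_smul] at this
    have := congrFun (congrFun this h) h'
    simp only [Matrix.smul_apply, smul_eq_mul, Matrix.hadamard_apply] at this
    by_cases h0 : (Φ (E g g')) h h' = 0
    · exact ⟨0, le_rfl, by simp [h0]⟩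
    · exact ⟨c, hc, (mul_right_cancel₀ h0 this).symm⟩
  choose m hm0 hm using hent
  let M : Matrix (α × β) (α × β) ℝ := Matrix.of fun p q => m p.1 q.1 p.2 q.2
  have hag : ∀ X ∈ S, ∀ g g' h h', m g g' h h' ≠ 0 → X g g' = (Φ X) h h' := by
    intro X hX g g' h h' h0
    have := hhad X hX _ (hE.mem g g')
    rw [hE.had g g' X hX, map_smul] at this
    have := congrFun (congrFun this h) h'
    simp only [Matrix.smul_apply, smul_eq_mul, Matrix.hadamard_apply, hm] at this
    exact mul_right_cancel₀ (by exact_mod_cast h0) this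
  refine ⟨M, ⟨?_, ?_, ?_⟩, ?_, fun p q => hm0 _ _ _ _⟩
  · intro g g'
    have h1 := hsum _ (hE.mem g g') g
    have h2 := hE.repro g g' _ hS.2.2.1
    simp only [allOnes, Matrix.of_apply, mul_one] at h2
    rw [h2] at h1
    simp only [hm] at h1
    exact_mod_cast h1
  · intro h h'
    have h1 := congrArg Φ (hE.expand hS.2.2.1)
    rw [hΦJ] at h1
    simp only [map_sum, allOnes, Matrix.of_apply, one_smul] at h1
    have := congrFun (congrFun h1 h) h'
    simp only [Matrix.sum_apply, hm, Matrix.of_apply] at this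
    exact_mod_cast this
  · intro g g' h h' hr
    by_contra h0
    apply hr
    have a1 := hag _ hS.1 g g' h h' h0
    have a2 := hag _ hS.2.1 g g' h h' h0
    rw [hΦ1, Matrix.one_apply, Matrix.one_apply] at a1
    rw [hadj, SimpleGraph.adjMatrix_apply, SimpleGraph.adjMatrix_apply] at a2
    constructor
    · by_cases h1 : g = g' <;> by_cases h2 : h = h' <;> simp_all
    · by_cases h1 : G.Adj g g' <;> by_cases h2 : H.Adj h h' <;> simp_all
  · let N : Matrix (α × β) (α × β) ℂ := Matrix.of fun p q => Φ (E p.1 q.1) p.2 q.2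
    have hNM : ∀ p q, N p q = (M p q : ℂ) := fun p q => hm _ _ _ _
    have hNh : N.IsHermitian := by
      ext p q
      have := congrFun (congrFun (hstar _ (hE.mem q.1 p.1)) p.2) q.2
      rw [hE.conjTr] at this
      exact this.symm
    have hC : (∑ a, ∑ b, E a b * (E a b)ᴴ) ∈ S := S.sum_mem fun a _ => S.sum_mem fun b _ =>
      hS.2.2.2.1 _ (hE.mem a b) _ (hS.2.2.2.2.1 _ (hE.mem a b))
    have hsq : N * N = ((1 : Matrix α α ℂ) ⊗ₖ Φ (∑ a, ∑ b, E a b * (E a b)ᴴ)) * N := by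
      ext ⟨g, h⟩ ⟨k, l⟩
      have h1 := congrArg Φ (hE.conv hS g k)
      rw [hmul _ hC _ (hE.mem g k), map_sum] at h1
      have h2 := congrFun (congrFun h1 h) l
      simp only [hmul _ (hE.mem _ _) _ (hE.mem _ _), Matrix.sum_apply] at h2
      rw [Matrix.mul_apply, Matrix.mul_apply, Fintype.sum_prod_type, Fintype.sum_prod_type]
      simp only [N, Matrix.of_apply, Matrix.kroneckerMap_apply, Matrix.one_apply]
      simp only [Matrix.mul_apply] at h2
      rw [h2]
      simp
    open scoped ComplexOrder in
    have hK : ((1 : Matrix α α ℂ) ⊗ₖ Φ (∑ a, ∑ b, E a b * (E a b)ᴴ)).PosSemidef := by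
      refine Matrix.PosSemidef.kronecker Matrix.PosSemidef.one ?_
      simp only [map_sum]
      refine Matrix.posSemidef_sum _ fun a _ => Matrix.posSemidef_sum _ fun b _ => ?_
      rw [hmul _ (hE.mem a b) _ (hS.2.2.2.2.1 _ (hE.mem a b)), hstar _ (hE.mem a b)]
      exact Matrix.posSemidef_self_mul_conjTranspose _
    have hN := psd_of_sq hNh hK hsq
    refine Matrix.PosSemidef.of_dotProduct_mulVec_nonneg ?_ fun x => ?_
    · ext p q
      have := hNh.apply p q
      rw [hNM, hNM] at this
      simpa using this
    · have := hN.dotProduct_mulVec_nonneg (fun i => (x i : ℂ))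
      have e : star (fun i => (x i : ℂ)) ⬝ᵥ (N *ᵥ fun i => (x i : ℂ))
          = ((star x ⬝ᵥ (M *ᵥ x) : ℝ) : ℂ) := by
        simp [dotProduct, Matrix.mulVec, hNM]
      rw [e] at this
      exact_mod_cast this

end Aux2

/-- Two graphs are equivalent iff they are `DNN`-isomorphic. -/
theorem equivalent_iff_dnn_iso {α β : Type*}
    [Fintype α] [Fintype β] [DecidableEq α] [DecidableEq β]
    (G : SimpleGraph α) (H : SimpleGraph β)
    [DecidableRel G.Adj] [DecidableRel H.Adj] :
    GraphEquivalent G H ↔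
      ∃ M, IsIsoMatrix G H M ∧ M.PosSemidef ∧ ∀ p q, 0 ≤ M p q := by
  constructor
  · exact equiv_to_dnn G H
  · rintro ⟨M, h1, h2, h3⟩
    exact dnn_to_equiv G H M h1 h2 h3
end

section
/- Let G and H be finite simple graphs. Then G ≅_{S+} H if and only if the first level of the Lasserre hierarchy for graph isomorphism is feasible, i.e., there exists a real symmetric positive semidefinite matrix N with rows and columns indexed by {∗} ∪ (V_G × V_H) such that: N_{∗,∗} = 1; N_{p,p} = N_{∗,p} for every p ∈ V_G × V_H; Σ_{h∈V_H} N_{∗,(g,h)} = 1 for every g ∈ V_G; Σ_{g∈V_G} N_{∗,(g,h)} = 1 for every h ∈ V_H; and N_{(g,h),(g',h')} = 0 whenever rel(g,g') ≠ rel(h,h'). Furthermore, G ≅_{DNN} H if and only if such a matrix N exists with all entries nonnegative. -/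
open Matrix BigOperators

/-- Feasibility of the first level of the Lasserre hierarchy for isomorphism of `G`
and `H`: a real symmetric psd matrix indexed by `{∗} ∪ (V_G × V_H)` (here `none = ∗`)
with the moment constraints. -/
def LasserreLevelOne {α β : Type*} [Fintype α] [Fintype β]
    (G : SimpleGraph α) (H : SimpleGraph β)
    (N : Matrix (Option (α × β)) (Option (α × β)) ℝ) : Prop :=
  N.PosSemidef ∧
  N none none = 1 ∧
  (∀ p : α × β, N (some p) (some p) = N none (some p)) ∧
  (∀ g : α, ∑ h : β, N none (some (g, h)) = 1) ∧
  (∀ h : β, ∑ g : α, N none (some (g, h)) = 1) ∧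
  (∀ g g' h h', ¬ relEq G H g g' h h' → N (some (g, h)) (some (g', h')) = 0)

/-- If two sums of Gram vectors are unit vectors with inner product one, they agree. -/
theorem psd_sum_eq {ι κ l : Type*} [Fintype ι] [Fintype κ] [Fintype l]
    {N : Matrix ι ι ℝ} (hN : N.PosSemidef) (u : κ → ι) (v : l → ι)
    (huu : ∑ i, ∑ j, N (u i) (u j) = 1) (huv : ∑ i, ∑ j, N (u i) (v j) = 1)
    (hvv : ∑ i, ∑ j, N (v i) (v j) = 1) (q : ι) :
    ∑ i, N (u i) q = ∑ j, N (v j) q := by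
  classical
  have hs : ∀ a b, N a b = N b a := fun a b => by
    have := hN.1.apply b a
    simpa using this
  let x : ι → ℝ := (∑ i, Pi.single (u i) 1) - ∑ j, Pi.single (v j) 1
  have hx : ∀ p, (N *ᵥ x) p = ∑ i, N p (u i) - ∑ j, N p (v j) := by
    intro p
    simp [x, Matrix.mulVec_sub, Matrix.mulVec_sum, Finset.sum_apply]
  have hvu : ∑ j, ∑ i, N (v j) (u i) = 1 := by
    rw [Finset.sum_comm, ← huv]
    exact Finset.sum_congr rfl fun i _ => Finset.sum_congr rfl fun j _ => hs _ _
  have h0 : star x ⬝ᵥ (N *ᵥ x) = 0 := by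
    have : star x = x := by simp
    rw [this]
    have : ∀ y : ι → ℝ, x ⬝ᵥ y = ∑ i, y (u i) - ∑ j, y (v j) := by
      intro y
      simp [x, sub_dotProduct, sum_dotProduct]
    rw [this]
    simp only [hx, Finset.sum_sub_distrib, huu, huv, hvv, hvu]
    norm_num
  have h1 := (hN.dotProduct_mulVec_zero_iff x).1 h0
  have h2 := hx q
  rw [h1] at h2
  simp only [Pi.zero_apply] at h2
  simp only [hs _ q]
  linarith

theorem iso_to_lasserre {α β : Type*} [Fintype α] [Fintype β]
    (G : SimpleGraph α) (H : SimpleGraph β) (M : Matrix (α × β) (α × β) ℝ)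
    (hM : IsIsoMatrix G H M) (hp : M.PosSemidef) :
    ∃ N, LasserreLevelOne G H N ∧ ((∀ p q, 0 ≤ M p q) → ∀ x y, 0 ≤ N x y) := by
  classical
  obtain ⟨h1, h2, h3⟩ := hM
  have hg : ∀ g h h', h' ≠ h → M (g, h) (g, h') = 0 := fun g h h' hne =>
    h3 _ _ _ _ fun hr => hne (hr.1.1 rfl).symm
  have hh : ∀ g g' h, g' ≠ g → M (g, h) (g', h) = 0 := fun g g' h hne =>
    h3 _ _ _ _ fun hr => hne (hr.1.2 rfl).symm
  have dg : ∀ g, ∑ h, M (g, h) (g, h) = 1 := fun g => by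
    rw [← h1 g g]
    exact Finset.sum_congr rfl fun h _ => (Fintype.sum_eq_single h fun h' hne => hg g h h' hne).symm
  have dh : ∀ h, ∑ g, M (g, h) (g, h) = 1 := fun h => by
    rw [← h2 h h]
    exact Finset.sum_congr rfl fun g _ => (Fintype.sum_eq_single g fun g' hne => hh g g' h hne).symm
  rcases isEmpty_or_nonempty α with he | ⟨⟨g0⟩⟩
  · have hb : IsEmpty β := ⟨fun h => by simpa using dh h⟩
    refine ⟨1, ⟨Matrix.PosSemidef.one, by simp, fun p => isEmptyElim p.1, fun g => isEmptyElim g,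
      fun h => isEmptyElim h, fun g => isEmptyElim g⟩, fun _ x y => ?_⟩
    rw [Matrix.one_apply]; split_ifs <;> norm_num
  let P : Matrix (Option (α × β)) (α × β) ℝ := fun x q =>
    match x with
    | none => if q.1 = g0 then 1 else 0
    | some p => if q = p then 1 else 0
  have key : ∀ p : α × β, ∑ h, M (g0, h) p = M p p := by
    rintro ⟨g, h⟩
    rw [psd_sum_eq hp (fun h => (g0, h)) (fun h => (g, h)) (h1 _ _) (h1 _ _) (h1 _ _)]
    exact Fintype.sum_eq_single h fun h' hne => hg g h' h hne.symm
  have hs : ∀ a b, M a b = M b a := fun a b => by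
    have := hp.1.apply b a
    simpa using this
  let N := P * M * Pᴴ
  have hPn : ∀ f : α × β → ℝ, ∑ q, P none q * f q = ∑ h, f (g0, h) := by
    intro f
    rw [Fintype.sum_prod_type]
    rw [Fintype.sum_eq_single g0 (fun g hne => by simp [P, hne])]
    simp [P]
  have hPs : ∀ (p : α × β) (f : α × β → ℝ), ∑ q, P (some p) q * f q = f p := by
    intro p f
    simp [P]
  have hNe : ∀ x y, N x y = ∑ j, P y j * ∑ i, P x i * M i j := by
    intro x y
    simp only [N, Matrix.mul_apply (M := P * M), Matrix.mul_apply (M := P) (N := M),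
      Matrix.conjTranspose_apply, star_trivial]
    exact Finset.sum_congr rfl fun j _ => mul_comm _ _
  have e1 : N none none = 1 := by
    rw [← h1 g0 g0, Finset.sum_comm, hNe]
    simp only [hPn]
  have e2 : ∀ p, N none (some p) = M p p := by
    intro p
    rw [← key p, hNe]
    simp only [hPn, hPs]
  have e3 : ∀ p, N (some p) none = M p p := by
    intro p
    rw [← key p, hNe]
    simp only [hPn, hPs, hs _ p]
  have e4 : ∀ p q, N (some p) (some q) = M p q := by
    intro p q
    rw [hNe]
    simp only [hPs]
  refine ⟨N, ⟨hp.mul_mul_conjTranspose_same P, e1, fun p => by rw [e4, e2], ?_, ?_, ?_⟩, ?_⟩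
  · intro g; simp only [e2, dg]
  · intro h; simp only [e2, dh]
  · intro g g' h h' hr; rw [e4]; exact h3 _ _ _ _ hr
  · rintro hn (_ | p) (_ | q)
    · rw [e1]; norm_num
    · rw [e2]; exact hn _ _
    · rw [e3]; exact hn _ _
    · rw [e4]; exact hn _ _

theorem lasserre_to_iso {α β : Type*} [Fintype α] [Fintype β]
    (G : SimpleGraph α) (H : SimpleGraph β) (N : Matrix (Option (α × β)) (Option (α × β)) ℝ)
    (hN : LasserreLevelOne G H N) :
    IsIsoMatrix G H (N.submatrix some some) ∧ (N.submatrix some some).PosSemidef := by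
  classical
  obtain ⟨hp, h0, hd, h1, h2, h3⟩ := hN
  have hs : ∀ a b, N a b = N b a := fun a b => by
    have := hp.1.apply b a
    simpa using this
  have k1 : ∀ g q, ∑ h, N (some (g, h)) q = N none q := fun g q => by
    have := psd_sum_eq hp (fun h : β => some (g, h)) (fun _ : Unit => none) ?_ ?_ ?_ q
    · simpa using this
    · rw [← h1 g]
      refine Finset.sum_congr rfl fun h _ => ?_
      rw [← hd]
      exact Fintype.sum_eq_single h fun h' hne => h3 _ _ _ _ fun hr => hne (hr.1.1 rfl).symm
    · simpa [hs _ none] using h1 g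
    · simpa using h0
  have k2 : ∀ h q, ∑ g, N (some (g, h)) q = N none q := fun h q => by
    have := psd_sum_eq hp (fun g : α => some (g, h)) (fun _ : Unit => none) ?_ ?_ ?_ q
    · simpa using this
    · rw [← h2 h]
      refine Finset.sum_congr rfl fun g _ => ?_
      rw [← hd]
      exact Fintype.sum_eq_single g fun g' hne => h3 _ _ _ _ fun hr => hne (hr.1.2 rfl).symm
    · simpa [hs _ none] using h2 h
    · simpa using h0
  refine ⟨⟨?_, ?_, fun g g' h h' hr => h3 _ _ _ _ hr⟩, hp.submatrix some⟩
  · intro g g'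
    rw [Finset.sum_comm]
    simp only [Matrix.submatrix_apply, k1, h1]
  · intro h h'
    rw [Finset.sum_comm]
    simp only [Matrix.submatrix_apply, k2, h2]

/-- `G ≅_{S+} H` iff the first level of the Lasserre hierarchy for graph isomorphism
is feasible; and `G ≅_{DNN} H` iff it is feasible with nonnegative entries. -/
theorem sPlus_dnn_iso_iff_lasserre {α β : Type*} [Fintype α] [Fintype β]
    (G : SimpleGraph α) (H : SimpleGraph β) :
    ((∃ M, IsIsoMatrix G H M ∧ M.PosSemidef) ↔
      ∃ N, LasserreLevelOne G H N) ∧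
    ((∃ M, IsIsoMatrix G H M ∧ M.PosSemidef ∧ ∀ p q, 0 ≤ M p q) ↔
      ∃ N, LasserreLevelOne G H N ∧ ∀ x y, 0 ≤ N x y) := by
  refine ⟨⟨?_, ?_⟩, ⟨?_, ?_⟩⟩
  · rintro ⟨M, hM, hp⟩
    obtain ⟨N, hN, _⟩ := iso_to_lasserre G H M hM hp
    exact ⟨N, hN⟩
  · rintro ⟨N, hN⟩
    exact ⟨_, lasserre_to_iso G H N hN⟩
  · rintro ⟨M, hM, hp, hn⟩
    obtain ⟨N, hN, h⟩ := iso_to_lasserre G H M hM hp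
    exact ⟨N, hN, h hn⟩
  · rintro ⟨N, hN, hn⟩
    have h := lasserre_to_iso G H N hN
    exact ⟨_, h.1, h.2, fun p q => hn _ _⟩
end

section
/- There exist finite simple graphs G and H on 16 vertices such that G ≅_{S+} H but G is not DNN-isomorphic to H; that is, there exists an S+-isomorphism matrix for G to H but no DNN-isomorphism matrix for G to H. (One may take G to be the 4-dimensional hypercube graph and H the Hoffman graph.) -/
open Matrix BigOperators

namespace Hoff

/-- Neighbourhoods (bit masks) in the hypercube. -/
def nG (i : ℕ) : ℕ := [278, 553, 1097, 2182, 4193, 8338, 16532, 32872, 5633, 10498, 18692, 34312,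
  24848, 37408, 37952, 26752].getD i 0

/-- Neighbourhoods (bit masks) in the Hoffman graph. -/
def nH (i : ℕ) : ℕ := [278, 5185, 4641, 2448, 1545, 8580, 16770, 32872, 105, 10260, 18450, 34312,
  24582, 37408, 37952, 26752].getD i 0

/-- Colour class bit mask. -/
def cls (i : ℕ) : ℕ := if Nat.testBit 38505 i then 38505 else 27030

def pc (n : ℕ) : ℤ := (List.range 16).foldl (fun s k => bif n.testBit k then s + 1 else s) 0

/-- adjacency matrix -/
def mA (n : ℕ → ℕ) : Fin 16 → Fin 16 → ℤ := fun i j => bif (n i).testBit j then 1 else 0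
/-- its square -/
def mQ (n : ℕ → ℕ) : Fin 16 → Fin 16 → ℤ := fun i j => pc (n i &&& n j)
def mS : Fin 16 → Fin 16 → ℤ := fun i j => bif (cls i).testBit j then 1 else 0
def mB : Fin 16 → Fin 16 → ℤ := fun i j => bif (cls i).testBit j then 0 else 1

def X (n : ℕ → ℕ) (k : Fin 5) : Fin 16 → Fin 16 → ℤ := fun i j =>
  match k with
  | 0 => 1
  | 1 => mS i j - mB i j
  | 2 => mQ n i j - 2 * mS i j + 2 * mA n i j - mB i j
  | 3 => mQ n i j - 2 * mS i j - 2 * mA n i j + mB i j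
  | 4 => (bif (i : ℕ).beq j then 8 else 0) + 3 * mS i j - 2 * mQ n i j

def cc : Fin 5 → ℤ := ![16, 16, 8, 8, 8]

/-- sums over `Fin 16` as list folds, for evaluation -/
def lsum (f : Fin 16 → ℤ) : ℤ := f 0 + (f 1 + (f 2 + (f 3 + (f 4 + (f 5 + (f 6 + (f 7 + (f 8 +
  (f 9 + (f 10 + (f 11 + (f 12 + (f 13 + (f 14 + f 15))))))))))))))

lemma lsum_eq (f : Fin 16 → ℤ) : ∑ i, f i = lsum f := by
  simp only [Fin.sum_univ_succ, lsum]
  simp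

structure Good (n : ℕ → ℕ) : Prop where
  symmA : ∀ i j, mA n i j = mA n j i
  diagA : ∀ i, mA n i i = 0
  sq : ∀ i j, lsum (fun k => mA n i k * mA n k j) = mQ n i j
  symmX : ∀ k i j, X n k i j = X n k j i
  idem : ∀ k i j, lsum (fun l => X n k i l * X n k l j) = cc k * X n k i j
  sumX : ∀ k, lsum (fun i => lsum fun j => X n k i j) = if k = 0 then 256 else 0
  diag : ∀ i, X n 1 i i = 1 ∧ X n 2 i i = 2 ∧ X n 3 i i = 2 ∧ X n 4 i i = 3
  adj : ∀ i j, mA n i j = 1 → X n 1 i j = -1 ∧ X n 2 i j = 1 ∧ X n 3 i j = -1 ∧ X n 4 i j = 0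
  ndiag : ∀ i j, i ≠ j → 1 + X n 1 i j + 2 * X n 2 i j + 2 * X n 3 i j + 2 * X n 4 i j = 0
  nadj : ∀ i j, mA n i j ≠ 1 → 1 - X n 1 i j + X n 2 i j - X n 3 i j = 0
  sumA : lsum (fun i => lsum fun j => mA n i j * mA n i j) = 64
  sumQ : lsum (fun i => lsum fun j => mQ n i j * mQ n i j) = 640

set_option maxRecDepth 100000 in
lemma goodG : Good nG := by
  constructor <;> decide +kernel

set_option maxRecDepth 100000 in
lemma goodH : Good nH := by
  constructor <;> decide +kernel

lemma QG : ∀ i j, mQ nG i j = 0 ∨ mQ nG i j = 2 ∨ mQ nG i j = 4 := by decide +kernel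
lemma QH : mQ nH 1 7 = 1 := by decide +kernel

/-- The graph with the given neighbourhoods. -/
def gr (n : ℕ → ℕ) (hn : Good n) : SimpleGraph (Fin 16) where
  Adj i j := mA n i j = 1
  symm := ⟨fun i j h => by rw [hn.symmA]; exact h⟩
  loopless := ⟨fun i h => by rw [hn.diagA] at h; exact absurd h (by norm_num)⟩

/-- Real version of `X`. -/
noncomputable def XR (n : ℕ → ℕ) (k : Fin 5) : Matrix (Fin 16) (Fin 16) ℝ :=
  Matrix.of fun i j => (X n k i j : ℝ)

lemma cc_pos : ∀ k, 0 < cc k := by decide +kernel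

lemma XR_psd {n : ℕ → ℕ} (hn : Good n) (k : Fin 5) : (XR n k).PosSemidef := by
  have h1 : XR n k = ((cc k : ℝ)⁻¹) • ((XR n k)ᴴ * XR n k) := by
    ext i j
    have h := hn.idem k i j
    rw [← lsum_eq] at h
    have h' : ∑ l, (X n k i l : ℝ) * X n k l j = cc k * X n k i j := by exact_mod_cast h
    have hc : (0 : ℝ) < cc k := by exact_mod_cast cc_pos k
    have h2 : ((XR n k)ᴴ * XR n k) i j = cc k * X n k i j := by
      rw [← h', Matrix.mul_apply]
      refine Finset.sum_congr rfl fun l _ => ?_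
      simp [XR, hn.symmX k l i]
    rw [Matrix.smul_apply, h2]
    simp [XR, hc.ne']
  rw [h1]
  refine Matrix.PosSemidef.smul (posSemidef_conjTranspose_mul_self _) ?_
  have hc : (0 : ℝ) < cc k := by exact_mod_cast cc_pos k
  positivity

open scoped Kronecker in
/-- The `S+` isomorphism matrix. -/
noncomputable def MM (n m : ℕ → ℕ) : Matrix (Fin 16 × Fin 16) (Fin 16 × Fin 16) ℝ :=
  (1 / 768 : ℝ) • ((3 : ℝ) • (XR n 0 ⊗ₖ XR m 0) + (3 : ℝ) • (XR n 1 ⊗ₖ XR m 1)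
    + (3 : ℝ) • (XR n 2 ⊗ₖ XR m 2) + (3 : ℝ) • (XR n 3 ⊗ₖ XR m 3)
    + (2 : ℝ) • (XR n 4 ⊗ₖ XR m 4))

lemma MM_apply (n m : ℕ → ℕ) (g h g' h' : Fin 16) : MM n m (g, h) (g', h') =
    (1 / 768 : ℝ) * ((3 + 3 * X n 1 g g' * X m 1 h h' + 3 * X n 2 g g' * X m 2 h h'
      + 3 * X n 3 g g' * X m 3 h h' + 2 * X n 4 g g' * X m 4 h h' : ℤ) : ℝ) := by
  have h0 : ∀ n i j, X n 0 i j = 1 := fun _ _ _ => rfl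
  simp [MM, XR, h0]
  ring

lemma MM_psd {n m : ℕ → ℕ} (hn : Good n) (hm : Good m) : (MM n m).PosSemidef := by
  have key : ∀ (c : ℝ) (_ : 0 ≤ c) (k : Fin 5), (c • Matrix.kronecker (XR n k) (XR m k)).PosSemidef :=
    fun c hc k => ((XR_psd hn k).kronecker (XR_psd hm k)).smul hc
  unfold MM
  refine Matrix.PosSemidef.smul ?_ (by norm_num)
  refine Matrix.PosSemidef.add (Matrix.PosSemidef.add (Matrix.PosSemidef.add
    (Matrix.PosSemidef.add ?_ ?_) ?_) ?_) ?_
  all_goals exact key _ (by norm_num) _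

lemma sum_aux {m : ℕ → ℕ} (hm : Good m) (a b c d : ℤ) :
    ∑ h, ∑ h', (3 + 3 * a * X m 1 h h' + 3 * b * X m 2 h h'
      + 3 * c * X m 3 h h' + 2 * d * X m 4 h h' : ℤ) = 768 := by
  have e : ∀ k, ∑ h, ∑ h', X m k h h' = if k = 0 then 256 else 0 := by
    intro k
    rw [← hm.sumX k, lsum_eq]
    simp only [lsum_eq]
  simp only [Finset.sum_add_distrib, ← Finset.mul_sum, e]
  simp

lemma MM_iso {n m : ℕ → ℕ} (hn : Good n) (hm : Good m) :
    IsIsoMatrix (gr n hn) (gr m hm) (MM n m) := by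
  refine ⟨fun g g' => ?_, fun h h' => ?_, fun g g' h h' hr => ?_⟩
  · simp only [MM_apply, ← Finset.mul_sum]
    have := sum_aux hm (X n 1 g g') (X n 2 g g') (X n 3 g g') (X n 4 g g')
    have h2 := congrArg (Int.cast : ℤ → ℝ) this
    rw [Int.cast_sum] at h2
    simp only [Int.cast_sum] at h2
    rw [h2]; norm_num
  · simp only [MM_apply, ← Finset.mul_sum]
    have := sum_aux hn (X m 1 h h') (X m 2 h h') (X m 3 h h') (X m 4 h h')
    have h2 := congrArg (Int.cast : ℤ → ℝ) this
    rw [Int.cast_sum] at h2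
    simp only [Int.cast_sum] at h2
    have e : ∀ g g', (3 + 3 * X n 1 g g' * X m 1 h h' + 3 * X n 2 g g' * X m 2 h h'
      + 3 * X n 3 g g' * X m 3 h h' + 2 * X n 4 g g' * X m 4 h h' : ℤ) =
      (3 + 3 * X m 1 h h' * X n 1 g g' + 3 * X m 2 h h' * X n 2 g g'
      + 3 * X m 3 h h' * X n 3 g g' + 2 * X m 4 h h' * X n 4 g g' : ℤ) := fun g g' => by ring
    simp only [e]
    rw [h2]; norm_num
  · rw [MM_apply]
    suffices (3 + 3 * X n 1 g g' * X m 1 h h' + 3 * X n 2 g g' * X m 2 h h'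
      + 3 * X n 3 g g' * X m 3 h h' + 2 * X n 4 g g' * X m 4 h h' : ℤ) = 0 by
      rw [this]; simp
    by_cases e1 : g = g' ↔ h = h'
    · have e2 : ¬ (mA n g g' = 1 ↔ mA m h h' = 1) := fun hh => hr ⟨e1, hh⟩
      by_cases a1 : mA n g g' = 1
      · have a2 : mA m h h' ≠ 1 := by tauto
        obtain ⟨p1, p2, p3, p4⟩ := hn.adj _ _ a1
        have := hm.nadj _ _ a2
        rw [p1, p2, p3, p4]; linarith
      · have a2 : mA m h h' = 1 := by tauto
        obtain ⟨p1, p2, p3, p4⟩ := hm.adj _ _ a2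
        have := hn.nadj _ _ a1
        rw [p1, p2, p3, p4]; linarith
    · by_cases a1 : g = g'
      · have a2 : h ≠ h' := by tauto
        subst a1
        obtain ⟨p1, p2, p3, p4⟩ := hn.diag g
        have := hm.ndiag _ _ a2
        rw [p1, p2, p3, p4]; linarith
      · have a2 : h = h' := by tauto
        subst a2
        obtain ⟨p1, p2, p3, p4⟩ := hm.diag h
        have := hn.ndiag _ _ a1
        rw [p1, p2, p3, p4]; linarith

/-- Real adjacency matrix. -/
noncomputable def AR (n : ℕ → ℕ) : Matrix (Fin 16) (Fin 16) ℝ :=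
  Matrix.of fun i j => (mA n i j : ℝ)

lemma AR_symm {n : ℕ → ℕ} (hn : Good n) : (AR n)ᵀ = AR n := by
  ext i j; simp [AR, hn.symmA j i]

lemma AR_sq {n : ℕ → ℕ} (hn : Good n) (i j : Fin 16) : (AR n * AR n) i j = mQ n i j := by
  rw [← hn.sq, ← lsum_eq, Matrix.mul_apply]
  simp [AR]

lemma AR_tr {n : ℕ → ℕ} (hn : Good n) : (AR n * AR n).trace = 64 := by
  have h := hn.sumA
  simp only [← lsum_eq] at h
  have h2 : ∑ i, ∑ j, (mA n i j : ℝ) * mA n i j = 64 := by exact_mod_cast h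
  rw [← h2, Matrix.trace]
  refine Finset.sum_congr rfl fun i _ => ?_
  rw [Matrix.diag_apply, Matrix.mul_apply]
  refine Finset.sum_congr rfl fun j _ => ?_
  simp [AR, hn.symmA j i]

lemma mA_01 (n : ℕ → ℕ) (i j : Fin 16) : mA n i j = 0 ∨ mA n i j = 1 := by
  unfold mA
  cases (n i).testBit j <;> simp

/-- The map on matrices associated with `M`. -/
noncomputable def Ph (M : Matrix (Fin 16 × Fin 16) (Fin 16 × Fin 16) ℝ)
    (Y : Matrix (Fin 16) (Fin 16) ℝ) : Matrix (Fin 16) (Fin 16) ℝ :=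
  Matrix.of fun h h' => ∑ g, ∑ g', M (g, h) (g', h') * Y g g'

lemma Ph_sq {n m : ℕ → ℕ} (hn : Good n) (hm : Good m)
    {M : Matrix (Fin 16 × Fin 16) (Fin 16 × Fin 16) ℝ}
    (hM : IsIsoMatrix (gr n hn) (gr m hm) M) (hp : M.PosSemidef) :
    Ph M (AR n * AR n) = AR m * AR m := by
  obtain ⟨s1, s2, s3⟩ := hM
  obtain ⟨C, hC⟩ : ∃ C : Matrix (Fin 16 × Fin 16) (Fin 16 × Fin 16) ℝ, M = Cᴴ * C := by
    open scoped MatrixOrder in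
    exact CStarAlgebra.nonneg_iff_eq_star_mul_self.mp hp.nonneg
  let D : Fin 16 × Fin 16 → Matrix (Fin 16) (Fin 16) ℝ := fun r => Matrix.of fun h g => C r (g, h)
  have hMD : ∀ g h g' h', M (g, h) (g', h') = ∑ r, D r h g * D r h' g' := by
    intro g h g' h'
    rw [hC, Matrix.mul_apply]
    simp [D]
  have hPh : ∀ Y, Ph M Y = ∑ r, D r * Y * (D r)ᵀ := by
    intro Y
    ext h h'
    simp only [Ph, Matrix.of_apply, Matrix.sum_apply, hMD, Matrix.mul_apply, Matrix.transpose_apply,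
      Finset.sum_mul]
    rw [Finset.sum_comm]
    rw [Finset.sum_comm' (t' := Finset.univ) (s' := fun _ => Finset.univ) (by simp)]
    rw [Finset.sum_comm]
    symm
    rw [Finset.sum_comm]
    refine Finset.sum_congr rfl fun g' _ => ?_
    rw [Finset.sum_comm]
    refine Finset.sum_congr rfl fun g _ => Finset.sum_congr rfl fun r _ => ?_
    ring
  have hone : Ph M 1 = 1 := by
    ext h h'
    simp only [Ph, Matrix.of_apply]
    by_cases e : h = h'
    · subst e
      rw [Matrix.one_apply_eq, ← s2 h h]
      refine Finset.sum_congr rfl fun g _ => Finset.sum_congr rfl fun g' _ => ?_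
      by_cases e : g = g'
      · subst e; simp
      · rw [s3 g g' h h (fun hh => e (hh.1.2 rfl))]; simp
    · rw [Matrix.one_apply_ne e]
      refine Finset.sum_eq_zero fun g _ => Finset.sum_eq_zero fun g' _ => ?_
      by_cases e' : g = g'
      · rw [s3 g g' h h' (fun hh => e (hh.1.1 e'))]; simp
      · simp [e']
  have hA : Ph M (AR n) = AR m := by
    ext h h'
    simp only [Ph, Matrix.of_apply]
    rcases mA_01 m h h' with e | e
    · have : AR m h h' = 0 := by simp [AR, e]
      rw [this]
      refine Finset.sum_eq_zero fun g _ => Finset.sum_eq_zero fun g' _ => ?_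
      rcases mA_01 n g g' with e' | e'
      · simp [AR, e']
      · rw [s3 g g' h h' (fun hh => by
          have : mA m h h' = 1 := hh.2.1 e'
          omega)]; simp
    · have : AR m h h' = 1 := by simp [AR, e]
      rw [this, ← s2 h h']
      refine Finset.sum_congr rfl fun g _ => Finset.sum_congr rfl fun g' _ => ?_
      rcases mA_01 n g g' with e' | e'
      · rw [s3 g g' h h' (fun hh => by
          have : mA n g g' = 1 := hh.2.2 e
          omega)]; simp
      · simp [AR, e']
  have hdual : ∑ r, (D r)ᵀ * D r = 1 := by
    ext g g'
    have e0 : (∑ r, (D r)ᵀ * D r) g g' = ∑ h, M (g, h) (g', h) := by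
      simp only [Matrix.sum_apply, Matrix.mul_apply, Matrix.transpose_apply, hMD]
      exact Finset.sum_comm
    rw [e0]
    by_cases e : g = g'
    · subst e
      rw [Matrix.one_apply_eq, ← s1 g g]
      refine Finset.sum_congr rfl fun h _ => ?_
      rw [Finset.sum_eq_single h]
      · intro h' _ hne
        exact s3 g g h h' (fun hh => hne (hh.1.1 rfl).symm)
      · simp
    · rw [Matrix.one_apply_ne e]
      exact Finset.sum_eq_zero fun h _ => s3 g g' h h (fun hh => e (hh.1.2 rfl))
  have hAt := AR_symm hn
  have hBt := AR_symm hm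
  set A := AR n with hAdef
  set B := AR m with hBdef
  rw [hPh] at hone hA
  simp only [Matrix.mul_one] at hone
  -- the Schwarz defect
  have hz : ∑ r, ((D r * A - B * D r) * (D r * A - B * D r)ᵀ).trace = 0 := by
    have t1 : ∑ r, (D r * A * (A * (D r)ᵀ)).trace = 64 := by
      rw [← AR_tr hn, ← hAdef]
      have : ∀ r, (D r * A * (A * (D r)ᵀ)).trace = (((D r)ᵀ * D r) * (A * A)).trace := by
        intro r
        rw [Matrix.trace_mul_comm, ← Matrix.mul_assoc, Matrix.mul_assoc A, Matrix.mul_assoc,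
          Matrix.trace_mul_comm, Matrix.mul_assoc]
      simp only [this]
      rw [← Matrix.trace_sum, ← Finset.sum_mul, hdual, Matrix.one_mul]
    have t2 : ∑ r, (D r * A * ((D r)ᵀ * B)).trace = 64 := by
      rw [← AR_tr hm, ← hBdef]
      simp only [← Matrix.mul_assoc]
      rw [← Matrix.trace_sum, ← Finset.sum_mul, hA]
    have t3 : ∑ r, (B * D r * (A * (D r)ᵀ)).trace = 64 := by
      rw [← AR_tr hm, ← hBdef]
      simp only [Matrix.mul_assoc]
      rw [← Matrix.trace_sum, ← Finset.mul_sum]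
      simp only [← Matrix.mul_assoc]
      rw [hA]
    have t4 : ∑ r, (B * D r * ((D r)ᵀ * B)).trace = 64 := by
      rw [← AR_tr hm, ← hBdef]
      have : ∀ r, B * D r * ((D r)ᵀ * B) = B * (D r * (D r)ᵀ) * B := by
        intro r; simp only [Matrix.mul_assoc]
      simp only [this]
      rw [← Matrix.trace_sum, ← Finset.sum_mul, ← Finset.mul_sum, hone, Matrix.mul_one]
    simp only [Matrix.transpose_sub, Matrix.transpose_mul, hAt, hBt, Matrix.sub_mul, Matrix.mul_sub,
      Matrix.trace_sub, Finset.sum_sub_distrib, t1, t2, t3, t4]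
    norm_num
  have hcomm : ∀ r, D r * A = B * D r := by
    intro r
    have hnn : ∀ Y : Matrix (Fin 16) (Fin 16) ℝ, (Y * Yᵀ).trace = ∑ i, ∑ j, Y i j * Y i j := by
      intro Y; simp [Matrix.trace, Matrix.mul_apply]
    have h1 := (Finset.sum_eq_zero_iff_of_nonneg (fun r _ => by
      rw [hnn]
      exact Finset.sum_nonneg fun i _ => Finset.sum_nonneg fun j _ => mul_self_nonneg _)).1 hz r
        (Finset.mem_univ _)
    rw [hnn] at h1
    ext i j
    have h2 := (Finset.sum_eq_zero_iff_of_nonneg (fun i _ =>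
      Finset.sum_nonneg fun j _ => mul_self_nonneg _)).1 h1 i (Finset.mem_univ _)
    have h3 := (Finset.sum_eq_zero_iff_of_nonneg (fun j _ => mul_self_nonneg _)).1 h2 j
      (Finset.mem_univ _)
    have h4 := mul_self_eq_zero.1 h3
    rw [Matrix.sub_apply] at h4
    linarith
  rw [hPh]
  have hcomm' : ∀ r, A * (D r)ᵀ = (D r)ᵀ * B := by
    intro r
    have := congrArg Matrix.transpose (hcomm r)
    simpa only [Matrix.transpose_mul, hAt, hBt] using this
  have : ∀ r, D r * (A * A) * (D r)ᵀ = B * (D r * (D r)ᵀ) * B := by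
    intro r
    rw [← Matrix.mul_assoc, Matrix.mul_assoc (D r * A), hcomm', hcomm]
    simp only [Matrix.mul_assoc]
  simp only [this]
  rw [← Finset.sum_mul, ← Finset.mul_sum, hone, Matrix.mul_one]

lemma no_dnn (M : Matrix (Fin 16 × Fin 16) (Fin 16 × Fin 16) ℝ)
    (hM : IsIsoMatrix (gr nG goodG) (gr nH goodH) M) (hp : M.PosSemidef)
    (h0 : ∀ p q, 0 ≤ M p q) : False := by
  have hsq := Ph_sq goodG goodH hM hp
  obtain ⟨s1, s2, s3⟩ := hM
  have hQ : ∀ h h', ∑ g, ∑ g', M (g, h) (g', h') * (mQ nG g g' : ℝ) = mQ nH h h' := by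
    intro h h'
    have := congrFun (congrFun hsq h) h'
    rw [AR_sq goodH] at this
    simpa only [Ph, Matrix.of_apply, AR_sq goodG] using this
  have hvar : ∀ h h', ∑ g, ∑ g', M (g, h) (g', h') * ((mQ nG g g' : ℝ) - mQ nH h h') ^ 2
      = ∑ g, ∑ g', M (g, h) (g', h') * (mQ nG g g' : ℝ) ^ 2 - (mQ nH h h' : ℝ) ^ 2 := by
    intro h h'
    have e : ∀ g g', M (g, h) (g', h') * ((mQ nG g g' : ℝ) - mQ nH h h') ^ 2 =
      M (g, h) (g', h') * (mQ nG g g' : ℝ) ^ 2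
      - 2 * mQ nH h h' * (M (g, h) (g', h') * mQ nG g g')
      + (mQ nH h h' : ℝ) ^ 2 * M (g, h) (g', h') := fun g g' => by ring
    simp only [e, Finset.sum_add_distrib, Finset.sum_sub_distrib, ← Finset.mul_sum, hQ, s2]
    ring
  have hGs : ∑ i, ∑ j, (mQ nG i j : ℝ) ^ 2 = 640 := by
    have h := goodG.sumQ
    simp only [← lsum_eq, ← pow_two] at h
    exact_mod_cast h
  have hHs : ∑ i, ∑ j, (mQ nH i j : ℝ) ^ 2 = 640 := by
    have h := goodH.sumQ
    simp only [← lsum_eq, ← pow_two] at h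
    exact_mod_cast h
  have htot : ∑ h, ∑ h', ∑ g, ∑ g', M (g, h) (g', h') * ((mQ nG g g' : ℝ) - mQ nH h h') ^ 2 = 0 := by
    simp only [hvar, Finset.sum_sub_distrib, hHs]
    have : ∑ h, ∑ h', ∑ g, ∑ g', M (g, h) (g', h') * (mQ nG g g' : ℝ) ^ 2
        = ∑ g, ∑ g', (∑ h, ∑ h', M (g, h) (g', h')) * (mQ nG g g' : ℝ) ^ 2 := by
      simp only [Finset.sum_mul, ← Fintype.sum_prod_type']
      simp only [Fintype.sum_prod_type]
      rw [← Fintype.sum_prod_type' (f := fun h h' => ∑ g, ∑ g', M (g, h) (g', h') * (mQ nG g g' : ℝ) ^ 2),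
        ← Fintype.sum_prod_type' (f := fun g g' => ∑ h, ∑ h', M (g, h) (g', h') * (mQ nG g g' : ℝ) ^ 2)]
      have e1 : ∀ x : Fin 16 × Fin 16, ∑ g, ∑ g', M (g, x.1) (g', x.2) * (mQ nG g g' : ℝ) ^ 2 =
        ∑ y : Fin 16 × Fin 16, M (y.1, x.1) (y.2, x.2) * (mQ nG y.1 y.2 : ℝ) ^ 2 := fun x => by
          rw [Fintype.sum_prod_type]
      have e2 : ∀ y : Fin 16 × Fin 16, ∑ h, ∑ h', M (y.1, h) (y.2, h') * (mQ nG y.1 y.2 : ℝ) ^ 2 =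
        ∑ x : Fin 16 × Fin 16, M (y.1, x.1) (y.2, x.2) * (mQ nG y.1 y.2 : ℝ) ^ 2 := fun x => by
          rw [Fintype.sum_prod_type]
      simp only [e1, e2]
      exact Finset.sum_comm
    rw [this]
    simp only [s1, one_mul, hGs]
    norm_num
  have hnn : ∀ h h' g g', 0 ≤ M (g, h) (g', h') * ((mQ nG g g' : ℝ) - mQ nH h h') ^ 2 :=
    fun h h' g g' => mul_nonneg (h0 _ _) (sq_nonneg _)
  have h1 := (Finset.sum_eq_zero_iff_of_nonneg (fun h _ => Finset.sum_nonneg fun h' _ =>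
    Finset.sum_nonneg fun g _ => Finset.sum_nonneg fun g' _ => hnn h h' g g')).1 htot 1
      (Finset.mem_univ _)
  have h2 := (Finset.sum_eq_zero_iff_of_nonneg (fun h' _ =>
    Finset.sum_nonneg fun g _ => Finset.sum_nonneg fun g' _ => hnn 1 h' g g')).1 h1 7
      (Finset.mem_univ _)
  have h3 : ∑ g, ∑ g', M (g, (1 : Fin 16)) (g', (7 : Fin 16)) ≤ 0 := by
    refine le_trans ?_ h2.le
    refine Finset.sum_le_sum fun g _ => Finset.sum_le_sum fun g' _ => ?_
    refine le_mul_of_one_le_right (h0 _ _) ?_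
    rw [QH]
    rcases QG g g' with e | e | e <;> rw [e] <;> norm_num
  rw [s2] at h3
  norm_num at h3

end Hoff

/-- There are graphs on 16 vertices which are `S+`-isomorphic but not
`DNN`-isomorphic. -/
theorem exists_sPlus_iso_not_dnn_iso :
    ∃ G H : SimpleGraph (Fin 16),
      (∃ M, IsIsoMatrix G H M ∧ M.PosSemidef) ∧
      ¬ (∃ M, IsIsoMatrix G H M ∧ M.PosSemidef ∧ ∀ p q, 0 ≤ M p q) := by
  exact ⟨Hoff.gr _ Hoff.goodG, Hoff.gr _ Hoff.goodH,
    ⟨_, Hoff.MM_iso Hoff.goodG Hoff.goodH, Hoff.MM_psd Hoff.goodG Hoff.goodH⟩,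
    fun ⟨M, h1, h2, h3⟩ => Hoff.no_dnn M h1 h2 h3⟩
end

section
/- There exist finite simple graphs G and H on 16 vertices such that G ≅_{DNN} H (there exists a DNN-isomorphism matrix for G to H) but G and H are not quantum isomorphic: there do not exist d ≥ 1 and orthogonal projections P_{gh} ∈ ℂ^{d×d} for g ∈ V_G, h ∈ V_H with Σ_{h∈V_H} P_{gh} = I for all g, Σ_{g∈V_G} P_{gh} = I for all h, and P_{gh} P_{g'h'} = 0 whenever rel(g,g') ≠ rel(h,h'). (One may take G to be the Cartesian product K_4 □ K_4 and H the Shrikhande graph.) -/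
open Matrix BigOperators
open scoped ComplexOrder

namespace DnnProof

/-- Adjacency of the 4 by 4 rook graph. -/
def aG (i j : Fin 16) : Bool :=
  (i.val != j.val) && ((i.val / 4 == j.val / 4) || (i.val % 4 == j.val % 4))

/-- Adjacency of the Shrikhande graph: a Cayley graph of ℤ₄ × ℤ₄. -/
def aH (i j : Fin 16) : Bool :=
  let a := (i.val / 4 + 4 - j.val / 4) % 4
  let b := (i.val % 4 + 4 - j.val % 4) % 4
  (a == 0 && (b == 1 || b == 3)) || (b == 0 && (a == 1 || a == 3)) ||
    (a == 1 && b == 1) || (a == 3 && b == 3)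

def G : SimpleGraph (Fin 16) where
  Adj i j := aG i j = true
  symm := ⟨by decide +kernel⟩
  loopless := ⟨by decide +kernel⟩

def H : SimpleGraph (Fin 16) where
  Adj i j := aH i j = true
  symm := ⟨by decide +kernel⟩
  loopless := ⟨by decide +kernel⟩

/-- Eight times the projection onto the eigenspace of eigenvalue 2. -/
def X (a : Fin 16 → Fin 16 → Bool) : Matrix (Fin 16) (Fin 16) ℤ :=
  fun i j => if i = j then 3 else if a i j = true then 1 else -1

/-- Sixteen times the projection onto the eigenspace of eigenvalue -2. -/
def Y (a : Fin 16 → Fin 16 → Bool) : Matrix (Fin 16) (Fin 16) ℤ :=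
  fun i j => if i = j then 9 else if a i j = true then -3 else 1

def R (Z : Matrix (Fin 16) (Fin 16) ℤ) : Matrix (Fin 16) (Fin 16) ℝ :=
  Z.map (Int.castRingHom ℝ)

lemma psd_R (Z : Matrix (Fin 16) (Fin 16) ℤ) (c : ℕ) (hc : 0 < c)
    (h : ∀ i j, ∑ k, Z k i * Z k j = c * Z i j) : (R Z).PosSemidef := by
  have h1 : R Z = (1 / (c : ℝ)) • ((R Z)ᴴ * R Z) := by
    ext i j
    have := congrArg (fun z : ℤ => (z : ℝ)) (h i j)
    have hc' : (c : ℝ) ≠ 0 := by positivity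
    simp only [Matrix.smul_apply, Matrix.mul_apply, Matrix.conjTranspose_apply, R,
      Matrix.map_apply, smul_eq_mul, star_trivial, eq_intCast]
    push_cast at this
    rw [this]
    field_simp
  rw [h1]
  exact (Matrix.posSemidef_conjTranspose_mul_self _).smul (by positivity)

lemma XG : (R (X aG)).PosSemidef := psd_R _ 8 (by norm_num) (by decide +kernel)
lemma XH : (R (X aH)).PosSemidef := psd_R _ 8 (by norm_num) (by decide +kernel)
lemma YG : (R (Y aG)).PosSemidef := psd_R _ 16 (by norm_num) (by decide +kernel)
lemma YH : (R (Y aH)).PosSemidef := psd_R _ 16 (by norm_num) (by decide +kernel)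

lemma J_psd : (R (fun _ _ => 1)).PosSemidef := psd_R _ 16 (by norm_num) (by decide +kernel)

lemma R_sum (Z : Matrix (Fin 16) (Fin 16) ℤ) (h : ∑ i, ∑ j, Z i j = 0) :
    ∑ i, ∑ j, R Z i j = 0 := by
  have := congrArg (fun z : ℤ => (z : ℝ)) h
  push_cast at this
  simpa [R] using this

/-- The DNN-isomorphism matrix. -/
noncomputable def M : Matrix (Fin 16 × Fin 16) (Fin 16 × Fin 16) ℝ :=
  (1 / 256 : ℝ) • Matrix.kronecker (R (fun _ _ => 1)) (R (fun _ _ => 1)) +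
  (1 / 384 : ℝ) • Matrix.kronecker (R (X aG)) (R (X aH)) +
  (1 / 2304 : ℝ) • Matrix.kronecker (R (Y aG)) (R (Y aH))

lemma M_apply (g h g' h') : M (g, h) (g', h') =
    1 / 256 + 1 / 384 * (R (X aG) g g' * R (X aH) h h')
      + 1 / 2304 * (R (Y aG) g g' * R (Y aH) h h') := by
  simp [M, Matrix.kronecker, Matrix.kroneckerMap_apply, R, Matrix.map]

lemma M_psd : M.PosSemidef := by
  unfold M
  exact (((J_psd.kronecker J_psd).smul (by norm_num)).add
    ((XG.kronecker XH).smul (by norm_num))).add ((YG.kronecker YH).smul (by norm_num))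

lemma aG_irrefl (i) : aG i i = false := by revert i; decide +kernel
lemma aH_irrefl (i) : aH i i = false := by revert i; decide +kernel

lemma M_nonneg (p q) : 0 ≤ M p q := by
  obtain ⟨g, h⟩ := p
  obtain ⟨g', h'⟩ := q
  rw [M_apply]
  simp only [R, X, Y, Matrix.map_apply]
  split_ifs <;> norm_num

lemma M_zero (g g' h h') (hr : ¬ relEq G H g g' h h') : M (g, h) (g', h') = 0 := by
  rw [M_apply]
  simp only [relEq, G, H] at hr
  simp only [R, X, Y, Matrix.map_apply]
  by_cases e1 : g = g' <;> by_cases e2 : h = h'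
  · subst e1; subst e2; simp [aG_irrefl, aH_irrefl] at hr
  all_goals
    simp only [e1, e2, if_true, if_false]
    simp only [e1, e2] at hr
    split_ifs <;> simp_all <;> norm_num

lemma M_iso : IsIsoMatrix G H M := by
  have x1 := R_sum (X aH) (by decide +kernel)
  have x2 := R_sum (Y aH) (by decide +kernel)
  have x3 := R_sum (X aG) (by decide +kernel)
  have x4 := R_sum (Y aG) (by decide +kernel)
  refine ⟨fun g g' => ?_, fun h h' => ?_, M_zero⟩
  · simp only [M_apply, Finset.sum_add_distrib, ← Finset.mul_sum, x1, x2]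
    simp; norm_num
  · simp only [M_apply, Finset.sum_add_distrib, ← Finset.mul_sum, ← Finset.sum_mul, x3, x4]
    simp; norm_num

lemma noK4 : ∀ k h1, aH h1 k = true → ∀ h2, aH h2 k = true → aH h1 h2 = true →
    ∀ h3, aH h3 k = true → aH h2 h3 = true → aH h3 h1 = true → False := by
  decide +kernel

lemma uniqueNbr : ∀ g : Fin 16,
    ((aG 0 g = true ∧ aG 1 g = true) ∧ aG 2 g = true) ↔ g = 3 := by decide +kernel

lemma not_qiso : ¬ QuantumIso G H := by
  rintro ⟨d, hd, P, hP, hrow, hcol, horth⟩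
  -- `S g k` written in two ways
  have key : ∀ g k, ∑ h, (if aH h k = true then P g h else 0)
      = ∑ g', (if aG g g' = true then P g' k else 0) := by
    intro g k
    have l : ∀ h, (if aH h k = true then P g h else 0)
        = ∑ g', (if aH h k = true ∧ aG g g' = true then P g h * P g' k else 0) := by
      intro h
      by_cases e : aH h k = true
      · simp only [e, if_true, true_and]
        conv_lhs => rw [← mul_one (P g h), ← hcol k, Finset.mul_sum]
        refine Finset.sum_congr rfl fun g' _ => ?_
        split_ifs with e'
        · rfl
        · exact horth _ _ _ _ (fun r => e' (r.2.2 e))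
      · simp [e]
    have r : ∀ g', (if aG g g' = true then P g' k else 0)
        = ∑ h, (if aH h k = true ∧ aG g g' = true then P g h * P g' k else 0) := by
      intro g'
      by_cases e : aG g g' = true
      · simp only [e, if_true, and_true]
        conv_lhs => rw [← one_mul (P g' k), ← hrow g, Finset.sum_mul]
        refine Finset.sum_congr rfl fun h _ => ?_
        split_ifs with e'
        · rfl
        · exact horth _ _ _ _ (fun r => e' (r.2.1 e))
      · simp [e]
    simp only [l, r]
    exact Finset.sum_comm
  have mulS : ∀ (p q : Fin 16 → Prop) [DecidablePred p] [DecidablePred q] (k : Fin 16),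
      (∑ g, if p g then P g k else 0) * (∑ g, if q g then P g k else 0)
        = ∑ g, if p g ∧ q g then P g k else 0 := by
    intro p q _ _ k
    rw [Finset.sum_mul_sum]
    refine Finset.sum_congr rfl fun g _ => ?_
    rw [Finset.sum_eq_single g]
    · by_cases e1 : p g <;> by_cases e2 : q g <;> simp [e1, e2, (hP g k).2]
    · intro g' _ hne
      have : P g k * P g' k = 0 := horth _ _ _ _ (fun r => hne (r.1.2 rfl).symm)
      by_cases e1 : p g <;> by_cases e2 : q g' <;> simp [e1, e2, this]
    · simp
  have tot : ∑ k, (∑ h, (if aH h k = true then P 0 h else 0)) *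
      (∑ h, (if aH h k = true then P 1 h else 0)) *
      (∑ h, (if aH h k = true then P 2 h else 0)) = 1 := by
    simp only [key, mulS, uniqueNbr]
    simp [hrow]
  have tz : ∑ k, (∑ h, (if aH h k = true then P 0 h else 0)) *
      (∑ h, (if aH h k = true then P 1 h else 0)) *
      (∑ h, (if aH h k = true then P 2 h else 0)) =
      ∑ k, ∑ h3, ∑ h2, ∑ h1, (if aH h1 k = true then P 0 h1 else 0) *
        (if aH h2 k = true then P 1 h2 else 0) * (if aH h3 k = true then P 2 h3 else 0) := by
    simp only [Finset.sum_mul, Finset.mul_sum]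
  have g01 : aG 0 1 = true := by decide
  have g12 : aG 1 2 = true := by decide
  have g20 : aG 2 0 = true := by decide
  have tr0 : (1 : Matrix (Fin d) (Fin d) ℂ).trace = 0 := by
    rw [← tot, tz]
    simp only [Matrix.trace_sum]
    refine Finset.sum_eq_zero fun k _ => Finset.sum_eq_zero fun h3 _ =>
      Finset.sum_eq_zero fun h2 _ => Finset.sum_eq_zero fun h1 _ => ?_
    by_cases e1 : aH h1 k = true
    swap
    · simp [e1]
    by_cases e2 : aH h2 k = true
    swap
    · simp [e2]
    by_cases e3 : aH h3 k = true
    swap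
    · simp [e3]
    simp only [e1, e2, e3, if_true]
    by_cases f1 : aH h1 h2 = true
    swap
    · rw [horth 0 1 h1 h2 (fun r => f1 (r.2.1 g01))]; simp
    by_cases f2 : aH h2 h3 = true
    swap
    · rw [Matrix.mul_assoc, horth 1 2 h2 h3 (fun r => f2 (r.2.1 g12))]; simp
    by_cases f3 : aH h3 h1 = true
    swap
    · rw [Matrix.trace_mul_comm, ← Matrix.mul_assoc,
        horth 2 0 h3 h1 (fun r => f3 (r.2.1 g20))]; simp
    exact (noK4 k h1 e1 h2 e2 f1 h3 e3 f2 f3).elim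
  rw [Matrix.trace_one] at tr0
  simp at tr0
  omega

end DnnProof

/-- There are graphs on 16 vertices which are `DNN`-isomorphic but not quantum
isomorphic. -/
theorem exists_dnn_iso_not_quantum_iso :
    ∃ G H : SimpleGraph (Fin 16),
      (∃ M, IsIsoMatrix G H M ∧ M.PosSemidef ∧ ∀ p q, 0 ≤ M p q) ∧
      ¬ QuantumIso G H :=
  ⟨DnnProof.G, DnnProof.H, ⟨DnnProof.M, DnnProof.M_iso, DnnProof.M_psd, DnnProof.M_nonneg⟩,
    DnnProof.not_qiso⟩
end

section
/- Let G be a connected 1-walk-regular finite simple graph. Then for any finite simple graph H, G ≅_{S+} H if and only if H is a connected 1-walk-regular graph that is cospectral to G (the adjacency matrices of G and H have the same characteristic polynomial). -/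
open Matrix BigOperators

/-- `G` is walk-regular: the diagonal of every power of its adjacency matrix is constant,
i.e. `I ∘ A^ℓ = a_ℓ I` for some number `a_ℓ`. -/
def WalkRegular {V : Type*} [Fintype V] [DecidableEq V]
    (G : SimpleGraph V) [DecidableRel G.Adj] : Prop :=
  ∀ ℓ : ℕ, ∃ a : ℝ,
    Matrix.hadamard (1 : Matrix V V ℝ) ((G.adjMatrix ℝ) ^ ℓ) = a • (1 : Matrix V V ℝ)

/-- `G` is 1-walk-regular: it is walk-regular and `A ∘ A^ℓ = b_ℓ A` for some `b_ℓ`. -/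
def OneWalkRegular {V : Type*} [Fintype V] [DecidableEq V]
    (G : SimpleGraph V) [DecidableRel G.Adj] : Prop :=
  WalkRegular G ∧
  ∀ ℓ : ℕ, ∃ b : ℝ,
    Matrix.hadamard (G.adjMatrix ℝ) ((G.adjMatrix ℝ) ^ ℓ) = b • G.adjMatrix ℝ


open Polynomial in
lemma aux_trace_pow {n : Type*} [Fintype n] [DecidableEq n] {A : Matrix n n ℝ}
    (hA : A.IsHermitian) (l : ℕ) : (A ^ l).trace = ∑ i, hA.eigenvalues i ^ l := by
  conv_lhs => rw [hA.spectral_theorem]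
  rw [← map_pow, Matrix.diagonal_pow, Unitary.conjStarAlgAut_apply, Matrix.trace_mul_cycle]
  simp [Matrix.trace_diagonal]

lemma aux_trace_of_charpoly {m n : Type*} [Fintype n] [DecidableEq n] [Fintype m] [DecidableEq m]
    {A : Matrix n n ℝ} {B : Matrix m m ℝ}
    (hA : A.IsHermitian) (hB : B.IsHermitian) (h : A.charpoly = B.charpoly) (l : ℕ) :
    (A ^ l).trace = (B ^ l).trace := by
  have h1 := hA.roots_charpoly_eq_eigenvalues
  rw [h, hB.roots_charpoly_eq_eigenvalues] at h1
  have h2 := congrArg (fun s : Multiset ℝ => (s.map (· ^ l)).sum) h1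
  simp only [Multiset.map_map] at h2
  rw [aux_trace_pow hA, aux_trace_pow hB]
  exact h2.symm

lemma aux_trace_aeval {m n : Type*} [Fintype n] [DecidableEq n] [Fintype m] [DecidableEq m]
    {A : Matrix n n ℝ} {B : Matrix m m ℝ}
    (h : ∀ l : ℕ, (A ^ l).trace = (B ^ l).trace) (q : Polynomial ℝ) :
    (Polynomial.aeval A q).trace = (Polynomial.aeval B q).trace := by
  simp [Polynomial.aeval_eq_sum_range, Matrix.trace_sum, h]

lemma aux_charpoly_of_trace {m n : Type*} [Fintype n] [DecidableEq n] [Fintype m] [DecidableEq m]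
    {A : Matrix n n ℝ} {B : Matrix m m ℝ}
    (hA : A.IsHermitian) (hB : B.IsHermitian) (h : ∀ l : ℕ, (A ^ l).trace = (B ^ l).trace) :
    A.charpoly = B.charpoly := by
  classical
  have hq : ∀ q : Polynomial ℝ,
      ∑ i, q.eval (hA.eigenvalues i) = ∑ i, q.eval (hB.eigenvalues i) := by
    intro q
    simp only [Polynomial.eval_eq_sum_range]
    rw [Finset.sum_comm, Finset.sum_comm (s := (Finset.univ : Finset m))]
    refine Finset.sum_congr rfl fun l _ => ?_
    rw [← Finset.mul_sum, ← Finset.mul_sum, ← aux_trace_pow hA, ← aux_trace_pow hB, h]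
  have hms : Multiset.map hA.eigenvalues Finset.univ.val
      = Multiset.map hB.eigenvalues Finset.univ.val := by
    ext x
    set S : Finset ℝ := insert x (Finset.univ.image hA.eigenvalues ∪ Finset.univ.image hB.eigenvalues)
      with hS
    have hx : x ∈ S := by simp [hS]
    have key := hq (Lagrange.basis S id x)
    have hev : ∀ y ∈ S, (Lagrange.basis S id x).eval y = if x = y then 1 else 0 := by
      intro y hy
      split_ifs with hxy
      · subst hxy
        exact Lagrange.eval_basis_self (v := id) Function.injective_id.injOn hx
      · exact Lagrange.eval_basis_of_ne (v := id) hxy hy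
    rw [Finset.sum_congr rfl (fun i _ => hev (hA.eigenvalues i) (by simp [hS])),
      Finset.sum_congr rfl (fun i _ => hev (hB.eigenvalues i) (by simp [hS]))] at key
    rw [Multiset.count_map, Multiset.count_map]
    simp only [Finset.sum_boole] at key
    exact_mod_cast key
  rw [hA.charpoly_eq, hB.charpoly_eq]
  have := congrArg (fun s : Multiset ℝ => (s.map (fun x => (Polynomial.X - Polynomial.C x))).prod) hms
  simp only [Multiset.map_map] at this
  exact this

lemma aux_aeval_eq_zero {n : Type*} [Fintype n] [DecidableEq n] {A : Matrix n n ℝ}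
    (hA : A.IsHermitian) (q : Polynomial ℝ) (h : ∀ i, q.eval (hA.eigenvalues i) = 0) :
    Polynomial.aeval A q = 0 := by
  rw [← cfc_polynomial q A hA.isSelfAdjoint, cfc_congr (g := fun _ => 0), cfc_const_zero]
  intro x hx
  rw [hA.spectrum_real_eq_range_eigenvalues] at hx
  obtain ⟨i, rfl⟩ := hx
  exact h i

section graph
set_option linter.unusedSectionVars false
variable {V : Type*} [Fintype V] [DecidableEq V] (G : SimpleGraph V) [DecidableRel G.Adj]

lemma aux_herm : (G.adjMatrix ℝ).IsHermitian := by
  rw [Matrix.IsHermitian, Matrix.conjTranspose_eq_transpose_of_trivial]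
  exact G.isSymm_adjMatrix (α := ℝ)

lemma aux_wr : WalkRegular G ↔ ∀ l : ℕ, ∃ a : ℝ, ∀ v, (G.adjMatrix ℝ ^ l) v v = a := by
  unfold WalkRegular
  refine forall_congr' fun l => exists_congr fun a => ?_
  constructor
  · intro h v
    simpa using congrFun (congrFun h v) v
  · intro h
    ext v w
    by_cases hvw : v = w
    · subst hvw; simp [h]
    · simp [hvw]

lemma aux_owr : OneWalkRegular G ↔ (∀ l : ℕ, ∃ a : ℝ, ∀ v, (G.adjMatrix ℝ ^ l) v v = a) ∧
    ∀ l : ℕ, ∃ b : ℝ, ∀ v w, G.Adj v w → (G.adjMatrix ℝ ^ l) v w = b := by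
  unfold OneWalkRegular
  rw [aux_wr]
  refine and_congr Iff.rfl ?_
  refine forall_congr' fun l => exists_congr fun a => ?_
  constructor
  · intro h v w hvw
    simpa [hvw] using congrFun (congrFun h v) w
  · intro h
    ext v w
    by_cases hvw : G.Adj v w
    · simp [h v w hvw, hvw]
    · simp [hvw]

lemma aux_deg (v : V) : (G.adjMatrix ℝ ^ 2) v v = G.degree v := by
  rw [pow_two, SimpleGraph.adjMatrix_mul_self_apply_self]

lemma aux_const {G : SimpleGraph V} [DecidableRel G.Adj] (hc : G.Connected) {k : ℝ}
    (hk : ∀ v, (G.degree v : ℝ) = k)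
    {w : V → ℝ} (hw : G.adjMatrix ℝ *ᵥ w = k • w) (i j : V) : w i = w j := by
  refine (G.lapMatrix_mulVec_eq_zero_iff_forall_reachable (x := w)).1 ?_ i j (hc.preconnected i j)
  ext v
  rw [SimpleGraph.lapMatrix, Matrix.sub_mulVec, hw, Pi.sub_apply,
    SimpleGraph.degMatrix_mulVec_apply, hk]
  simp

lemma aux_one {G : SimpleGraph V} [DecidableRel G.Adj] {k : ℝ}
    (hk : ∀ v, (G.degree v : ℝ) = k) : G.adjMatrix ℝ *ᵥ (fun _ => 1) = k • (fun _ => 1) := by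
  ext v
  simp [hk]

end graph

section fwd
set_option linter.unusedSectionVars false
variable {α β : Type*} [Fintype α] [Fintype β] [DecidableEq α] [DecidableEq β]
    {G : SimpleGraph α} {H : SimpleGraph β}
    [DecidableRel G.Adj] [DecidableRel H.Adj]

lemma aux_phi {M : Matrix (α × β) (α × β) ℝ} (hM : IsIsoMatrix G H M) {X : Matrix α α ℝ}
    {h h' : β} {c : ℝ} (hc : ∀ g g', relEq G H g g' h h' → X g g' = c) :
    ∑ g, ∑ g', M (g, h) (g', h') * X g g' = c := by
  have : ∀ g g', M (g, h) (g', h') * X g g' = M (g, h) (g', h') * c := by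
    intro g g'
    by_cases hr : relEq G H g g' h h'
    · rw [hc g g' hr]
    · rw [hM.2.2 g g' h h' hr]; simp
  simp_rw [this, ← Finset.sum_mul, hM.2.1 h h', one_mul]

lemma aux_psi {M : Matrix (α × β) (α × β) ℝ} (hM : IsIsoMatrix G H M) {Y : Matrix β β ℝ}
    {g g' : α} {c : ℝ} (hc : ∀ h h', relEq G H g g' h h' → Y h h' = c) :
    ∑ h, ∑ h', M (g, h) (g', h') * Y h h' = c := by
  have : ∀ h h', M (g, h) (g', h') * Y h h' = M (g, h) (g', h') * c := by
    intro h h'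
    by_cases hr : relEq G H g g' h h'
    · rw [hc h h' hr]
    · rw [hM.2.2 g g' h h' hr]; simp
  simp_rw [this, ← Finset.sum_mul, hM.1 g g', one_mul]

lemma aux_kraus {M : Matrix (α × β) (α × β) ℝ} (hM : M.PosSemidef) :
    ∃ K : α × β → Matrix β α ℝ,
      (∀ X : Matrix α α ℝ, ∀ h h', (∑ r, K r * X * (K r)ᵀ) h h' =
        ∑ g, ∑ g', M (g, h) (g', h') * X g g') ∧
      (∀ Y : Matrix β β ℝ, ∀ g g', (∑ r, (K r)ᵀ * Y * K r) g g' =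
        ∑ h, ∑ h', M (g, h) (g', h') * Y h h') := by
  open scoped MatrixOrder in
  obtain ⟨B, hB⟩ := CStarAlgebra.nonneg_iff_eq_star_mul_self.mp hM.nonneg
  have hMe : ∀ x y, M x y = ∑ r, B r x * B r y := by
    intro x y
    rw [hB, Matrix.mul_apply]
    simp [Matrix.star_apply]
  refine ⟨fun r => Matrix.of fun h g => B r (g, h), ?_, ?_⟩
  · intro X h h'
    simp only [Matrix.sum_apply, Matrix.mul_apply, Matrix.of_apply, Matrix.transpose_apply, hMe,
      Finset.sum_mul]
    conv_lhs => rw [Finset.sum_comm]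
    conv_rhs => rw [Finset.sum_comm]
    refine Finset.sum_congr rfl fun g' _ => ?_
    rw [Finset.sum_comm]
    refine Finset.sum_congr rfl fun g _ => Finset.sum_congr rfl fun r _ => ?_
    ring
  · intro X h h'
    simp only [Matrix.sum_apply, Matrix.mul_apply, Matrix.of_apply, Matrix.transpose_apply, hMe,
      Finset.sum_mul]
    conv_lhs => rw [Finset.sum_comm]
    conv_rhs => rw [Finset.sum_comm]
    refine Finset.sum_congr rfl fun g' _ => ?_
    rw [Finset.sum_comm]
    refine Finset.sum_congr rfl fun g _ => Finset.sum_congr rfl fun r _ => ?_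
    ring

/-- Kraus operators of a doubly stochastic completely positive map exchanging two
symmetric matrices intertwine these matrices. -/
lemma aux_intertwine {ι : Type*} [Fintype ι] (K : ι → Matrix β α ℝ) {A : Matrix α α ℝ}
    {B : Matrix β β ℝ} (hA : Aᵀ = A) (hB : Bᵀ = B)
    (h1 : ∑ r, K r * (K r)ᵀ = 1) (h2 : ∑ r, (K r)ᵀ * K r = 1)
    (h3 : ∑ r, K r * A * (K r)ᵀ = B) (h4 : ∑ r, (K r)ᵀ * B * K r = A) (r : ι) :
    K r * A = B * K r := by
  have e1 : ∑ r, (K r * A * A * (K r)ᵀ).trace = (A * A).trace := by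
    have : ∀ r, (K r * A * A * (K r)ᵀ).trace = ((K r)ᵀ * K r * (A * A)).trace := by
      intro r
      rw [Matrix.trace_mul_comm]; simp only [Matrix.mul_assoc]
    simp_rw [this]
    rw [← Matrix.trace_sum, ← Finset.sum_mul, h2, one_mul]
  have e2 : ∑ r, (B * K r * (K r)ᵀ * B).trace = (B * B).trace := by
    have : ∀ r, (B * K r * (K r)ᵀ * B).trace = (K r * (K r)ᵀ * (B * B)).trace := by
      intro r
      rw [Matrix.mul_assoc B, Matrix.mul_assoc B, Matrix.trace_mul_comm]
      simp only [Matrix.mul_assoc]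
    simp_rw [this]
    rw [← Matrix.trace_sum, ← Finset.sum_mul, h1, one_mul]
  have e3 : ∑ r, (K r * A * (K r)ᵀ * B).trace = (B * B).trace := by
    rw [← Matrix.trace_sum, ← Finset.sum_mul, h3]
  have e4 : ∑ r, (K r * A * (K r)ᵀ * B).trace = (A * A).trace := by
    have : ∀ r, (K r * A * (K r)ᵀ * B).trace = ((K r)ᵀ * B * K r * A).trace := by
      intro r
      rw [Matrix.mul_assoc (K r * A), Matrix.trace_mul_comm]
      simp only [Matrix.mul_assoc]
    simp_rw [this]
    rw [← Matrix.trace_sum, ← Finset.sum_mul, h4]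
  have e5 : ∑ r, (B * K r * A * (K r)ᵀ).trace = (B * B).trace := by
    rw [← e3]
    refine Finset.sum_congr rfl fun r _ => ?_
    rw [Matrix.trace_mul_comm (K r * A * (K r)ᵀ)]
    simp only [Matrix.mul_assoc]
  have e6 : ∑ r, ((K r * A - B * K r)ᴴᴴ * (K r * A - B * K r)ᴴ).trace = 0 := by
    have : ∀ r, ((K r * A - B * K r)ᴴᴴ * (K r * A - B * K r)ᴴ).trace =
        (K r * A * A * (K r)ᵀ).trace - (K r * A * (K r)ᵀ * B).trace
        - (B * K r * A * (K r)ᵀ).trace + (B * K r * (K r)ᵀ * B).trace := by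
      intro r
      rw [Matrix.conjTranspose_conjTranspose, Matrix.conjTranspose_eq_transpose_of_trivial,
        Matrix.transpose_sub, Matrix.transpose_mul, Matrix.transpose_mul, hA, hB,
        ← Matrix.trace_sub, ← Matrix.trace_sub, ← Matrix.trace_add]
      congr 1
      simp only [Matrix.sub_mul, Matrix.mul_sub, Matrix.mul_assoc]
      abel
    simp_rw [this]
    rw [Finset.sum_add_distrib, Finset.sum_sub_distrib, Finset.sum_sub_distrib, e1, e2, e3, e5]
    linarith
  have e7 := (Finset.sum_eq_zero_iff_of_nonneg (fun r _ =>
    (Matrix.posSemidef_conjTranspose_mul_self ((K r * A - B * K r)ᴴ)).trace_nonneg)).1 e6 r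
    (Finset.mem_univ r)
  rw [Matrix.trace_conjTranspose_mul_self_eq_zero_iff, Matrix.conjTranspose_eq_zero] at e7
  exact sub_eq_zero.1 e7

lemma aux_fwd (hGconn : G.Connected) (hG1wr : OneWalkRegular G)
    {M : Matrix (α × β) (α × β) ℝ} (hM : IsIsoMatrix G H M) (hP : M.PosSemidef) :
    H.Connected ∧ OneWalkRegular H ∧ (G.adjMatrix ℝ).charpoly = (H.adjMatrix ℝ).charpoly := by
  obtain ⟨K, hK1, hK2⟩ := aux_kraus hP
  have sA : (G.adjMatrix ℝ)ᵀ = G.adjMatrix ℝ := G.isSymm_adjMatrix (α := ℝ)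
  have sB : (H.adjMatrix ℝ)ᵀ = H.adjMatrix ℝ := H.isSymm_adjMatrix (α := ℝ)
  have h1 : ∑ r, K r * (K r)ᵀ = 1 := by
    ext h h'
    have := hK1 1 h h'
    simp only [Matrix.mul_one] at this
    rw [this]
    refine aux_phi hM fun g g' hr => ?_
    simp [Matrix.one_apply, hr.1]
  have h2 : ∑ r, (K r)ᵀ * K r = 1 := by
    ext h h'
    have := hK2 1 h h'
    simp only [Matrix.mul_one] at this
    rw [this]
    refine aux_psi hM fun g g' hr => ?_
    simp [Matrix.one_apply, hr.1]
  have h3 : ∑ r, K r * G.adjMatrix ℝ * (K r)ᵀ = H.adjMatrix ℝ := by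
    ext h h'
    rw [hK1]
    refine aux_phi hM fun g g' hr => ?_
    simp [SimpleGraph.adjMatrix_apply, hr.2]
  have h4 : ∑ r, (K r)ᵀ * H.adjMatrix ℝ * K r = G.adjMatrix ℝ := by
    ext h h'
    rw [hK2]
    refine aux_psi hM fun g g' hr => ?_
    simp [SimpleGraph.adjMatrix_apply, hr.2]
  have hI := aux_intertwine K sA sB h1 h2 h3 h4
  have hIp : ∀ (l : ℕ) r, K r * (G.adjMatrix ℝ) ^ l = (H.adjMatrix ℝ) ^ l * K r := by
    intro l r
    induction l with
    | zero => simp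
    | succ l ih => rw [pow_succ, ← Matrix.mul_assoc, ih, Matrix.mul_assoc, hI, pow_succ,
        Matrix.mul_assoc]
  have hPow : ∀ l : ℕ, ∑ r, K r * (G.adjMatrix ℝ) ^ l * (K r)ᵀ = (H.adjMatrix ℝ) ^ l := by
    intro l
    simp_rw [hIp, Matrix.mul_assoc]
    rw [← Finset.mul_sum, h1, mul_one]
  have hTr : ∀ l : ℕ, ((G.adjMatrix ℝ) ^ l).trace = ((H.adjMatrix ℝ) ^ l).trace := by
    intro l
    rw [← hPow, Matrix.trace_sum]
    have : ∀ r, (K r * (G.adjMatrix ℝ) ^ l * (K r)ᵀ).trace =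
      ((K r)ᵀ * K r * (G.adjMatrix ℝ) ^ l).trace := by
      intro r
      rw [Matrix.trace_mul_comm, Matrix.mul_assoc]
    simp_rw [this]
    rw [← Matrix.trace_sum, ← Finset.sum_mul, h2, one_mul]
  rw [aux_owr] at hG1wr
  have hH1 : ∀ l : ℕ, ∀ a : ℝ, (∀ v, (G.adjMatrix ℝ ^ l) v v = a) →
      ∀ v, (H.adjMatrix ℝ ^ l) v v = a := by
    intro l a ha v
    rw [← hPow, hK1]
    refine aux_phi hM fun g g' hr => ?_
    obtain rfl := hr.1.2 rfl
    exact ha g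
  have hH2 : ∀ l : ℕ, ∀ a : ℝ, (∀ v w, G.Adj v w → (G.adjMatrix ℝ ^ l) v w = a) →
      ∀ v w, H.Adj v w → (H.adjMatrix ℝ ^ l) v w = a := by
    intro l a ha v w hvw
    rw [← hPow, hK1]
    refine aux_phi hM fun g g' hr => ?_
    exact ha g g' (hr.2.2 hvw)
  refine ⟨?_, ?_, aux_charpoly_of_trace (aux_herm G) (aux_herm H) hTr⟩
  · obtain ⟨k, hk⟩ := hG1wr.1 2
    have hk' := hH1 2 k hk
    simp only [aux_deg] at hk hk'
    have hcard : (Fintype.card α : ℝ) = Fintype.card β := by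
      have := hTr 0
      simpa using this
    have := hGconn.nonempty
    have hβ : Nonempty β := by
      rw [← Fintype.card_pos_iff]
      have : 0 < Fintype.card α := Fintype.card_pos
      have h' : Fintype.card α = Fintype.card β := by exact_mod_cast hcard
      omega
    rw [SimpleGraph.connected_iff]
    refine ⟨?_, hβ⟩
    intro h0 h1'
    classical
    set v : β → ℝ := fun h => if H.Reachable h0 h then 1 else 0 with hv
    have hvA : H.adjMatrix ℝ *ᵥ v = k • v := by
      have : H.lapMatrix ℝ *ᵥ v = 0 := by
        rw [SimpleGraph.lapMatrix_mulVec_eq_zero_iff_forall_adj]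
        intro i j hij
        have : H.Reachable h0 i ↔ H.Reachable h0 j :=
          ⟨fun h => h.trans hij.reachable, fun h => h.trans hij.symm.reachable⟩
        simp [hv, this]
      rw [SimpleGraph.lapMatrix, Matrix.sub_mulVec, sub_eq_zero] at this
      rw [← this]
      ext x
      rw [SimpleGraph.degMatrix_mulVec_apply, hk']
      simp
    have hw : ∀ r, G.adjMatrix ℝ *ᵥ ((K r)ᵀ *ᵥ v) = k • ((K r)ᵀ *ᵥ v) := by
      intro r
      have hT := congrArg Matrix.transpose (hI r)
      rw [Matrix.transpose_mul, Matrix.transpose_mul, sA, sB] at hT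
      rw [Matrix.mulVec_mulVec, hT, ← Matrix.mulVec_mulVec, hvA, Matrix.mulVec_smul]
    have hconst := fun r i j => aux_const hGconn hk (hw r) i j
    obtain ⟨g0⟩ := hGconn.nonempty
    set c : α × β → ℝ := fun r => ((K r)ᵀ *ᵥ v) g0 with hc
    have hwc : ∀ r, (K r)ᵀ *ᵥ v = fun _ => c r := fun r => funext fun i => hconst r i g0
    have hquad : ∀ X : Matrix α α ℝ, v ⬝ᵥ ((∑ r, K r * X * (K r)ᵀ) *ᵥ v) =
        ∑ r, ((K r)ᵀ *ᵥ v) ⬝ᵥ (X *ᵥ ((K r)ᵀ *ᵥ v)) := by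
      intro X
      rw [Matrix.sum_mulVec, dotProduct_sum]
      refine Finset.sum_congr rfl fun r _ => ?_
      rw [← Matrix.mulVec_mulVec, ← Matrix.mulVec_mulVec, Matrix.dotProduct_mulVec,
        Matrix.mulVec_transpose]
    have hJ : ∑ r, K r * (Matrix.of fun _ _ => (1:ℝ) : Matrix α α ℝ) * (K r)ᵀ = Matrix.of fun _ _ => (1:ℝ) := by
      ext h h'
      rw [hK1]
      exact aux_phi hM fun g g' hr => rfl
    have q1 := hquad 1
    have q2 := hquad (Matrix.of fun _ _ => (1:ℝ))
    simp only [Matrix.mul_one] at q1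
    rw [h1] at q1
    rw [hJ] at q2
    simp only [hwc, Matrix.one_mulVec] at q1 q2
    have hvv : v ⬝ᵥ v = ∑ x, v x := by
      refine Finset.sum_congr rfl fun x _ => ?_
      simp only [hv]
      split_ifs <;> norm_num
    have q1' : ∑ x, v x = (Fintype.card α : ℝ) * ∑ r, c r * c r := by
      rw [← hvv, q1, Finset.mul_sum]
      simp [dotProduct]
    have q2' : (∑ x, v x) * (∑ x, v x) =
        (Fintype.card α : ℝ) * ((Fintype.card α : ℝ) * ∑ r, c r * c r) := by
      have e : v ⬝ᵥ ((Matrix.of fun _ _ => (1:ℝ)) *ᵥ v) = (∑ x, v x) * (∑ x, v x) := by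
        simp [dotProduct, Matrix.mulVec, Finset.sum_mul]
      rw [← e, q2, Finset.mul_sum, Finset.mul_sum]
      refine Finset.sum_congr rfl fun r _ => ?_
      simp [dotProduct, Matrix.mulVec]
      ring
    have hv0 : ∀ x, 0 ≤ v x := fun x => by simp only [hv]; split_ifs <;> norm_num
    have hv1 : ∀ x, v x ≤ 1 := fun x => by simp only [hv]; split_ifs <;> norm_num
    have hpos : 0 < ∑ x, v x := by
      have : v h0 ≤ ∑ x, v x := Finset.single_le_sum (fun x _ => hv0 x) (Finset.mem_univ h0)
      have h0' : v h0 = 1 := by simp [hv]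
      linarith
    have hsum : ∑ x, v x = Fintype.card β := by
      rw [← hcard]
      rw [← q1'] at q2'
      exact mul_right_cancel₀ hpos.ne' q2'
    by_contra hnr
    have hlt : ∑ x, v x < ∑ x : β, (1:ℝ) :=
      Finset.sum_lt_sum (fun x _ => hv1 x) ⟨h1', Finset.mem_univ _, by simp [hv, hnr]⟩
    simp [hsum] at hlt
  · rw [aux_owr]
    refine ⟨fun l => ?_, fun l => ?_⟩
    · obtain ⟨a, ha⟩ := hG1wr.1 l
      exact ⟨a, hH1 l a ha⟩
    · obtain ⟨a, ha⟩ := hG1wr.2 l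
      exact ⟨a, hH2 l a ha⟩

end fwd

section bwd

/-- The spectral idempotent attached to `μ`, as a polynomial in `A`. -/
noncomputable def auxE {n : Type*} [Fintype n] [DecidableEq n] (S : Finset ℝ) (A : Matrix n n ℝ)
    (μ : ℝ) : Matrix n n ℝ := Polynomial.aeval A (Lagrange.basis S id μ)

lemma aux_basis {S : Finset ℝ} {μ y : ℝ} (hμ : μ ∈ S) (hy : y ∈ S) :
    (Lagrange.basis S id μ).eval y = if μ = y then 1 else 0 := by
  split_ifs with hxy
  · subst hxy
    exact Lagrange.eval_basis_self (v := id) Function.injective_id.injOn hμ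
  · exact Lagrange.eval_basis_of_ne (v := id) hxy hy

variable {n : Type*} [Fintype n] [DecidableEq n] {S : Finset ℝ} {A : Matrix n n ℝ}

lemma auxE_herm (hA : A.IsHermitian) (μ : ℝ) : (auxE S A μ).IsHermitian := by
  unfold auxE
  rw [Polynomial.aeval_eq_sum_range]
  rw [Matrix.IsHermitian, Matrix.conjTranspose_sum]
  refine Finset.sum_congr rfl fun i _ => ?_
  rw [Matrix.conjTranspose_smul, (hA.pow i).eq]
  simp

lemma auxE_idem (hA : A.IsHermitian) (hS : ∀ i, hA.eigenvalues i ∈ S) {μ : ℝ} (hμ : μ ∈ S) :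
    auxE S A μ * auxE S A μ = auxE S A μ := by
  have := aux_aeval_eq_zero hA (Lagrange.basis S id μ * Lagrange.basis S id μ
    - Lagrange.basis S id μ) (fun i => by
      rw [Polynomial.eval_sub, Polynomial.eval_mul, aux_basis hμ (hS i)]
      split_ifs <;> norm_num)
  rw [map_sub, map_mul, sub_eq_zero] at this
  exact this

lemma auxE_mul (hA : A.IsHermitian) (hS : ∀ i, hA.eigenvalues i ∈ S) {μ : ℝ} (hμ : μ ∈ S) :
    A * auxE S A μ = μ • auxE S A μ := by
  have := aux_aeval_eq_zero hA (Polynomial.X * Lagrange.basis S id μ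
    - Polynomial.C μ * Lagrange.basis S id μ) (fun i => by
      rw [Polynomial.eval_sub, Polynomial.eval_mul, Polynomial.eval_mul, aux_basis hμ (hS i)]
      split_ifs with h <;> simp [h])
  rw [map_sub, map_mul, map_mul, sub_eq_zero, Polynomial.aeval_X, Polynomial.aeval_C,
    ← Algebra.smul_def] at this
  exact this

lemma auxE_sum (hne : S.Nonempty) : ∑ μ ∈ S, auxE S A μ = 1 := by
  unfold auxE
  rw [← map_sum, Lagrange.sum_basis Function.injective_id.injOn hne, map_one]

lemma auxE_sum_smul (hA : A.IsHermitian) (hS : ∀ i, hA.eigenvalues i ∈ S) (hne : S.Nonempty) :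
    ∑ μ ∈ S, μ • auxE S A μ = A := by
  rw [Finset.sum_congr rfl fun μ hμ => (auxE_mul hA hS hμ).symm, ← Finset.mul_sum, auxE_sum hne,
    mul_one]

lemma auxE_psd (hA : A.IsHermitian) (hS : ∀ i, hA.eigenvalues i ∈ S) {μ : ℝ} (hμ : μ ∈ S) :
    (auxE S A μ).PosSemidef := by
  have := Matrix.posSemidef_conjTranspose_mul_self (auxE S A μ)
  rwa [(auxE_herm hA μ).eq, auxE_idem hA hS hμ] at this

lemma auxE_zero (hA : A.IsHermitian) (hS : ∀ i, hA.eigenvalues i ∈ S) {μ : ℝ} (hμ : μ ∈ S)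
    (h : (auxE S A μ).trace = 0) : auxE S A μ = 0 := by
  rw [← Matrix.trace_conjTranspose_mul_self_eq_zero_iff, (auxE_herm hA μ).eq,
    auxE_idem hA hS hμ, h]

lemma auxE_vec {k : ℝ} (hk : k ∈ S) {v : n → ℝ} (hv : A *ᵥ v = k • v) {μ : ℝ} (hμ : μ ∈ S) :
    auxE S A μ *ᵥ v = (if μ = k then (1:ℝ) else 0) • v := by
  have hp : ∀ l : ℕ, (A ^ l) *ᵥ v = k ^ l • v := by
    intro l
    induction l with
    | zero => simp
    | succ l ih =>
      rw [pow_succ, ← Matrix.mulVec_mulVec, hv, Matrix.mulVec_smul, ih, smul_smul, pow_succ,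
        mul_comm]
  rw [← aux_basis hμ hk, auxE, Polynomial.aeval_eq_sum_range, Polynomial.eval_eq_sum_range,
    Matrix.sum_mulVec, Finset.sum_smul]
  refine Finset.sum_congr rfl fun i _ => ?_
  rw [Matrix.smul_mulVec, hp, smul_smul]

variable {V : Type*} [Fintype V] [DecidableEq V] {G : SimpleGraph V} [DecidableRel G.Adj]

lemma auxE_diag (hG : OneWalkRegular G) (μ : ℝ) (v : V) :
    auxE S (G.adjMatrix ℝ) μ v v * (Fintype.card V : ℝ) = (auxE S (G.adjMatrix ℝ) μ).trace := by
  rw [aux_owr] at hG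
  choose a ha using hG.1
  have : ∀ w, auxE S (G.adjMatrix ℝ) μ w w = auxE S (G.adjMatrix ℝ) μ v v := by
    intro w
    simp only [auxE, Polynomial.aeval_eq_sum_range, Matrix.sum_apply, Matrix.smul_apply, ha]
  simp [Matrix.trace, this, mul_comm]

lemma auxE_adj (hG : OneWalkRegular G) {k : ℝ} (hk : ∀ v, (G.degree v : ℝ) = k)
    (hS : ∀ i, (aux_herm G).eigenvalues i ∈ S) {μ : ℝ} (hμ : μ ∈ S) {v w : V} (hvw : G.Adj v w) :
    auxE S (G.adjMatrix ℝ) μ v w * ((Fintype.card V : ℝ) * k)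
      = μ * (auxE S (G.adjMatrix ℝ) μ).trace := by
  rw [aux_owr] at hG
  choose b hb using hG.2
  have hc : ∀ x y, G.Adj x y → auxE S (G.adjMatrix ℝ) μ x y = auxE S (G.adjMatrix ℝ) μ v w := by
    intro x y hxy
    simp only [auxE, Polynomial.aeval_eq_sum_range, Matrix.sum_apply, Matrix.smul_apply,
      hb _ x y hxy, hb _ v w hvw]
  rw [← smul_eq_mul (a := μ), ← Matrix.trace_smul, ← auxE_mul (aux_herm G) hS hμ, Matrix.trace]
  have : ∀ x, (G.adjMatrix ℝ * auxE S (G.adjMatrix ℝ) μ) x x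
      = k * auxE S (G.adjMatrix ℝ) μ v w := by
    intro x
    rw [SimpleGraph.adjMatrix_mul_apply, Finset.sum_congr rfl fun y hy => hc y x
      ((G.mem_neighborFinset x y).1 hy).symm]
    simp [hk]
  simp only [Matrix.diag_apply, this]
  simp
  ring

lemma auxE_top (hc : G.Connected) {k : ℝ} (hk : ∀ v, (G.degree v : ℝ) = k)
    (hS : ∀ i, (aux_herm G).eigenvalues i ∈ S) (hkS : k ∈ S) (v w : V) :
    auxE S (G.adjMatrix ℝ) k v w * (Fintype.card V : ℝ) = 1 := by
  have h1 : ∀ x y z, auxE S (G.adjMatrix ℝ) k x z = auxE S (G.adjMatrix ℝ) k y z := by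
    intro x y z
    refine aux_const hc hk (w := fun x => auxE S (G.adjMatrix ℝ) k x z) ?_ x y
    ext u
    have := congrFun (congrFun (auxE_mul (aux_herm G) hS hkS) u) z
    simpa [Matrix.mul_apply, Matrix.mulVec, dotProduct] using this
  have h2 : ∀ x y, auxE S (G.adjMatrix ℝ) k x y = auxE S (G.adjMatrix ℝ) k y x := by
    intro x y
    have := (auxE_herm (S := S) (aux_herm G) k).apply x y
    simpa using this.symm
  have h3 : ∀ x, auxE S (G.adjMatrix ℝ) k v x = auxE S (G.adjMatrix ℝ) k v w := by
    intro x
    rw [h2 v x, h1 x w v, h2 w v]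
  have h4 := congrFun (auxE_vec hkS (aux_one hk) hkS) v
  simp [Matrix.mulVec, dotProduct, h3] at h4
  linarith

lemma auxE_total {k : ℝ} (hk : ∀ v, (G.degree v : ℝ) = k) (hkS : k ∈ S) {μ : ℝ} (hμ : μ ∈ S) :
    ∑ v, ∑ w, auxE S (G.adjMatrix ℝ) μ v w = if μ = k then (Fintype.card V : ℝ) else 0 := by
  have h4 := auxE_vec hkS (aux_one hk) hμ
  have : ∀ v, ∑ w, auxE S (G.adjMatrix ℝ) μ v w = if μ = k then (1:ℝ) else 0 := by
    intro v
    have := congrFun h4 v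
    simpa [Matrix.mulVec, dotProduct] using this
  simp [this]

lemma aux_Z (m t e f : ℝ → ℝ) (c : ℝ) (hc : c ≠ 0) (he : ∀ μ ∈ S, e μ * c = t μ * m μ)
    (hf : ∀ μ ∈ S, m μ = 0 → f μ = 0) (h0 : ∑ μ ∈ S, t μ * f μ = 0) :
    ∑ μ ∈ S, (m μ)⁻¹ * (e μ * f μ) = 0 := by
  have : ∀ μ ∈ S, (m μ)⁻¹ * (e μ * f μ) = c⁻¹ * (t μ * f μ) := by
    intro μ hμ
    by_cases h : m μ = 0
    · rw [hf μ hμ h]; simp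
    · have := he μ hμ
      field_simp
      linear_combination (f μ) * this
  rw [Finset.sum_congr rfl this, ← Finset.mul_sum, h0, mul_zero]

lemma aux_bwd {α β : Type*} [Fintype α] [Fintype β] [DecidableEq α] [DecidableEq β]
    {G : SimpleGraph α} {H : SimpleGraph β} [DecidableRel G.Adj] [DecidableRel H.Adj]
    (hGc : G.Connected) (hG : OneWalkRegular G) (hHc : H.Connected) (hH : OneWalkRegular H)
    (hch : (G.adjMatrix ℝ).charpoly = (H.adjMatrix ℝ).charpoly) :
    ∃ M, IsIsoMatrix G H M ∧ M.PosSemidef := by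
  have hTr := aux_trace_of_charpoly (aux_herm G) (aux_herm H) hch
  have hcard : (Fintype.card α : ℝ) = Fintype.card β := by
    have := hTr 0
    simpa using this
  have := hGc.nonempty
  have := hHc.nonempty
  have hα : (Fintype.card α : ℝ) ≠ 0 := by simp
  have hβ : (Fintype.card β : ℝ) ≠ 0 := by simp
  obtain ⟨k, hk⟩ := ((aux_owr G).1 hG).1 2
  obtain ⟨k', hk'⟩ := ((aux_owr H).1 hH).1 2
  have hkk : k' = k := by
    have := hTr 2
    simp only [Matrix.trace, Matrix.diag_apply, hk, hk', Finset.sum_const, Finset.card_univ,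
      nsmul_eq_mul, hcard] at this
    exact (mul_left_cancel₀ hβ this).symm
  subst hkk
  simp only [aux_deg] at hk hk'
  classical
  obtain ⟨S, hkS, hSG, hSH⟩ : ∃ S : Finset ℝ, k' ∈ S ∧ (∀ i, (aux_herm G).eigenvalues i ∈ S) ∧
      (∀ i, (aux_herm H).eigenvalues i ∈ S) :=
    ⟨insert k' (Finset.univ.image (aux_herm G).eigenvalues ∪
      Finset.univ.image (aux_herm H).eigenvalues), by simp, by simp, by simp⟩
  have hne : S.Nonempty := ⟨_, hkS⟩
  set E := auxE S (G.adjMatrix ℝ) with hE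
  set F := auxE S (H.adjMatrix ℝ) with hF
  set m : ℝ → ℝ := fun μ => (E μ).trace with hm
  have hmF : ∀ μ, (F μ).trace = m μ := fun μ => (aux_trace_aeval hTr _).symm
  have hE0 : ∀ μ ∈ S, m μ = 0 → ∀ x y, E μ x y = 0 := by
    intro μ hμ h x y
    rw [hE, auxE_zero (aux_herm G) hSG hμ h]; rfl
  have hF0 : ∀ μ ∈ S, m μ = 0 → ∀ x y, F μ x y = 0 := by
    intro μ hμ h x y
    rw [← hmF] at h
    rw [hF, auxE_zero (aux_herm H) hSH hμ h]; rfl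
  have hmk : m k' = 1 := by
    obtain ⟨g⟩ := hGc.nonempty
    have := auxE_diag (S := S) hG k' g
    rw [auxE_top hGc hk hSG hkS] at this
    exact this.symm
  have sE : ∀ x y, ∑ μ ∈ S, E μ x y = (1 : Matrix α α ℝ) x y := by
    intro x y
    rw [← auxE_sum (A := G.adjMatrix ℝ) hne, Matrix.sum_apply]
  have sF : ∀ x y, ∑ μ ∈ S, F μ x y = (1 : Matrix β β ℝ) x y := by
    intro x y
    rw [← auxE_sum (A := H.adjMatrix ℝ) hne, Matrix.sum_apply]
  have sE' : ∀ x y, ∑ μ ∈ S, μ * E μ x y = G.adjMatrix ℝ x y := by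
    intro x y
    conv_rhs => rw [← auxE_sum_smul (aux_herm G) hSG hne]
    simp [Matrix.sum_apply, hE]
  have sF' : ∀ x y, ∑ μ ∈ S, μ * F μ x y = H.adjMatrix ℝ x y := by
    intro x y
    conv_rhs => rw [← auxE_sum_smul (aux_herm H) hSH hne]
    simp [Matrix.sum_apply, hF]
  have hkpos : ∀ x y, G.Adj x y → k' ≠ 0 := by
    intro x y hxy
    rw [← hk x]
    have : 0 < G.degree x := (G.degree_pos_iff_exists_adj x).2 ⟨y, hxy⟩
    positivity
  have hkpos' : ∀ x y, H.Adj x y → k' ≠ 0 := by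
    intro x y hxy
    rw [← hk' x]
    have : 0 < H.degree x := (H.degree_pos_iff_exists_adj x).2 ⟨y, hxy⟩
    positivity
  refine ⟨∑ μ ∈ S, (m μ)⁻¹ • Matrix.kroneckerMap (· * ·) (E μ) (F μ), ⟨?_, ?_, ?_⟩, ?_⟩
  · intro g g'
    simp only [Matrix.sum_apply, Matrix.smul_apply, Matrix.kroneckerMap_apply, smul_eq_mul]
    have e1 : ∑ h, ∑ h', ∑ μ ∈ S, (m μ)⁻¹ * (E μ g g' * F μ h h') =
        ∑ μ ∈ S, (m μ)⁻¹ * (E μ g g' * ∑ h, ∑ h', F μ h h') := by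
      simp only [Finset.mul_sum]
      rw [Finset.sum_comm]
      conv_rhs => rw [Finset.sum_comm]
      rw [Finset.sum_comm]
      refine Finset.sum_congr rfl fun h _ => ?_
      rw [Finset.sum_comm]
    rw [e1, Finset.sum_eq_single_of_mem k' hkS]
    · rw [auxE_total hk' hkS hkS, hmk, if_pos rfl, ← hcard, auxE_top hGc hk hSG hkS]
      norm_num
    · intro μ hμ hne'
      rw [auxE_total hk' hkS hμ, if_neg hne']
      simp
  · intro h h'
    simp only [Matrix.sum_apply, Matrix.smul_apply, Matrix.kroneckerMap_apply, smul_eq_mul]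
    have e1 : ∑ g, ∑ g', ∑ μ ∈ S, (m μ)⁻¹ * (E μ g g' * F μ h h') =
        ∑ μ ∈ S, (m μ)⁻¹ * ((∑ g, ∑ g', E μ g g') * F μ h h') := by
      simp only [Finset.mul_sum, Finset.sum_mul]
      rw [Finset.sum_comm]
      conv_rhs => rw [Finset.sum_comm]
      rw [Finset.sum_comm]
      refine Finset.sum_congr rfl fun h _ => ?_
      rw [Finset.sum_comm]
    rw [e1, Finset.sum_eq_single_of_mem k' hkS]
    · rw [auxE_total hk hkS hkS, hmk, if_pos rfl, hcard, mul_comm (_ : ℝ) (F k' h h'),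
        auxE_top hHc hk' hSH hkS]
      norm_num
    · intro μ hμ hne'
      rw [auxE_total hk hkS hμ, if_neg hne']
      simp
  · intro g g' h h' hr
    simp only [Matrix.sum_apply, Matrix.smul_apply, Matrix.kroneckerMap_apply, smul_eq_mul]
    by_cases c1 : g = g'
    · by_cases c2 : h = h'
      · subst c1 c2
        exact absurd ⟨by simp, by simp⟩ hr
      · subst c1
        refine aux_Z m (fun _ => 1) (fun μ => E μ g g) (fun μ => F μ h h') _ hα ?_
          (fun μ hμ h0 => hF0 μ hμ h0 _ _) ?_
        · intro μ hμ
          rw [one_mul]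
          exact auxE_diag hG μ g
        · simp [sF, c2]
    by_cases c2 : h = h'
    · subst c2
      simp only [mul_comm (E _ g g')]
      refine aux_Z m (fun _ => 1) (fun μ => F μ h h) (fun μ => E μ g g') _ hβ ?_
          (fun μ hμ h0 => hE0 μ hμ h0 _ _) ?_
      · intro μ hμ
        rw [one_mul, ← hmF]
        exact auxE_diag hH μ h
      · simp [sE, c1]
    by_cases c3 : G.Adj g g'
    · by_cases c4 : H.Adj h h'
      · exact absurd ⟨by simp [c1, c2], by simp [c3, c4]⟩ hr
      · refine aux_Z m id (fun μ => E μ g g') (fun μ => F μ h h') _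
          (mul_ne_zero hα (hkpos _ _ c3)) ?_ (fun μ hμ h0 => hF0 μ hμ h0 _ _) ?_
        · intro μ hμ
          exact auxE_adj hG hk hSG hμ c3
        · simp [sF', c4]
    · by_cases c4 : H.Adj h h'
      · simp only [mul_comm (E _ g g')]
        refine aux_Z m id (fun μ => F μ h h') (fun μ => E μ g g') _
          (mul_ne_zero hβ (hkpos' _ _ c4)) ?_ (fun μ hμ h0 => hE0 μ hμ h0 _ _) ?_
        · intro μ hμ
          rw [← hmF]
          exact auxE_adj hH hk' hSH hμ c4
        · simp [sE', c3]
      · exact absurd ⟨by simp [c1, c2], by simp [c3, c4]⟩ hr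
  · refine Matrix.posSemidef_sum _ fun μ hμ => ?_
    refine Matrix.PosSemidef.smul ?_ (inv_nonneg.2 (auxE_psd (aux_herm G) hSG hμ).trace_nonneg)
    exact (auxE_psd (aux_herm G) hSG hμ).kronecker (auxE_psd (aux_herm H) hSH hμ)

end bwd

/-- For a connected 1-walk-regular graph `G`, a graph `H` is `S+`-isomorphic to `G`
iff `H` is connected, 1-walk-regular and cospectral to `G`. -/
theorem sPlus_iso_iff_of_oneWalkRegular {α β : Type*}
    [Fintype α] [Fintype β] [DecidableEq α] [DecidableEq β]
    (G : SimpleGraph α) (H : SimpleGraph β)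
    [DecidableRel G.Adj] [DecidableRel H.Adj]
    (hGconn : G.Connected) (hG1wr : OneWalkRegular G) :
    (∃ M, IsIsoMatrix G H M ∧ M.PosSemidef) ↔
      (H.Connected ∧ OneWalkRegular H ∧
        (G.adjMatrix ℝ).charpoly = (H.adjMatrix ℝ).charpoly) := by
  constructor
  · rintro ⟨M, hM, hP⟩
    exact aux_fwd hGconn hG1wr hM hP
  · rintro ⟨hHc, hH, hch⟩
    exact aux_bwd hGconn hG1wr hHc hH hch
end
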